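/- There exists ε₀ > 0 such that for every 0 < ε ≤ ε₀ the following holds. Let X̃_ε = {(x, ℓ) ∈ B̄(0,ε) × ℝP¹ : f(x) ∈ ℓ} (the real blow-up of V inside the closed ball), topologized as a subspace of the product. Then the second projection Ψ̃ : X̃_ε → ℝP¹ is a locally trivial fibration, and for every θ ∈ ℝ its fibre over the line L_θ equals (X_θ ∩ B̄(0,ε)) × {L_θ}. -/

import Mathlib

/-!
The fibration is trivialized over small arcs of `ℝP¹` by the flow of a vector field `v` on a small
ball which is tangent to the spheres around `0`, turns the argument of `f` at unit speed, and tends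
to `0` at the zero set `V` of `f`. Its flow preserves the ball, carries the points where `f` lies on
the line `ℓ` to those where `f` lies on the rotated line, and extends continuously to `V` by the
identity. As the blow-up maps homeomorphically onto the ball off `V` and is `V × ℝP¹` over `V`,
this is all that is needed (`exists_angle`, `locTriv`).

The field is obtained by projecting the gradient of `arg f` to the tangent spaces of the spheres and
rescaling it (`tangentLift`, `exists_tameField`). This requires two facts about the analytic germ `f`:

* `radial_small`: near `0` the gradient of `arg f` is nearly orthogonal to the radius, so that the
  projection loses only a bounded factor;
* `lojasiewicz_small`: `|f| / ‖df‖` tends to `0` at every point of `V`, so that the rescaled field,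
  of size at most `2 |f| / ‖df‖`, does too.

Both follow from an approximate Euler identity (`euler_along`): along any ultrafilter of points `x`
tending to a zero `p` of `f` there are vectors `w = (x - p) + o(‖x - p‖)` and a number `q > 0` with
`df_x(w) = (q + o(1)) f(x)`. For a monomial times a unit this is Euler's identity in the coordinates.
The general case is reduced to that one by local uniformization (`lu`): any family `x → 0` along an
ultrafilter lifts, through an analytic map germ `φ`, to a family `y → 0`, such that `f ∘ φ` is a
monomial times a unit. As only one ultrafilter has to be lifted, no global resolution is needed, and
an elementary induction on the dimension suffices. In dimension `n + 1` the germ is brought to the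
form `z ^ m u + ∑ c_k(x') z ^ k`, `k < m - 1` (`tschirnhaus`). By induction, toric blow-ups and
ramification, the coefficients become monomials `c_k = t ^ (γ (m - k)) C_k`, with some `C_k` a unit
(`lu_prep`). If `z` is `O(t ^ γ)` along the ultrafilter, the substitution `z = t ^ γ (z' + ζ)` lowers
the order `m`, since the term of degree `m - 1` is missing; otherwise toric blow-ups turn `t ^ γ / z`
into an analytic function vanishing at `0`, and `f` into `z ^ m` times a unit (`lu_step`).

Holomorphic functions of several variables are analytic by Osgood's lemma, proved by expressing `f`
through Cauchy's formula in one variable with values in a Banach space of continuous functions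
(`holo_rep`, `osgood`).
-/

open scoped LinearAlgebra.Projectivization

/-- `p : Z → B` is a locally trivial fibration (with some fibre `F`). -/
def IsLocTrivFib {Z B : Type} [TopologicalSpace Z] [TopologicalSpace B] (p : Z → B) : Prop :=
  ∃ (F : Type) (_ : TopologicalSpace F), Continuous p ∧
    ∀ b : B, ∃ W : Set B, IsOpen W ∧ b ∈ W ∧
      ∃ e : (p ⁻¹' W) ≃ₜ (W × F), ∀ z : (p ⁻¹' W), ((e z).1 : B) = p (z : Z)

/-- The member `X_θ` of the canonical pencil of `f`. -/
def Xset {α : Type} (U : Set α) (f : α → ℂ) (θ : ℝ) : Set α :=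
  {x ∈ U | ∃ t : ℝ, f x = t * Complex.exp (θ * Complex.I)}

/-- The real projective line `ℝP¹ = ℙ ℝ ℂ` carries the quotient topology. -/
noncomputable instance : TopologicalSpace (ℙ ℝ ℂ) :=
  inferInstanceAs (TopologicalSpace (Quotient _))

open Filter Topology Metric Set

/-! ### Osgood's lemma and division by a coordinate -/

section Osgood

/-- Cauchy estimate for the Fréchet derivative of a bounded holomorphic map. -/
theorem cauchy_fderiv_le {E G : Type*} [NormedAddCommGroup E] [NormedSpace ℂ E]
    [NormedAddCommGroup G] [NormedSpace ℂ G] {g : E → G} {x : E} {R M : ℝ} (hR : 0 < R)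
    (hM : 0 ≤ M) (hd : ∀ y ∈ ball x R, DifferentiableAt ℂ g y) (hb : ∀ y ∈ ball x R, ‖g y‖ ≤ M) :
    ‖fderiv ℂ g x‖ ≤ 2 * M / R := by
  refine ContinuousLinearMap.opNorm_le_bound _ (by positivity) fun v => ?_
  rcases eq_or_ne v 0 with rfl | hv
  · simp
  have hv' : 0 < ‖v‖ := norm_pos_iff.2 hv
  set ρ : ℝ := R / (2 * ‖v‖) with hρ
  have hρ0 : 0 < ρ := by positivity
  have hmem : ∀ t ∈ closedBall (0 : ℂ) ρ, x + t • v ∈ ball x R := by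
    intro t ht
    rw [mem_closedBall_zero_iff] at ht
    rw [mem_ball_iff_norm, add_sub_cancel_left, norm_smul]
    calc ‖t‖ * ‖v‖ ≤ ρ * ‖v‖ := by gcongr
      _ = R / 2 := by rw [hρ]; field_simp
      _ < R := by linarith
  have hder : ∀ t ∈ closedBall (0 : ℂ) ρ, HasDerivAt (fun t : ℂ => g (x + t • v))
      (fderiv ℂ g (x + t • v) v) t := by
    intro t ht
    have h1 : HasDerivAt (fun t : ℂ => x + t • v) v t := by
      simpa using ((hasDerivAt_id t).smul_const v).const_add x
    exact (hd _ (hmem t ht)).hasFDerivAt.comp_hasDerivAt t h1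
  have h2 : DiffContOnCl ℂ (fun t : ℂ => g (x + t • v)) (ball 0 ρ) := by
    apply DifferentiableOn.diffContOnCl
    rw [closure_ball _ hρ0.ne']
    exact fun t ht => (hder t ht).differentiableAt.differentiableWithinAt
  have h3 := Complex.norm_deriv_le_of_forall_mem_sphere_norm_le hρ0 h2
    (fun z hz => hb _ (hmem z (sphere_subset_closedBall hz)))
  rw [(hder 0 (mem_closedBall_self hρ0.le)).deriv] at h3
  simp only [zero_smul, add_zero] at h3
  refine h3.trans (le_of_eq ?_)
  rw [hρ]; field_simp

/-- Lipschitz estimate for the derivative of a bounded holomorphic map: the Cauchy estimate applied to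
`z ↦ g (z + (y - x)) - g z`. -/
theorem fderiv_sub_le {E G : Type*} [NormedAddCommGroup E] [NormedSpace ℂ E]
    [NormedAddCommGroup G] [NormedSpace ℂ G] {g : E → G} {x y : E} {R M : ℝ} (hR : 0 < R)
    (hM : 0 ≤ M) (hd : ∀ y ∈ ball x (3 * R), DifferentiableAt ℂ g y)
    (hb : ∀ y ∈ ball x (3 * R), ‖g y‖ ≤ M) (hy : y ∈ ball x R) :
    ‖fderiv ℂ g y - fderiv ℂ g x‖ ≤ 4 * M / R ^ 2 * ‖y - x‖ := by
  have hyx : ‖y - x‖ < R := by rwa [← mem_ball_iff_norm]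
  have hmem : ∀ z ∈ ball x R, z + (y - x) ∈ ball x (2 * R) := by
    intro z hz
    rw [mem_ball_iff_norm] at hz ⊢
    calc ‖z + (y - x) - x‖ = ‖(z - x) + (y - x)‖ := by congr 1; abel
      _ ≤ _ := norm_add_le _ _
      _ < 2 * R := by linarith
  have h23 : ball x (2 * R) ⊆ ball x (3 * R) := ball_subset_ball (by linarith)
  have h12 : ball x R ⊆ ball x (2 * R) := ball_subset_ball (by linarith)
  have hD : ∀ w ∈ ball x (2 * R), ‖fderiv ℂ g w‖ ≤ 2 * M / R := by
    intro w hw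
    have hsub : ball w R ⊆ ball x (3 * R) := by
      apply ball_subset_ball'
      have := mem_ball.1 hw
      linarith
    exact cauchy_fderiv_le hR hM (fun z hz => hd z (hsub hz)) fun z hz => hb z (hsub hz)
  let _ : NormedSpace ℝ E := NormedSpace.restrictScalars ℝ ℂ E
  have hk : ∀ z ∈ ball x R, ‖g (z + (y - x)) - g z‖ ≤ 2 * M / R * ‖y - x‖ := by
    intro z hz
    have := Convex.norm_image_sub_le_of_norm_fderiv_le (𝕜 := ℂ) (f := g) (s := ball x (2 * R))
      (fun w hw => hd w (h23 hw)) hD (convex_ball _ _) (h12 hz) (hmem z hz)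
    simpa using this
  have hkd : ∀ z ∈ ball x R, HasFDerivAt (fun z => g (z + (y - x)) - g z)
      (fderiv ℂ g (z + (y - x)) - fderiv ℂ g z) z := by
    intro z hz
    have h1 := (hd _ (h23 (hmem z hz))).hasFDerivAt
    have h2 : HasFDerivAt (fun z => g (z + (y - x))) (fderiv ℂ g (z + (y - x))) z :=
      (hasFDerivAt_comp_add_right (y - x)).2 h1
    exact h2.sub (hd _ (h23 (h12 hz))).hasFDerivAt
  have := cauchy_fderiv_le hR (by positivity) (fun z hz => (hkd z hz).differentiableAt) hk
  rw [(hkd x (mem_ball_self hR)).fderiv, add_sub_cancel] at this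
  refine this.trans (le_of_eq ?_)
  field_simp
  ring

/-- Prepending a coordinate, as a continuous linear map. -/
noncomputable def consL (n : ℕ) : ℂ × (Fin n → ℂ) →L[ℂ] (Fin (n + 1) → ℂ) :=
  ContinuousLinearMap.pi (Fin.cons (ContinuousLinearMap.fst ℂ ℂ (Fin n → ℂ))
    (fun i => (ContinuousLinearMap.proj i).comp (ContinuousLinearMap.snd ℂ ℂ (Fin n → ℂ))))

theorem consL_apply {n : ℕ} (z : ℂ) (x : Fin n → ℂ) :
    consL n (z, x) = (Fin.cons z x : Fin (n + 1) → ℂ) := by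
  funext i
  refine Fin.cases ?_ (fun j => ?_) i <;> simp [consL]

theorem norm_cons_lt {n : ℕ} {z : ℂ} {x : Fin n → ℂ} {r : ℝ} (hr : 0 < r) (hz : ‖z‖ < r)
    (hx : ‖x‖ < r) : ‖(Fin.cons z x : Fin (n + 1) → ℂ)‖ < r := by
  rw [pi_norm_lt_iff hr] at hx ⊢
  intro i
  refine Fin.cases ?_ (fun j => ?_) i <;> simp [*]

theorem norm_cons_le {n : ℕ} {z : ℂ} {x : Fin n → ℂ} {r : ℝ} (hr : 0 ≤ r) (hz : ‖z‖ ≤ r)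
    (hx : ‖x‖ ≤ r) : ‖(Fin.cons z x : Fin (n + 1) → ℂ)‖ ≤ r := by
  rw [pi_norm_le_iff_of_nonneg hr] at hx ⊢
  intro i
  refine Fin.cases ?_ (fun j => ?_) i <;> simp [*]

/-- `F ↦ (2πi)⁻¹ ∮ k F`, bilinear in `k` and `F`, for continuous functions on the circle
of radius `r`. -/
noncomputable def circleBilin (r : ℝ) (hr : 0 ≤ r) (G : Type) [NormedAddCommGroup G]
    [NormedSpace ℂ G] :
    C(sphere (0 : ℂ) r, ℂ) →L[ℂ] C(sphere (0 : ℂ) r, G) →L[ℂ] G :=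
  LinearMap.mkContinuous₂ (LinearMap.mk₂ ℂ
    (fun k F => (2 * Real.pi * Complex.I : ℂ)⁻¹ • ∫ θ in (0 : ℝ)..2 * Real.pi,
      (circleMap 0 r θ * Complex.I) •
        (k ⟨circleMap 0 r θ, circleMap_mem_sphere _ hr θ⟩ •
          F ⟨circleMap 0 r θ, circleMap_mem_sphere _ hr θ⟩))
    (by
      intro k k' F
      rw [← smul_add, ← intervalIntegral.integral_add]
      · simp only [ContinuousMap.add_apply, add_smul, smul_add]
      all_goals exact (Continuous.intervalIntegrable (by fun_prop) _ _))
    (by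
      intro c k F
      rw [smul_comm c (2 * Real.pi * Complex.I : ℂ)⁻¹, ← intervalIntegral.integral_smul c]
      congr 1
      refine intervalIntegral.integral_congr (fun θ _ => ?_)
      simp only [ContinuousMap.smul_apply, smul_eq_mul, smul_smul]
      congr 1; ring)
    (by
      intro k F F'
      rw [← smul_add, ← intervalIntegral.integral_add]
      · simp only [ContinuousMap.add_apply, smul_add]
      all_goals exact (Continuous.intervalIntegrable (by fun_prop) _ _))
    (by
      intro c k F
      rw [smul_comm c (2 * Real.pi * Complex.I : ℂ)⁻¹, ← intervalIntegral.integral_smul c]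
      congr 1
      refine intervalIntegral.integral_congr (fun θ _ => ?_)
      simp only [ContinuousMap.smul_apply]
      rw [smul_comm c, smul_comm c])) (‖(2 * Real.pi * Complex.I : ℂ)⁻¹‖ * (r * (2 * Real.pi)))
    (by
      intro k F
      rw [LinearMap.mk₂_apply, norm_smul]
      have := intervalIntegral.norm_integral_le_of_norm_le_const (a := 0) (b := 2 * Real.pi)
        (C := r * (‖k‖ * ‖F‖)) (f := fun θ => (circleMap 0 r θ * Complex.I) •
        (k ⟨circleMap 0 r θ, circleMap_mem_sphere _ hr θ⟩ •
          F ⟨circleMap 0 r θ, circleMap_mem_sphere _ hr θ⟩)) (by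
          intro θ _
          rw [norm_smul, norm_smul, norm_mul, Complex.norm_I, norm_circleMap_zero, mul_one,
            abs_of_nonneg hr]
          gcongr
          · exact k.norm_coe_le_norm _
          · exact F.norm_coe_le_norm _)
      rw [sub_zero, abs_of_pos Real.two_pi_pos] at this
      calc _ ≤ ‖(2 * Real.pi * Complex.I : ℂ)⁻¹‖ * (r * (‖k‖ * ‖F‖) * (2 * Real.pi)) := by gcongr
        _ = _ := by ring)

theorem circleBilin_apply (r : ℝ) (hr : 0 ≤ r) (G : Type) [NormedAddCommGroup G]
    [NormedSpace ℂ G] (k : C(sphere (0 : ℂ) r, ℂ)) (F : C(sphere (0 : ℂ) r, G)) (h : ℂ → G)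
    (hh : ∀ z : sphere (0 : ℂ) r, k z • F z = h z) :
    circleBilin r hr G k F = (2 * Real.pi * Complex.I : ℂ)⁻¹ • ∮ z in C(0, r), h z := by
  simp only [circleBilin, LinearMap.mkContinuous₂_apply, LinearMap.mk₂_apply, circleIntegral,
    deriv_circleMap, hh]

/-- A continuous family of linear maps, as a linear map into continuous functions. -/
noncomputable def famL {S E G : Type*} [TopologicalSpace S] [CompactSpace S]
    [NormedAddCommGroup E] [NormedSpace ℂ E] [NormedAddCommGroup G] [NormedSpace ℂ G]
    (A : C(S, E →L[ℂ] G)) : E →L[ℂ] C(S, G) :=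
  LinearMap.mkContinuous
    { toFun := fun h => ⟨fun s => A s h, by fun_prop⟩
      map_add' := by intros; ext; simp
      map_smul' := by intros; ext; simp } ‖A‖
    (by
      intro h
      refine (ContinuousMap.norm_le _ (by positivity)).2 fun s => ?_
      exact ((A s).le_opNorm h).trans (by gcongr; exact A.norm_coe_le_norm s))

/-- Cauchy's formula separates the first variable: near `0`, `f p = L (p 0) (F (tail p))` with
`L` analytic and `F` holomorphic, valued in the continuous functions on a small circle. -/
theorem holo_rep {n : ℕ} {G : Type} [NormedAddCommGroup G] [NormedSpace ℂ G] [CompleteSpace G]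
    (f : (Fin (n + 1) → ℂ) → G) (hf : ∀ᶠ p in 𝓝 0, DifferentiableAt ℂ f p) :
    ∃ (r : ℝ) (F : (Fin n → ℂ) → C(sphere (0 : ℂ) r, G)) (L : ℂ → C(sphere (0 : ℂ) r, G) →L[ℂ] G),
      (∀ᶠ x in 𝓝 0, DifferentiableAt ℂ F x) ∧ AnalyticAt ℂ L 0 ∧
      ∀ᶠ p in 𝓝 0, f p = L (p 0) (F (Fin.tail p)) := by
  obtain ⟨M, hM0, hM⟩ : ∃ M : ℝ, 0 ≤ M ∧ ∀ᶠ p in 𝓝 (0 : Fin (n + 1) → ℂ), ‖f p‖ ≤ M := by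
    refine ⟨‖f 0‖ + 1, by positivity, ?_⟩
    have hc : ContinuousAt f 0 := hf.self_of_nhds.continuousAt
    exact (hc.norm.eventually_lt continuousAt_const (lt_add_one _)).mono fun _ h => h.le
  obtain ⟨ρ, hρ, hball⟩ := Metric.eventually_nhds_iff_ball.1 (hf.and hM)
  set R := ρ / 8 with hRdef
  have hR : 0 < R := by positivity
  set S := sphere (0 : ℂ) R
  have hsub : ∀ p : Fin (n + 1) → ℂ, ‖p‖ ≤ R → ball p (3 * R) ⊆ ball 0 ρ := by
    intro p hp
    apply ball_subset_ball'
    rw [dist_zero_right]; linarith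
  have hconsle : ∀ (ζ : ℂ) (x : Fin n → ℂ), ‖ζ‖ ≤ R → ‖x‖ ≤ R →
      ‖(Fin.cons ζ x : Fin (n + 1) → ℂ)‖ ≤ R := fun ζ x h1 h2 => norm_cons_le hR.le h1 h2
  have hdf : ∀ p : Fin (n + 1) → ℂ, ‖p‖ ≤ R → DifferentiableAt ℂ f p := fun p hp =>
    (hball p (hsub p hp (mem_ball_self (by positivity)))).1
  have hcontcons : ∀ x : Fin n → ℂ, Continuous fun ζ : ℂ => (Fin.cons ζ x : Fin (n + 1) → ℂ) := by
    intro x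
    have := (consL n).continuous.comp (Continuous.prodMk_left x)
    simpa [Function.comp_def, consL_apply] using this
  have hcont : ∀ x : Fin n → ℂ, ‖x‖ ≤ R → Continuous fun ζ : S => f (Fin.cons (ζ : ℂ) x) := by
    intro x hx
    refine continuous_iff_continuousAt.2 fun ζ => ?_
    have hz : ‖(ζ : ℂ)‖ ≤ R := (mem_sphere_zero_iff_norm.1 ζ.2).le
    exact ContinuousAt.comp (f := fun ζ : S => (Fin.cons (ζ : ℂ) x : Fin (n + 1) → ℂ))
      (hdf _ (hconsle _ _ hz hx)).continuousAt
      ((hcontcons x).comp continuous_subtype_val).continuousAt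
  have hcont' : ∀ x : Fin n → ℂ, ‖x‖ ≤ R →
      Continuous fun ζ : S => fderiv ℂ f (Fin.cons (ζ : ℂ) x) := by
    intro x hx
    refine continuous_iff_continuousAt.2 fun ζ => ?_
    have hz : ‖(ζ : ℂ)‖ ≤ R := (mem_sphere_zero_iff_norm.1 ζ.2).le
    refine ContinuousAt.comp (f := fun ζ : S => (Fin.cons (ζ : ℂ) x : Fin (n + 1) → ℂ))
      (g := fderiv ℂ f) ?_ ((hcontcons x).comp continuous_subtype_val).continuousAt
    have hp := hconsle _ _ hz hx
    refine tendsto_iff_norm_sub_tendsto_zero.2 ?_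
    refine squeeze_zero' (g := fun y => 4 * M / R ^ 2 * ‖y - Fin.cons (ζ : ℂ) x‖)
      (.of_forall fun _ => norm_nonneg _) ?_ ?_
    · filter_upwards [ball_mem_nhds _ hR] with y hy
      exact fderiv_sub_le hR hM0 (fun z hz => (hball z (hsub _ hp hz)).1)
        (fun z hz => (hball z (hsub _ hp hz)).2) hy
    · have : Continuous fun y => 4 * M / R ^ 2 * ‖y - (Fin.cons (ζ : ℂ) x : Fin (n + 1) → ℂ)‖ := by
        fun_prop
      simpa using this.tendsto (Fin.cons (ζ : ℂ) x)
  classical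
  set F : (Fin n → ℂ) → C(S, G) := fun x =>
    if h : Continuous fun ζ : S => f (Fin.cons (ζ : ℂ) x) then ⟨_, h⟩ else 0 with hF
  have hFapp : ∀ x : Fin n → ℂ, ‖x‖ ≤ R → ∀ ζ : S, F x ζ = f (Fin.cons (ζ : ℂ) x) := by
    intro x hx ζ
    simp [hF, hcont x hx]
  -- the Cauchy kernel as an element of the Banach algebra `C(S, ℂ)`
  have hι0 : ∀ s : S, (s : ℂ) ≠ 0 := fun s h => by
    have := mem_sphere_zero_iff_norm.1 s.2
    rw [h, norm_zero] at this
    exact hR.ne this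
  let ι : C(S, ℂ) := ⟨fun s => (s : ℂ), continuous_subtype_val⟩
  let ιu : C(S, ℂ)ˣ :=
    ⟨ι, ⟨fun s => (s : ℂ)⁻¹, continuous_subtype_val.inv₀ hι0⟩, by
      ext s; simp [ι, hι0 s], by ext s; simp [ι, hι0 s]⟩
  let K : ℂ → C(S, ℂ) := fun z => Ring.inverse (ι - z • (1 : C(S, ℂ)))
  have hK : AnalyticAt ℂ K 0 := by
    have h1 : AnalyticAt ℂ (fun z : ℂ => ι - z • (1 : C(S, ℂ))) 0 := by fun_prop
    have h2 : AnalyticAt ℂ Ring.inverse (ι - (0 : ℂ) • (1 : C(S, ℂ))) := by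
      rw [zero_smul, sub_zero]; exact analyticAt_inverse ιu
    exact AnalyticAt.fun_comp (g := Ring.inverse) (f := fun z : ℂ => ι - z • 1) h2 h1
  have hKapp : ∀ z : ℂ, ‖z‖ < R → ∀ s : S, K z s = ((s : ℂ) - z)⁻¹ := by
    intro z hz s
    have hne : ∀ s : S, (s : ℂ) - z ≠ 0 := fun s h => by
      have := mem_sphere_zero_iff_norm.1 s.2
      rw [sub_eq_zero.1 h] at this
      exact hz.ne this
    let u : C(S, ℂ)ˣ :=
      ⟨ι - z • (1 : C(S, ℂ)), ⟨fun s => ((s : ℂ) - z)⁻¹, Continuous.inv₀ (by fun_prop) hne⟩, by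
        ext s; simp [ι, hne s], by ext s; simp [ι, hne s]⟩
    have : K z = (u⁻¹ : C(S, ℂ)ˣ) := Ring.inverse_unit u
    rw [this]; rfl
  refine ⟨R, F, fun z => circleBilin R hR.le G (K z), ?_, ?_, ?_⟩
  · filter_upwards [ball_mem_nhds (0 : Fin n → ℂ) hR] with x hx
    have hx' : ‖x‖ < R := by simpa using hx
    let A : C(S, (Fin n → ℂ) →L[ℂ] G) :=
      ⟨fun ζ => (fderiv ℂ f (Fin.cons (ζ : ℂ) x)).comp
        ((consL n).comp (ContinuousLinearMap.inr ℂ ℂ (Fin n → ℂ))),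
        by have := hcont' x hx'.le; fun_prop⟩
    refine HasFDerivAt.differentiableAt (f' := famL A) ?_
    have hle : ∀ᶠ y in 𝓝 x, ‖F y - F x - famL A (y - x)‖ ≤ 4 * M / R ^ 2 * ‖y - x‖ ^ 2 := by
      filter_upwards [ball_mem_nhds x hR, isOpen_ball.mem_nhds hx] with y hy hy0
      have hy0' : ‖y‖ < R := by simpa using hy0
      have hyx : ‖y - x‖ < R := by rwa [← mem_ball_iff_norm]
      refine (ContinuousMap.norm_le _ (by positivity)).2 fun ζ => ?_
      have hz : ‖(ζ : ℂ)‖ ≤ R := (mem_sphere_zero_iff_norm.1 ζ.2).le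
      have hp := hconsle _ _ hz hx'.le
      have hdiff : (Fin.cons (ζ : ℂ) y : Fin (n + 1) → ℂ) - Fin.cons (ζ : ℂ) x
          = Fin.cons 0 (y - x) := by
        rw [← consL_apply, ← consL_apply, ← consL_apply, ← map_sub]; simp
      have hnd : ‖(Fin.cons (ζ : ℂ) y : Fin (n + 1) → ℂ) - Fin.cons (ζ : ℂ) x‖ ≤ ‖y - x‖ := by
        rw [hdiff]; exact norm_cons_le (norm_nonneg _) (by simp) le_rfl
      have e1 : (F y - F x - famL A (y - x)) ζ = f (Fin.cons (ζ : ℂ) y) - f (Fin.cons (ζ : ℂ) x) -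
          fderiv ℂ f (Fin.cons (ζ : ℂ) x) (Fin.cons (ζ : ℂ) y - Fin.cons (ζ : ℂ) x) := by
        rw [hdiff]
        simp only [ContinuousMap.sub_apply, hFapp _ hx'.le, hFapp _ hy0'.le]
        simp [famL, A, consL_apply]
      rw [e1]
      have hseg : segment ℝ (Fin.cons (ζ : ℂ) x : Fin (n + 1) → ℂ) (Fin.cons (ζ : ℂ) y) ⊆
          closedBall (Fin.cons (ζ : ℂ) x) ‖y - x‖ :=
        (convex_closedBall _ _).segment_subset (mem_closedBall_self (norm_nonneg _))
          (by rw [mem_closedBall_iff_norm]; exact hnd)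
      have := Convex.norm_image_sub_le_of_norm_fderiv_le' (𝕜 := ℂ) (f := f)
        (s := closedBall (Fin.cons (ζ : ℂ) x : Fin (n + 1) → ℂ) ‖y - x‖)
        (φ := fderiv ℂ f (Fin.cons (ζ : ℂ) x)) (C := 4 * M / R ^ 2 * ‖y - x‖)
        (x := Fin.cons (ζ : ℂ) x) (y := Fin.cons (ζ : ℂ) y)
        (fun w hw => (hball w (hsub _ hp (closedBall_subset_ball (by linarith) hw))).1)
        (fun w hw => by
          have hw' : w ∈ ball (Fin.cons (ζ : ℂ) x : Fin (n + 1) → ℂ) R :=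
            closedBall_subset_ball hyx hw
          refine (fderiv_sub_le hR hM0 (fun z hz => (hball z (hsub _ hp hz)).1)
            (fun z hz => (hball z (hsub _ hp hz)).2) hw').trans ?_
          gcongr
          exact mem_closedBall_iff_norm.1 hw)
        (convex_closedBall _ _) (mem_closedBall_self (norm_nonneg _))
        (by rw [mem_closedBall_iff_norm]; exact hnd)
      refine this.trans ?_
      calc _ ≤ 4 * M / R ^ 2 * ‖y - x‖ * ‖y - x‖ := by gcongr
        _ = _ := by ring
    rw [hasFDerivAt_iff_isLittleO]
    refine (Asymptotics.IsBigO.of_bound (4 * M / R ^ 2) (g := fun y => ‖y - x‖ ^ 2) ?_).trans_isLittleO ?_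
    · filter_upwards [hle] with y hy
      simpa using hy
    · have := Asymptotics.isLittleO_norm_pow_id (E' := Fin n → ℂ) (n := 2) (by norm_num)
      have h2 : Tendsto (fun y => y - x) (𝓝 x) (𝓝 0) := by
        have : Continuous fun y : Fin n → ℂ => y - x := by fun_prop
        simpa using this.tendsto x
      exact this.comp_tendsto h2
  · exact ((circleBilin R hR.le G).analyticAt _).fun_comp hK
  · filter_upwards [ball_mem_nhds (0 : Fin (n + 1) → ℂ) hR] with p hp
    have hp' : ‖p‖ < R := by simpa using hp
    have hp0 : ‖p 0‖ < R := (norm_le_pi_norm p 0).trans_lt hp'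
    have hpt : ‖Fin.tail p‖ < R := by
      rw [pi_norm_lt_iff hR]
      exact fun i => (norm_le_pi_norm p i.succ).trans_lt hp'
    rw [circleBilin_apply R hR.le G (K (p 0)) (F (Fin.tail p))
      (fun z => (z - p 0)⁻¹ • f (Fin.cons z (Fin.tail p)))
      (fun z => by rw [hKapp _ hp0, hFapp _ hpt.le])]
    have hdc : DiffContOnCl ℂ (fun z => f (Fin.cons z (Fin.tail p))) (ball 0 R) := by
      apply DifferentiableOn.diffContOnCl
      rw [closure_ball _ hR.ne']
      intro z hz
      have hz' : ‖z‖ ≤ R := by simpa using hz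
      have h1 := hdf _ (hconsle _ _ hz' hpt.le)
      have h2 : DifferentiableAt ℂ (fun z : ℂ => (Fin.cons z (Fin.tail p) : Fin (n + 1) → ℂ)) z := by
        have : DifferentiableAt ℂ (fun z : ℂ => consL n (z, Fin.tail p)) z := by fun_prop
        simpa [consL_apply] using this
      exact (DifferentiableAt.comp z h1 h2).differentiableWithinAt
    rw [hdc.circleIntegral_sub_inv_smul (by simpa using hp0), smul_smul, inv_mul_cancel₀
      Complex.two_pi_I_ne_zero, one_smul, Fin.cons_self_tail]

theorem analyticAt_tail {n : ℕ} (p : Fin (n + 1) → ℂ) :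
    AnalyticAt ℂ (fun p : Fin (n + 1) → ℂ => Fin.tail p) p := by
  rw [analyticAt_pi_iff]
  intro i
  exact (ContinuousLinearMap.proj (R := ℂ) (φ := fun _ : Fin (n + 1) => ℂ) i.succ).analyticAt p

theorem tail_tendsto {n : ℕ} :
    Tendsto (fun p : Fin (n + 1) → ℂ => Fin.tail p) (𝓝 0) (𝓝 0) :=
  (analyticAt_tail 0).continuousAt

theorem analyticAt_clm_apply {E X G : Type*} [NormedAddCommGroup E] [NormedSpace ℂ E]
    [NormedAddCommGroup X] [NormedSpace ℂ X] [NormedAddCommGroup G] [NormedSpace ℂ G]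
    {L : E → X →L[ℂ] G} {F : E → X} {p : E} (hL : AnalyticAt ℂ L p) (hF : AnalyticAt ℂ F p) :
    AnalyticAt ℂ (fun q => L q (F q)) p :=
  AnalyticAt.fun_comp (g := fun q : (X →L[ℂ] G) × X => (ContinuousLinearMap.id ℂ (X →L[ℂ] G)) q.1 q.2)
    ((ContinuousLinearMap.id ℂ (X →L[ℂ] G)).analyticAt_bilinear _) (hL.prod hF)

/-- Osgood's lemma at the origin of `ℂⁿ`. -/
theorem osgood (n : ℕ) : ∀ {G : Type} [NormedAddCommGroup G] [NormedSpace ℂ G] [CompleteSpace G]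
    (f : (Fin n → ℂ) → G), (∀ᶠ p in 𝓝 0, DifferentiableAt ℂ f p) → AnalyticAt ℂ f 0 := by
  induction n with
  | zero =>
    intro G _ _ _ f _
    have : f = fun _ => f 0 := by
      funext x; rw [Subsingleton.elim x 0]
    rw [this]; exact analyticAt_const
  | succ n ih =>
    intro G _ _ _ f hf
    obtain ⟨r, F, L, hF, hL, he⟩ := holo_rep f hf
    have hFa := ih F hF
    have h1 : AnalyticAt ℂ (fun p : Fin (n + 1) → ℂ => F (Fin.tail p)) 0 :=
      AnalyticAt.fun_comp (g := F) (by exact hFa) (analyticAt_tail 0)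
    have h2 : AnalyticAt ℂ (fun p : Fin (n + 1) → ℂ => L (p 0)) 0 :=
      AnalyticAt.fun_comp (g := L) (by exact hL)
        ((ContinuousLinearMap.proj (R := ℂ) (φ := fun _ : Fin (n + 1) => ℂ) 0).analyticAt 0)
    refine AnalyticAt.congr (f := fun p => L (p 0) (F (Fin.tail p))) ?_ (he.mono fun p h => h.symm)
    exact analyticAt_clm_apply h2 h1

/-- Division with remainder by the first coordinate. -/
theorem divide_first {n : ℕ} {f : (Fin (n + 1) → ℂ) → ℂ} (hf : AnalyticAt ℂ f 0) :
    ∃ (c : (Fin n → ℂ) → ℂ) (u : (Fin (n + 1) → ℂ) → ℂ), AnalyticAt ℂ c 0 ∧ AnalyticAt ℂ u 0 ∧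
      ∀ᶠ p in 𝓝 0, f p = c (Fin.tail p) + p 0 * u p := by
  obtain ⟨r, F, L, hF, hL, he⟩ := holo_rep f
    (hf.eventually_analyticAt.mono fun p hp => hp.differentiableAt)
  have hFa := osgood n F hF
  have hL1 : AnalyticAt ℂ (dslope L 0) 0 := by
    obtain ⟨p, hp⟩ := hL
    exact ⟨_, hp.has_fpower_series_dslope_fslope⟩
  refine ⟨fun x => L 0 (F x), fun p => dslope L 0 (p 0) (F (Fin.tail p)), ?_, ?_, ?_⟩
  · exact ((L 0).analyticAt _).fun_comp hFa
  · have h1 : AnalyticAt ℂ (fun p : Fin (n + 1) → ℂ => F (Fin.tail p)) 0 :=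
      AnalyticAt.fun_comp (g := F) (by exact hFa) (analyticAt_tail 0)
    have h2 : AnalyticAt ℂ (fun p : Fin (n + 1) → ℂ => dslope L 0 (p 0)) 0 :=
      AnalyticAt.fun_comp (g := dslope L 0) (by exact hL1)
        ((ContinuousLinearMap.proj (R := ℂ) (φ := fun _ : Fin (n + 1) => ℂ) 0).analyticAt 0)
    exact analyticAt_clm_apply h2 h1
  · filter_upwards [he] with p hp
    have : L (p 0) = L 0 + p 0 • dslope L 0 (p 0) := by
      have := sub_smul_dslope L 0 (p 0)
      rw [sub_zero] at this
      rw [this]; abel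
    rw [hp, this]; simp

end Osgood

/-! ### Monomial germs and lifting families of points -/

section Monomials

variable {n : ℕ}

/-- The germ of `f` at `0` is the monomial `y ^ a` times a unit. -/
def HasExp (f : (Fin n → ℂ) → ℂ) (a : Fin n → ℕ) : Prop :=
  ∃ u : (Fin n → ℂ) → ℂ, AnalyticAt ℂ u 0 ∧ u 0 ≠ 0 ∧ ∀ᶠ y in 𝓝 0, f y = (∏ i, y i ^ a i) * u y

/-- The germ of `f` at `0` vanishes. -/
def ZeroGerm (f : (Fin n → ℂ) → ℂ) : Prop := ∀ᶠ y in 𝓝 0, f y = 0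

/-- Exponent of the pullback of `y ^ a` under a map whose components have exponents `T j`. -/
def vm (a : Fin n → ℕ) (T : Fin n → Fin n → ℕ) : Fin n → ℕ := ∑ j, a j • T j

theorem analyticAt_coord (i : Fin n) (p : Fin n → ℂ) :
    AnalyticAt ℂ (fun y : Fin n → ℂ => y i) p :=
  (ContinuousLinearMap.proj (R := ℂ) (φ := fun _ : Fin n => ℂ) i).analyticAt p

theorem analyticAt_monomial (a : Fin n → ℕ) (p : Fin n → ℂ) :
    AnalyticAt ℂ (fun y : Fin n → ℂ => ∏ i, y i ^ a i) p := by
  have := Finset.analyticAt_fun_prod (f := fun (i : Fin n) (y : Fin n → ℂ) => y i ^ a i) (c := p)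
    Finset.univ (𝕜 := ℂ) (fun i _ => (analyticAt_coord i p).fun_pow _)
  exact this

theorem HasExp.analyticAt {f : (Fin n → ℂ) → ℂ} {a : Fin n → ℕ} (h : HasExp f a) :
    AnalyticAt ℂ f 0 := by
  obtain ⟨u, hu, -, he⟩ := h
  exact ((analyticAt_monomial a 0).fun_mul hu).congr (he.mono fun _ h => h.symm)

theorem HasExp.congr {f g : (Fin n → ℂ) → ℂ} {a : Fin n → ℕ} (h : HasExp f a)
    (hfg : ∀ᶠ y in 𝓝 0, g y = f y) : HasExp g a := by
  obtain ⟨u, hu, h0, he⟩ := h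
  exact ⟨u, hu, h0, by filter_upwards [he, hfg] with y h1 h2; rw [h2, h1]⟩

theorem HasExp.unit {f : (Fin n → ℂ) → ℂ} (h : AnalyticAt ℂ f 0) (h0 : f 0 ≠ 0) : HasExp f 0 :=
  ⟨f, h, h0, by simp⟩

theorem HasExp.coord (i : Fin n) : HasExp (fun y : Fin n → ℂ => y i) (Pi.single i 1) := by
  refine ⟨fun _ => 1, analyticAt_const, one_ne_zero, .of_forall fun y => ?_⟩
  rw [Finset.prod_eq_single i]
  · simp
  · intro b _ hb; simp [Pi.single_eq_of_ne hb]
  · simp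

theorem HasExp.mul {f g : (Fin n → ℂ) → ℂ} {a b : Fin n → ℕ} (hf : HasExp f a) (hg : HasExp g b) :
    HasExp (fun y => f y * g y) (a + b) := by
  obtain ⟨u, hu, hu0, he⟩ := hf
  obtain ⟨v, hv, hv0, he'⟩ := hg
  refine ⟨fun y => u y * v y, hu.fun_mul hv, mul_ne_zero hu0 hv0, ?_⟩
  filter_upwards [he, he'] with y h1 h2
  rw [h1, h2]
  simp only [Pi.add_apply, pow_add, Finset.prod_mul_distrib]
  ring

theorem HasExp.prod {ι : Type*} (s : Finset ι) {f : ι → (Fin n → ℂ) → ℂ} {a : ι → Fin n → ℕ}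
    (h : ∀ k ∈ s, HasExp (f k) (a k)) : HasExp (fun y => ∏ k ∈ s, f k y) (∑ k ∈ s, a k) := by
  classical
  induction s using Finset.induction_on with
  | empty => simpa using HasExp.unit (n := n) (f := fun _ => 1) analyticAt_const one_ne_zero
  | insert k s hk ih =>
    simp only [Finset.prod_insert hk, Finset.sum_insert hk]
    exact (h k (Finset.mem_insert_self _ _)).mul
      (ih fun k' hk' => h k' (Finset.mem_insert_of_mem hk'))

theorem HasExp.pow {f : (Fin n → ℂ) → ℂ} {a : Fin n → ℕ} (hf : HasExp f a) (m : ℕ) :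
    HasExp (fun y => f y ^ m) (m • a) := by
  have := HasExp.prod (Finset.range m) (f := fun _ => f) (a := fun _ => a) fun _ _ => hf
  simpa using this

/-- A monomial times a unit pulls back to one under a map all of whose components are monomials times
units. -/
theorem HasExp.comp {f : (Fin n → ℂ) → ℂ} {a : Fin n → ℕ} {k : ℕ} {φ : (Fin k → ℂ) → (Fin n → ℂ)}
    {T : Fin n → Fin k → ℕ} (hf : HasExp f a) (hφ : AnalyticAt ℂ φ 0) (h0 : φ 0 = 0)
    (hT : ∀ j, HasExp (fun y => φ y j) (T j)) :
    HasExp (fun y => f (φ y)) (∑ j, a j • T j) := by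
  obtain ⟨u, hu, hu0, he⟩ := hf
  have h1 := HasExp.prod Finset.univ (f := fun j y => φ y j ^ a j) (a := fun j => a j • T j)
    fun j _ => (hT j).pow (a j)
  have h2 : HasExp (fun y => u (φ y)) 0 :=
    HasExp.unit (AnalyticAt.fun_comp (g := u) (by rwa [h0]) hφ) (by rwa [h0])
  have ht : Tendsto φ (𝓝 0) (𝓝 0) := by simpa [h0] using hφ.continuousAt.tendsto
  have h3 := h1.mul h2
  rw [add_zero] at h3
  exact h3.congr (ht.eventually he)

theorem HasExp.not_zeroGerm {f : (Fin n → ℂ) → ℂ} {a : Fin n → ℕ} (h : HasExp f a) :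
    ¬ ZeroGerm f := by
  obtain ⟨u, hu, hu0, he⟩ := h
  intro hz
  have h1 : ∀ᶠ y in 𝓝 (0 : Fin n → ℂ), ∏ i, y i ^ a i = 0 := by
    filter_upwards [he, hz, hu.continuousAt.eventually_ne hu0] with y h1 h2 h3
    rw [h2] at h1
    exact (mul_eq_zero.1 h1.symm).resolve_right h3
  have h2 : Tendsto (fun t : ℂ => (fun _ : Fin n => t)) (𝓝 0) (𝓝 0) :=
    (by fun_prop : Continuous fun t : ℂ => (fun _ : Fin n => t)).tendsto 0
  have h3 := (h2.eventually h1).filter_mono (nhdsWithin_le_nhds (s := {0}ᶜ))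
  obtain ⟨t, ht, ht0⟩ := (h3.and self_mem_nhdsWithin).exists
  exact Finset.prod_ne_zero_iff.2 (fun i _ => pow_ne_zero _ ht0) ht

theorem HasExp.ne_zero {f : (Fin n → ℂ) → ℂ} {a : Fin n → ℕ} (h : HasExp f a) (h0 : f 0 = 0) :
    a ≠ 0 := by
  rintro rfl
  obtain ⟨u, hu, hu0, he⟩ := h
  have := he.self_of_nhds
  simp [h0] at this
  exact hu0 this.symm

/-- If `a ≤ b` then a germ of exponent `b` is one of exponent `a` times one of exponent `b - a`. -/
theorem HasExp.div {f g : (Fin n → ℂ) → ℂ} {a b : Fin n → ℕ} (hf : HasExp f a) (hg : HasExp g b)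
    (hab : a ≤ b) : ∃ ρ : (Fin n → ℂ) → ℂ, AnalyticAt ℂ ρ 0 ∧ HasExp ρ (b - a) ∧
      ∀ᶠ y in 𝓝 0, g y = f y * ρ y := by
  obtain ⟨u, hu, hu0, he⟩ := hf
  obtain ⟨v, hv, hv0, he'⟩ := hg
  have hex : HasExp (fun y : Fin n → ℂ => (∏ i, y i ^ (b - a) i) * (v y / u y)) (b - a) :=
    ⟨fun y => v y / u y, hv.fun_div hu hu0, div_ne_zero hv0 hu0, .of_forall fun y => rfl⟩
  refine ⟨_, hex.analyticAt, hex, ?_⟩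
  filter_upwards [he, he', hu.continuousAt.eventually_ne hu0] with y h1 h2 h3
  have : ∏ i, y i ^ b i = (∏ i, y i ^ a i) * ∏ i, y i ^ (b - a) i := by
    rw [← Finset.prod_mul_distrib]
    refine Finset.prod_congr rfl fun i _ => ?_
    rw [← pow_add, Pi.sub_apply, Nat.add_sub_cancel' (hab i)]
  rw [h1, h2, this]
  field_simp

theorem HasExp.zero_of_ne {f : (Fin n → ℂ) → ℂ} {a : Fin n → ℕ} (h : HasExp f a) (ha : a ≠ 0) :
    f 0 = 0 := by
  obtain ⟨u, -, -, he⟩ := h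
  obtain ⟨i, hi⟩ := Function.ne_iff.1 ha
  rw [he.self_of_nhds, Finset.prod_eq_zero (Finset.mem_univ i), zero_mul]
  simpa using hi

theorem vm_mono {a b : Fin n → ℕ} (T : Fin n → Fin n → ℕ) (h : a ≤ b) : vm a T ≤ vm b T := by
  unfold vm
  exact Finset.sum_le_sum fun j _ => smul_le_smul_of_nonneg_right (h j) (by intro i; simp)

theorem vm_apply (a : Fin n → ℕ) (T : Fin n → Fin n → ℕ) (i : Fin n) :
    vm a T i = ∑ j, a j * T j i := by
  simp [vm]

theorem vm_vm (a : Fin n → ℕ) (T S : Fin n → Fin n → ℕ) :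
    vm a (fun j => vm (T j) S) = vm (vm a T) S := by
  funext i
  simp only [vm_apply, Finset.mul_sum, Finset.sum_mul]
  rw [Finset.sum_comm]
  simp only [mul_assoc]

theorem vm_smul (c : ℕ) (a : Fin n → ℕ) (T : Fin n → Fin n → ℕ) :
    vm (c • a) T = c • vm a T := by
  funext i
  simp [vm_apply, Finset.mul_sum, mul_assoc]

theorem vm_single (a : Fin n → ℕ) : vm a (fun j => Pi.single j 1) = a := by
  funext i
  simp [vm_apply, Pi.single_apply]

end Monomials

section Reach

variable {n : ℕ} {I : Type} {l : Ultrafilter I}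

/-- The family `x`, which tends to `0` along `l`, lifts through the analytic map germ `φ` to a
family `y` tending to `0`. -/
def Reach {n k : ℕ} (l : Ultrafilter I) (x : I → Fin n → ℂ) (φ : (Fin k → ℂ) → (Fin n → ℂ))
    (y : I → Fin k → ℂ) : Prop :=
  AnalyticAt ℂ φ 0 ∧ φ 0 = 0 ∧ Tendsto y l (𝓝 0) ∧ ∀ᶠ i in (l : Filter I), φ (y i) = x i

theorem Reach.tendsto {φ : (Fin n → ℂ) → (Fin n → ℂ)} {x y : I → Fin n → ℂ}
    (h : Reach l x φ y) : Tendsto φ (𝓝 0) (𝓝 0) := by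
  simpa [h.2.1] using h.1.continuousAt.tendsto

theorem Reach.comp {φ ψ : (Fin n → ℂ) → (Fin n → ℂ)} {x y z : I → Fin n → ℂ}
    (h : Reach l x φ y) (h' : Reach l y ψ z) : Reach l x (fun p => φ (ψ p)) z := by
  refine ⟨AnalyticAt.fun_comp (by rw [h'.2.1]; exact h.1) h'.1, by simp only [h'.2.1, h.2.1], h'.2.2.1, ?_⟩
  filter_upwards [h.2.2.2, h'.2.2.2] with i h1 h2
  rw [h2, h1]

theorem Reach.refl {x : I → Fin n → ℂ} (h : Tendsto x l (𝓝 0)) : Reach l x (fun p => p) x :=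
  ⟨analyticAt_id, rfl, h, .of_forall fun _ => rfl⟩

/-- A lift through a map whose components are monomials (with exponents `T j`) times units. -/
def MonoReach (l : Ultrafilter I) (x : I → Fin n → ℂ) (φ : (Fin n → ℂ) → (Fin n → ℂ))
    (T : Fin n → Fin n → ℕ) (y : I → Fin n → ℂ) : Prop :=
  Reach l x φ y ∧ ∀ j, HasExp (fun p => φ p j) (T j)

theorem HasExp.comp_reach {f : (Fin n → ℂ) → ℂ} {a : Fin n → ℕ} {φ : (Fin n → ℂ) → (Fin n → ℂ)}
    {x y : I → Fin n → ℂ} {T : Fin n → Fin n → ℕ} (hf : HasExp f a) (h : MonoReach l x φ T y) :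
    HasExp (fun p => f (φ p)) (vm a T) :=
  hf.comp h.1.1 h.1.2.1 h.2

theorem MonoReach.comp {φ ψ : (Fin n → ℂ) → (Fin n → ℂ)} {x y z : I → Fin n → ℂ}
    {T S : Fin n → Fin n → ℕ} (h : MonoReach l x φ T y) (h' : MonoReach l y ψ S z) :
    MonoReach l x (fun p => φ (ψ p)) (fun j => vm (T j) S) z :=
  ⟨h.1.comp h'.1, fun j => (h.2 j).comp_reach h'⟩

theorem MonoReach.refl {x : I → Fin n → ℂ} (h : Tendsto x l (𝓝 0)) :
    MonoReach l x (fun p => p) (fun j => Pi.single j 1) x :=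
  ⟨Reach.refl h, fun j => HasExp.coord j⟩

/-- A bounded family of complex numbers converges along an ultrafilter. -/
theorem exists_limit {c : I → ℂ} {C : ℝ} (h : ∀ᶠ i in (l : Filter I), ‖c i‖ ≤ C) :
    ∃ z, Tendsto c l (𝓝 z) := by
  have := (isCompact_closedBall (0 : ℂ) C).ultrafilter_le_nhds (l.map c)
    (by
      rw [le_principal_iff]
      exact Filter.mem_map.2 (h.mono fun i hi => by simpa using hi))
  obtain ⟨z, -, hz⟩ := this
  exact ⟨z, hz⟩

/-- One blow-up in the coordinates `i`, `j`, in the chart where `x i / x j` is bounded. The two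
alternatives for the exponents are those where `x i / x j` tends to `0` and to a nonzero limit. -/
theorem blowup_step {x : I → Fin n → ℂ} (hx : Tendsto x l (𝓝 0)) {i j : Fin n} (hij : i ≠ j)
    (hle : ∀ᶠ s in (l : Filter I), ‖x s i‖ ≤ ‖x s j‖) :
    ∃ φ T y, MonoReach l x φ T y ∧
      ((∀ a, vm a T = a + Pi.single j (a i)) ∨
        (∀ a, vm a T = Function.update (a + Pi.single j (a i)) i 0)) := by
  classical
  obtain ⟨c, hc⟩ : ∃ c, Tendsto (fun s => x s i / x s j) l (𝓝 c) := by
    refine exists_limit (C := 1) (hle.mono fun s hs => ?_)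
    rw [norm_div]
    exact div_le_one_of_le₀ hs (norm_nonneg _)
  have hxk : ∀ k, Tendsto (fun s => x s k) l (𝓝 0) := fun k => tendsto_pi_nhds.1 hx k
  let φ : (Fin n → ℂ) → (Fin n → ℂ) := fun y => Function.update y i (y j * (y i + c))
  let y : I → Fin n → ℂ := fun s => Function.update (x s) i (x s i / x s j - c)
  have hφa : AnalyticAt ℂ φ 0 := by
    rw [analyticAt_pi_iff]
    intro k
    by_cases hk : k = i
    · subst hk
      simp only [Function.update_self]
      exact (analyticAt_coord j 0).fun_mul ((analyticAt_coord k 0).fun_add analyticAt_const)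
    · simp only [Function.update_of_ne hk]
      exact analyticAt_coord k 0
  have hreach : Reach l x φ y := by
    refine ⟨hφa, ?_, ?_, ?_⟩
    · funext k
      by_cases hk : k = i
      · subst hk; simp [φ]
      · simp [φ, Function.update_of_ne hk]
    · refine tendsto_pi_nhds.2 fun k => ?_
      by_cases hk : k = i
      · subst hk
        simp only [y, Function.update_self]
        simpa using hc.sub_const c
      · simp only [y, Function.update_of_ne hk]
        exact hxk k
    · filter_upwards [hle] with s hs
      funext k
      by_cases hk : k = i
      · subst hk
        simp only [φ, y, Function.update_self, Function.update_of_ne hij.symm, sub_add_cancel]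
        rcases eq_or_ne (x s j) 0 with h0 | h0
        · rw [h0, norm_zero] at hs
          rw [h0, zero_mul, norm_le_zero_iff.1 hs]
        · field_simp
      · simp only [φ, y, Function.update_of_ne hk]
  by_cases hc0 : c = 0
  · refine ⟨φ, fun k => if k = i then Pi.single i 1 + Pi.single j 1 else Pi.single k 1, y,
      ⟨hreach, fun k => ?_⟩, Or.inl fun a => ?_⟩
    · by_cases hk : k = i
      · subst hk
        simp only [φ, Function.update_self, if_true, hc0, add_zero]
        rw [add_comm]
        exact (HasExp.coord j).mul (HasExp.coord k)
      · simp only [φ, Function.update_of_ne hk, if_neg hk]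
        exact HasExp.coord k
    · have : (fun k => if k = i then Pi.single i 1 + Pi.single j 1 else Pi.single k 1 :
          Fin n → Fin n → ℕ) = fun k => Pi.single k 1 + (if k = i then Pi.single j 1 else 0) := by
        funext k; by_cases hk : k = i <;> simp [hk]
      rw [this]
      funext m
      rw [vm_apply]
      simp only [Pi.add_apply, mul_add, Finset.sum_add_distrib, Pi.single_apply, ite_apply,
        Pi.zero_apply, mul_ite, mul_one, mul_zero]
      simp
  · refine ⟨φ, fun k => if k = i then Pi.single j 1 else Pi.single k 1, y,
      ⟨hreach, fun k => ?_⟩, Or.inr fun a => ?_⟩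
    · by_cases hk : k = i
      · subst hk
        simp only [φ, Function.update_self, if_true]
        have hu : HasExp (fun p : Fin n → ℂ => p k + c) 0 :=
          HasExp.unit ((analyticAt_coord k 0).fun_add analyticAt_const) (by simpa using hc0)
        simpa using (HasExp.coord j).mul hu
      · simp only [φ, Function.update_of_ne hk, if_neg hk]
        exact HasExp.coord k
    · funext m
      rw [vm_apply, ← Finset.add_sum_erase _ _ (Finset.mem_univ i), if_pos rfl]
      have h1 : ∀ k ∈ Finset.univ.erase i, a k * (if k = i then (Pi.single j 1 : Fin n → ℕ)
          else Pi.single k 1) m = if m = k then a k else 0 := by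
        intro k hk
        rw [if_neg (Finset.ne_of_mem_erase hk), Pi.single_apply]
        split_ifs <;> simp
      rw [Finset.sum_congr rfl h1, Finset.sum_ite_eq]
      by_cases hm : m = i
      · subst hm; simp [hij]
      · simp [hm, Pi.single_apply, add_comm]

end Reach

/-! ### Toric blow-ups and ramification -/

section Toric

variable {n : ℕ} {I : Type} {l : Ultrafilter I}

/-- Two monomials become comparable for divisibility after finitely many blow-ups: the entries of
`a - b` lie in `[-N, M]`, and each blow-up at a maximal and a minimal entry replaces one of them
by an interior value. -/
theorem toric_aux (w : ℕ) : ∀ (M N : ℕ) (a b : Fin n → ℕ) (x : I → Fin n → ℂ),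
    Tendsto x l (𝓝 0) → (∀ k, a k ≤ b k + M) → (∀ k, b k ≤ a k + N) →
    (M + N) * (n + 1) + (Finset.univ.filter fun k => a k = b k + M ∨ b k = a k + N).card ≤ w →
    ∃ φ T y, MonoReach l x φ T y ∧ (vm a T ≤ vm b T ∨ vm b T ≤ vm a T) := by
  induction w using Nat.strong_induction_on with
  | _ w ih =>
  intro M N a b x hx hM hN hw
  have hcard : ∀ p : Fin n → Prop, ∀ _ : DecidablePred p, (Finset.univ.filter p).card ≤ n := by
    intro p _
    exact (Finset.card_le_univ _).trans (by simp)
  rcases Nat.eq_zero_or_pos M with rfl | hMpos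
  · exact ⟨_, _, _, MonoReach.refl hx, Or.inl (vm_mono _ fun k => by simpa using hM k)⟩
  rcases Nat.eq_zero_or_pos N with rfl | hNpos
  · exact ⟨_, _, _, MonoReach.refl hx, Or.inr (vm_mono _ fun k => by simpa using hN k)⟩
  by_cases h1 : ∃ i, a i = b i + M
  swap
  · push Not at h1
    refine ih ((M - 1 + N) * (n + 1) + n) ?_ (M - 1) N a b x hx (fun k => ?_) hN ?_
    · refine lt_of_lt_of_le ?_ hw
      have : (M + N) * (n + 1) = (M - 1 + N) * (n + 1) + (n + 1) := by
        obtain ⟨M, rfl⟩ := Nat.exists_eq_add_of_le' hMpos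
        simp only [Nat.add_sub_cancel]; ring
      omega
    · have := hM k; have := h1 k; omega
    · exact Nat.add_le_add_left (hcard _ _) _
  by_cases h2 : ∃ j, b j = a j + N
  swap
  · push Not at h2
    refine ih ((M + (N - 1)) * (n + 1) + n) ?_ M (N - 1) a b x hx hM (fun k => ?_) ?_
    · refine lt_of_lt_of_le ?_ hw
      have : (M + N) * (n + 1) = (M + (N - 1)) * (n + 1) + (n + 1) := by
        obtain ⟨N, rfl⟩ := Nat.exists_eq_add_of_le' hNpos
        simp only [Nat.add_sub_cancel]; ring
      omega
    · have := hN k; have := h2 k; omega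
    · exact Nat.add_le_add_left (hcard _ _) _
  obtain ⟨i, hi⟩ := h1
  obtain ⟨j, hj⟩ := h2
  have hij : i ≠ j := by rintro rfl; omega
  -- after a blow-up in the coordinates `i`, `j` the count of extremal entries drops
  have key : ∀ (φ : (Fin n → ℂ) → (Fin n → ℂ)) (T : Fin n → Fin n → ℕ) (y : I → Fin n → ℂ),
      MonoReach l x φ T y → ∀ m, (a m = b m + M ∨ b m = a m + N) →
      (∀ k, vm a T k ≤ vm b T k + M) → (∀ k, vm b T k ≤ vm a T k + N) →
      (∀ k, (vm a T k = vm b T k + M ∨ vm b T k = vm a T k + N) →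
        k ≠ m ∧ (a k = b k + M ∨ b k = a k + N)) →
      ∃ φ T y, MonoReach l x φ T y ∧ (vm a T ≤ vm b T ∨ vm b T ≤ vm a T) := by
    intro φ T y hT m hm hM' hN' hcount
    have hlt : (Finset.univ.filter fun k => vm a T k = vm b T k + M ∨ vm b T k = vm a T k + N).card
        < (Finset.univ.filter fun k => a k = b k + M ∨ b k = a k + N).card := by
      refine Finset.card_lt_card ?_
      rw [Finset.ssubset_iff_of_subset]
      · refine ⟨m, by simpa using hm, ?_⟩
        intro hmem
        exact (hcount m (Finset.mem_filter.1 hmem).2).1 rfl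
      · intro k hk
        exact Finset.mem_filter.2 ⟨Finset.mem_univ _, (hcount k (Finset.mem_filter.1 hk).2).2⟩
    obtain ⟨φ', T', y', hT', hc⟩ := ih ((M + N) * (n + 1) + (Finset.univ.filter fun k =>
        vm a T k = vm b T k + M ∨ vm b T k = vm a T k + N).card) (by omega)
      M N (vm a T) (vm b T) y hT.1.2.2.1 hM' hN' le_rfl
    refine ⟨_, _, _, hT.comp hT', ?_⟩
    rw [vm_vm, vm_vm]
    exact hc
  rcases (l.em fun s => ‖x s i‖ ≤ ‖x s j‖) with hle | hle
  · obtain ⟨φ, T, y, hT, hform⟩ := blowup_step hx hij hle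
    refine key φ T y hT j (Or.inr hj) ?_ ?_ ?_
    all_goals
      intro k
      have hMk := hM k
      have hNk := hN k
      rcases hform with hform | hform
      all_goals
        rw [hform a, hform b]
        by_cases hki : k = i
        · subst hki
          simp [hij]
          try omega
        · by_cases hkj : k = j
          · subst hkj
            simp [hki]
            omega
          · simp [hki, hkj]
            try omega
  · have hle' : ∀ᶠ s in (l : Filter I), ‖x s j‖ ≤ ‖x s i‖ := hle.mono fun s hs => (not_le.1 hs).le
    obtain ⟨φ, T, y, hT, hform⟩ := blowup_step hx hij.symm hle'
    refine key φ T y hT i (Or.inl hi) ?_ ?_ ?_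
    all_goals
      intro k
      have hMk := hM k
      have hNk := hN k
      rcases hform with hform | hform
      all_goals
        rw [hform a, hform b]
        by_cases hkj : k = j
        · subst hkj
          simp [hij.symm]
          try omega
        · by_cases hki : k = i
          · subst hki
            simp [hkj]
            omega
          · simp [hki, hkj]
            try omega

/-- After finitely many blow-ups one of two given monomials divides the other. -/
theorem toric (a b : Fin n → ℕ) {x : I → Fin n → ℂ} (hx : Tendsto x l (𝓝 0)) :
    ∃ φ T y, MonoReach l x φ T y ∧ (vm a T ≤ vm b T ∨ vm b T ≤ vm a T) := by
  refine toric_aux _ (∑ k, a k) (∑ k, b k) a b x hx (fun k => ?_) (fun k => ?_) le_rfl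
  · exact (Finset.single_le_sum (f := a) (fun _ _ => Nat.zero_le _) (Finset.mem_univ k)).trans
      (Nat.le_add_left _ _)
  · exact (Finset.single_le_sum (f := b) (fun _ _ => Nat.zero_le _) (Finset.mem_univ k)).trans
      (Nat.le_add_left _ _)

/-- Finitely many monomials acquire a least one for divisibility. -/
theorem toric_family {ι : Type*} (s : Finset ι) (hs : s.Nonempty) (b : ι → Fin n → ℕ)
    {x : I → Fin n → ℂ} (hx : Tendsto x l (𝓝 0)) :
    ∃ φ T y, MonoReach l x φ T y ∧ ∃ k₀ ∈ s, ∀ k ∈ s, vm (b k₀) T ≤ vm (b k) T := by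
  classical
  induction hs using Finset.Nonempty.cons_induction with
  | singleton k =>
    exact ⟨_, _, _, MonoReach.refl hx, k, by simp, fun k' hk' => by
      rw [Finset.mem_singleton.1 hk']⟩
  | cons k s hk hs ih =>
    obtain ⟨φ, T, y, hT, k₀, hk₀, hmin⟩ := ih
    obtain ⟨ψ, S, z, hS, hc⟩ := toric (vm (b k₀) T) (vm (b k) T) hT.1.2.2.1
    refine ⟨_, _, _, hT.comp hS, ?_⟩
    simp only [vm_vm]
    rcases hc with hc | hc
    · refine ⟨k₀, Finset.mem_cons_of_mem hk₀, fun k' hk' => ?_⟩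
      rcases Finset.mem_cons.1 hk' with rfl | hk'
      · exact hc
      · exact vm_mono _ (hmin k' hk')
    · refine ⟨k, Finset.mem_cons_self _ _, fun k₁ hk₁ => ?_⟩
      rcases Finset.mem_cons.1 hk₁ with rfl | hk₁
      · exact le_rfl
      · exact hc.trans (vm_mono _ (hmin k₁ hk₁))

/-- Ramification `y i = t i ^ M`. -/
theorem power_reach {M : ℕ} (hM : M ≠ 0) {x : I → Fin n → ℂ} (hx : Tendsto x l (𝓝 0)) :
    ∃ φ y, MonoReach l x φ (fun j => M • Pi.single j 1) y := by
  have hroot : ∀ z : ℂ, ∃ w : ℂ, w ^ M = z := fun z =>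
    ⟨z ^ ((M : ℂ)⁻¹), Complex.cpow_nat_inv_pow z hM⟩
  choose r hr using hroot
  refine ⟨fun p j => p j ^ M, fun s j => r (x s j), ⟨?_, ?_, ?_, ?_⟩, fun j => ?_⟩
  · rw [analyticAt_pi_iff]
    exact fun j => (analyticAt_coord j 0).fun_pow M
  · funext j; simp [hM]
  · refine tendsto_pi_nhds.2 fun j => ?_
    rw [Pi.zero_apply, tendsto_zero_iff_norm_tendsto_zero]
    have h1 : Tendsto (fun s => ‖x s j‖) l (𝓝 0) := by
      simpa using (tendsto_pi_nhds.1 hx j).norm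
    have h2 : Tendsto (fun s => ‖x s j‖ ^ ((M : ℝ)⁻¹)) l (𝓝 0) := by
      have := h1.rpow_const (p := (M : ℝ)⁻¹) (Or.inr (by positivity))
      rwa [Real.zero_rpow (by positivity)] at this
    refine h2.congr fun s => ?_
    rw [← hr (x s j), norm_pow, Real.pow_rpow_inv_natCast (norm_nonneg _) hM, hr]
  · exact .of_forall fun s => by funext j; exact hr _
  · exact (HasExp.coord j).pow M

theorem vm_power (M : ℕ) (a : Fin n → ℕ) : vm a (fun j => M • Pi.single j 1) = M • a := by
  funext i
  simp [vm_apply, Pi.single_apply, mul_comm]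

end Toric

/-! ### Factors of monomial germs -/

section Germs

variable {n : ℕ}

/-- Germs of analytic functions form a domain. -/
theorem zeroGerm_or {f g : (Fin n → ℂ) → ℂ} (hf : AnalyticAt ℂ f 0) (hg : AnalyticAt ℂ g 0)
    (h : ZeroGerm fun y => f y * g y) : ZeroGerm f ∨ ZeroGerm g := by
  by_contra! hne
  obtain ⟨r, hr, hball⟩ := Metric.eventually_nhds_iff_ball.1
    ((hf.eventually_analyticAt.and hg.eventually_analyticAt).and h)
  obtain ⟨p, hp, hfp⟩ : ∃ p ∈ ball (0 : Fin n → ℂ) r, f p ≠ 0 := by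
    by_contra! hcon
    exact hne.1 (Filter.mem_of_superset (ball_mem_nhds 0 hr) hcon)
  have h1 : g =ᶠ[𝓝 p] 0 := by
    filter_upwards [isOpen_ball.mem_nhds hp, (hball p hp).1.1.continuousAt.eventually_ne hfp]
      with y hy hy0
    exact (mul_eq_zero.1 (hball y hy).2).resolve_left hy0
  have h2 := AnalyticOnNhd.eqOn_zero_of_preconnected_of_eventuallyEq_zero (𝕜 := ℂ)
    (f := g) (U := ball 0 r) (fun y hy => (hball y hy).1.2) (convex_ball 0 r).isPreconnected hp h1
  exact hne.2 (Filter.mem_of_superset (ball_mem_nhds 0 hr) h2)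

theorem not_zeroGerm_prod {ι : Type*} (s : Finset ι) {f : ι → (Fin n → ℂ) → ℂ}
    (hf : ∀ k ∈ s, AnalyticAt ℂ (f k) 0) (h : ∀ k ∈ s, ¬ ZeroGerm (f k)) :
    ¬ ZeroGerm fun y => ∏ k ∈ s, f k y := by
  classical
  induction s using Finset.induction_on with
  | empty => intro h0; simpa using h0.self_of_nhds
  | insert k s hk ih =>
    simp only [Finset.prod_insert hk]
    intro h0
    rcases zeroGerm_or (hf k (Finset.mem_insert_self _ _)) (Finset.analyticAt_fun_prod s
      fun k' hk' => hf k' (Finset.mem_insert_of_mem hk')) h0 with h1 | h1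
    · exact h k (Finset.mem_insert_self _ _) h1
    · exact ih (fun k' hk' => hf k' (Finset.mem_insert_of_mem hk'))
        (fun k' hk' => h k' (Finset.mem_insert_of_mem hk')) h1

theorem not_zeroGerm_mul {f g : (Fin n → ℂ) → ℂ} (hf : AnalyticAt ℂ f 0) (hg : AnalyticAt ℂ g 0)
    (h : ¬ ZeroGerm f) (hg0 : ¬ ZeroGerm g) : ¬ ZeroGerm fun y => f y * g y := fun h0 =>
  (zeroGerm_or hf hg h0).elim h hg0

/-- An analytic germ vanishing on `y i = 0` is divisible by `y i`. -/
theorem divide_coord {f : (Fin n → ℂ) → ℂ} (hf : AnalyticAt ℂ f 0) (i : Fin n)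
    (h : ZeroGerm fun y => f (Function.update y i 0)) :
    ∃ u, AnalyticAt ℂ u 0 ∧ ∀ᶠ y in 𝓝 0, f y = y i * u y := by
  cases n with
  | zero => exact i.elim0
  | succ n =>
    let σ := Equiv.swap 0 i
    let τ : (Fin (n + 1) → ℂ) → (Fin (n + 1) → ℂ) := fun y k => y (σ k)
    have hτa : ∀ p, AnalyticAt ℂ τ p := fun p => by
      rw [analyticAt_pi_iff]
      exact fun k => analyticAt_coord _ p
    have hτ0 : τ 0 = 0 := rfl
    have hτt : Tendsto τ (𝓝 0) (𝓝 0) := (hτa 0).continuousAt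
    have hττ : ∀ y, τ (τ y) = y := fun y => by
      funext k; simp [τ, σ]
    obtain ⟨c, u, hc, hu, he⟩ := divide_first (f := fun p => f (τ p))
      (AnalyticAt.fun_comp (by rw [hτ0]; exact hf) (hτa 0))
    have hz : ∀ᶠ x in 𝓝 (0 : Fin n → ℂ), c x = 0 := by
      have ht : Tendsto (fun x : Fin n → ℂ => (Fin.cons 0 x : Fin (n + 1) → ℂ)) (𝓝 0) (𝓝 0) := by
        have : Continuous fun x : Fin n → ℂ => consL n (0, x) := by fun_prop
        have h1 := this.tendsto 0
        simp only [consL_apply] at h1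
        have h2 : (Fin.cons (0 : ℂ) (0 : Fin n → ℂ) : Fin (n + 1) → ℂ) = 0 := by
          rw [← consL_apply]; exact map_zero _
        rwa [h2] at h1
      filter_upwards [ht.eventually he, (hτt.comp ht).eventually h] with x h1 h2
      simp only [Fin.tail_cons, Fin.cons_zero, zero_mul, add_zero] at h1
      have h3 : Function.update (τ (Fin.cons 0 x)) i 0 = τ (Fin.cons 0 x) := by
        rw [Function.update_eq_self_iff]
        simp [τ, σ]
      rw [Function.comp_apply, h3] at h2
      rw [← h1, h2]
    refine ⟨fun y => u (τ y), AnalyticAt.fun_comp (by rw [hτ0]; exact hu) (hτa 0), ?_⟩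
    filter_upwards [hτt.eventually he, (tail_tendsto.comp hτt).eventually hz] with y h1 h2
    simp only [Function.comp_apply] at h2
    rw [hττ, h2, zero_add] at h1
    rw [h1]
    simp [τ, σ]

theorem zeroGerm_of_coord_mul {f : (Fin n → ℂ) → ℂ} (hf : AnalyticAt ℂ f 0) (i : Fin n)
    (h : ZeroGerm fun y => y i * f y) : ZeroGerm f :=
  (zeroGerm_or (analyticAt_coord i 0) hf h).resolve_left (HasExp.coord i).not_zeroGerm

/-- A factor of a monomial times a unit is again one. -/
theorem factor_aux (w : ℕ) : ∀ (f g : (Fin n → ℂ) → ℂ) (a : Fin n → ℕ), AnalyticAt ℂ f 0 →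
    AnalyticAt ℂ g 0 → HasExp (fun y => f y * g y) a → ∑ i, a i = w →
    (∃ b, HasExp f b) ∧ ∃ b, HasExp g b := by
  induction w with
  | zero =>
    intro f g a hf hg ha hw
    have ha0 : a = 0 := by
      funext i
      exact Finset.sum_eq_zero_iff.1 hw i (Finset.mem_univ i)
    obtain ⟨u, hu, hu0, he⟩ := ha
    have := he.self_of_nhds
    simp only [ha0, Pi.zero_apply, pow_zero, Finset.prod_const_one, one_mul] at this
    rw [← this] at hu0
    exact ⟨⟨0, HasExp.unit hf (left_ne_zero_of_mul hu0)⟩,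
      ⟨0, HasExp.unit hg (right_ne_zero_of_mul hu0)⟩⟩
  | succ w ih =>
    have main : ∀ (f g : (Fin n → ℂ) → ℂ) (a : Fin n → ℕ) (i : Fin n), AnalyticAt ℂ f 0 →
        AnalyticAt ℂ g 0 → HasExp (fun y => f y * g y) a → ∑ i, a i = w + 1 → a i ≠ 0 →
        (ZeroGerm fun y => f (Function.update y i 0)) → (∃ b, HasExp f b) ∧ ∃ b, HasExp g b := by
      intro f g a i hf hg ha hw hi hz
      obtain ⟨f', hf', he⟩ := divide_coord hf i hz
      have hle : (Pi.single i 1 : Fin n → ℕ) ≤ a := by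
        intro k
        by_cases hk : k = i
        · subst hk; simpa using Nat.one_le_iff_ne_zero.2 hi
        · simp [hk]
      obtain ⟨ρ, hρ, hρe, hd⟩ := (HasExp.coord i).div ha hle
      have h1 : ZeroGerm fun y => y i * (f' y * g y - ρ y) := by
        filter_upwards [he, hd] with y h1 h2
        rw [h1] at h2
        linear_combination h2
      have h2 := zeroGerm_of_coord_mul ((hf'.fun_mul hg).fun_sub hρ) i h1
      obtain ⟨⟨b, hb⟩, hg'⟩ := ih f' g _ hf' hg
        (hρe.congr (h2.mono fun y hy => sub_eq_zero.1 hy)) (by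
          have : ∑ k, a k = ∑ k, (a - (Pi.single i 1 : Fin n → ℕ)) k + ∑ k, (Pi.single i 1 : Fin n → ℕ) k := by
            rw [← Finset.sum_add_distrib]
            exact Finset.sum_congr rfl fun k _ => (Nat.sub_add_cancel (hle k)).symm
          have h3 : ∑ k, (Pi.single i 1 : Fin n → ℕ) k = 1 := by simp
          omega)
      exact ⟨⟨_, ((HasExp.coord i).mul hb).congr he⟩, hg'⟩
    intro f g a hf hg ha hw
    obtain ⟨i, hi⟩ : ∃ i, a i ≠ 0 := by
      by_contra! hcon
      simp [hcon] at hw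
    have hPa : AnalyticAt ℂ (fun y : Fin n → ℂ => Function.update y i 0) 0 := by
      rw [analyticAt_pi_iff]
      intro k
      by_cases hk : k = i
      · subst hk; simpa using analyticAt_const
      · simpa only [Function.update_of_ne hk] using analyticAt_coord k 0
    have hP0 : Function.update (0 : Fin n → ℂ) i 0 = 0 := by simp
    have hPt : Tendsto (fun y : Fin n → ℂ => Function.update y i 0) (𝓝 0) (𝓝 0) := by
      simpa [hP0] using hPa.continuousAt.tendsto
    have hz : ZeroGerm fun y => f (Function.update y i 0) * g (Function.update y i 0) := by
      obtain ⟨u, -, -, he⟩ := ha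
      filter_upwards [hPt.eventually he] with y hy
      rw [hy, Finset.prod_eq_zero (Finset.mem_univ i), zero_mul]
      simp [hi]
    rcases zeroGerm_or (AnalyticAt.fun_comp (by rw [hP0]; exact hf) hPa)
      (AnalyticAt.fun_comp (by rw [hP0]; exact hg) hPa) hz with h | h
    · exact main f g a i hf hg ha hw hi h
    · have := main g f a i hg hf (by simpa only [mul_comm] using ha) hw hi h
      exact this.symm

theorem HasExp.factor {f g : (Fin n → ℂ) → ℂ} {a : Fin n → ℕ} (hf : AnalyticAt ℂ f 0)
    (hg : AnalyticAt ℂ g 0) (h : HasExp (fun y => f y * g y) a) :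
    (∃ b, HasExp f b) ∧ ∃ b, HasExp g b :=
  factor_aux _ f g a hf hg h rfl

theorem HasExp.factor_prod {ι : Type*} (s : Finset ι) {f : ι → (Fin n → ℂ) → ℂ} {a : Fin n → ℕ}
    (hf : ∀ k ∈ s, AnalyticAt ℂ (f k) 0) (h : HasExp (fun y => ∏ k ∈ s, f k y) a) :
    ∀ k ∈ s, ∃ b, HasExp (f k) b := by
  classical
  intro k hk
  have : HasExp (fun y => f k y * ∏ k' ∈ s.erase k, f k' y) a :=
    h.congr (.of_forall fun y => Finset.mul_prod_erase s (fun k => f k y) hk)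
  exact (this.factor (hf k hk) (Finset.analyticAt_fun_prod _ fun k' hk' =>
    hf k' (Finset.mem_of_mem_erase hk'))).1

end Germs

/-! ### Division by powers of a coordinate and Tschirnhaus form -/

section Weierstrass

variable {n : ℕ}

theorem cons_zero_zero : (Fin.cons (0 : ℂ) (0 : Fin n → ℂ) : Fin (n + 1) → ℂ) = 0 := by
  rw [← consL_apply]; exact map_zero _

theorem analyticAt_cons {E : Type*} [NormedAddCommGroup E] [NormedSpace ℂ E] {a : E → ℂ}
    {b : E → Fin n → ℂ} {p : E} (ha : AnalyticAt ℂ a p) (hb : AnalyticAt ℂ b p) :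
    AnalyticAt ℂ (fun q => (Fin.cons (a q) (b q) : Fin (n + 1) → ℂ)) p := by
  have := AnalyticAt.fun_comp (g := consL n) ((consL n).analyticAt _) (ha.prod hb)
  simpa only [consL_apply] using this

theorem tail_zero : Fin.tail (0 : Fin (n + 1) → ℂ) = 0 := rfl

/-- Iterated division by the first coordinate of a germ regular of order `m` in it. -/
theorem divide_many (m : ℕ) : ∀ {f : (Fin (n + 1) → ℂ) → ℂ}, AnalyticAt ℂ f 0 →
    analyticOrderAt (fun t : ℂ => f (Fin.cons t 0)) 0 = m →
    ∃ (c : ℕ → (Fin n → ℂ) → ℂ) (u : (Fin (n + 1) → ℂ) → ℂ), (∀ k, AnalyticAt ℂ (c k) 0) ∧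
      (∀ k < m, c k 0 = 0) ∧ AnalyticAt ℂ u 0 ∧ u 0 ≠ 0 ∧
      ∀ᶠ p in 𝓝 0, f p = ∑ k ∈ Finset.range m, c k (Fin.tail p) * p 0 ^ k + p 0 ^ m * u p := by
  have hline : AnalyticAt ℂ (fun t : ℂ => (Fin.cons t 0 : Fin (n + 1) → ℂ)) 0 :=
    analyticAt_cons analyticAt_id analyticAt_const
  have hline0 : Tendsto (fun t : ℂ => (Fin.cons t 0 : Fin (n + 1) → ℂ)) (𝓝 0) (𝓝 0) := by
    simpa only [cons_zero_zero] using hline.continuousAt.tendsto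
  have hcomp : ∀ {f : (Fin (n + 1) → ℂ) → ℂ}, AnalyticAt ℂ f 0 →
      AnalyticAt ℂ (fun t : ℂ => f (Fin.cons t 0)) 0 := fun {f} hf =>
    AnalyticAt.fun_comp (g := f) (by rw [cons_zero_zero]; exact hf) hline
  induction m with
  | zero =>
    intro f hf ho
    rw [Nat.cast_zero, (hcomp hf).analyticOrderAt_eq_zero, cons_zero_zero] at ho
    exact ⟨fun _ _ => 0, f, fun _ => analyticAt_const, by simp, hf, ho, by simp⟩
  | succ m ih =>
    intro f hf ho
    obtain ⟨c₀, f₁, hc₀, hf₁, he⟩ := divide_first hf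
    have hf0 : f 0 = 0 := by
      have : analyticOrderAt (fun t : ℂ => f (Fin.cons t 0)) 0 ≠ 0 := by
        rw [ho]; exact_mod_cast Nat.succ_ne_zero m
      simpa only [cons_zero_zero] using apply_eq_zero_of_analyticOrderAt_ne_zero this
    have hc0 : c₀ 0 = 0 := by
      have := he.self_of_nhds
      rw [hf0, tail_zero] at this
      simpa using this.symm
    have ho₁ : analyticOrderAt (fun t : ℂ => f₁ (Fin.cons t 0)) 0 = m := by
      have h1 : (fun t : ℂ => f (Fin.cons t 0)) =ᶠ[𝓝 0] (id * fun t : ℂ => f₁ (Fin.cons t 0)) := by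
        filter_upwards [hline0.eventually he] with t ht
        rw [ht]; simp [hc0]
      rw [analyticOrderAt_congr h1, analyticOrderAt_mul analyticAt_id (hcomp hf₁),
        analyticOrderAt_id, Nat.cast_succ, add_comm] at ho
      exact ENat.add_left_injective_of_ne_top (by simp) ho
    obtain ⟨c, u, hc, hck, hu, hu0, he'⟩ := ih hf₁ ho₁
    refine ⟨fun k => Nat.casesOn k c₀ c, u, fun k => by cases k <;> simp [*],
      fun k hk => ?_, hu, hu0, ?_⟩
    · cases k with
      | zero => exact hc0
      | succ k => exact hck k (by omega)
    · filter_upwards [he, he'] with p h1 h2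
      rw [h1, h2, Finset.sum_range_succ', mul_add, Finset.mul_sum]
      have : ∀ k ∈ Finset.range m, p 0 * (c k (Fin.tail p) * p 0 ^ k)
          = c k (Fin.tail p) * p 0 ^ (k + 1) := fun k _ => by ring
      rw [Finset.sum_congr rfl this]
      change _ = ∑ k ∈ Finset.range m, c k (Fin.tail p) * p 0 ^ (k + 1)
        + c₀ (Fin.tail p) * p 0 ^ 0 + p 0 ^ (m + 1) * u p
      ring

/-- The coefficients of a finite expansion with analytic remainder are Taylor coefficients. -/
theorem iteratedDeriv_of_expansion (j : ℕ) : ∀ {q v : ℂ → ℂ} {c : ℕ → ℂ}, AnalyticAt ℂ v 0 →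
    (∀ᶠ t in 𝓝 0, q t = ∑ k ∈ Finset.range (j + 1), c k * t ^ k + t ^ (j + 1) * v t) →
    iteratedDeriv j q 0 = j.factorial * c j := by
  induction j with
  | zero =>
    intro q v c hv he
    simpa using he.self_of_nhds
  | succ j ih =>
    intro q v c hv he
    rw [iteratedDeriv_succ']
    have h1 : ∀ᶠ t in 𝓝 0, deriv q t = ∑ k ∈ Finset.range (j + 1), ((k + 1 : ℕ) * c (k + 1)) * t ^ k
        + t ^ (j + 1) * ((j + 2 : ℕ) * v t + t * deriv v t) := by
      filter_upwards [he.eventually_nhds, hv.eventually_analyticAt] with t ht hvt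
      have hq : q =ᶠ[𝓝 t] fun t => ∑ k ∈ Finset.range (j + 1 + 1), c k * t ^ k
        + t ^ (j + 1 + 1) * v t := ht
      rw [hq.deriv_eq]
      have hd : HasDerivAt (fun t => ∑ k ∈ Finset.range (j + 1 + 1), c k * t ^ k
          + t ^ (j + 1 + 1) * v t) (∑ k ∈ Finset.range (j + 1 + 1), c k * (k * t ^ (k - 1))
          + (((j + 1 + 1 : ℕ) * t ^ (j + 1)) * v t + t ^ (j + 1 + 1) * deriv v t)) t := by
        refine HasDerivAt.fun_add (HasDerivAt.fun_sum fun k _ => ?_) ?_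
        · exact (hasDerivAt_pow k t).const_mul (c k)
        · exact (hasDerivAt_pow (j + 1 + 1) t).fun_mul hvt.differentiableAt.hasDerivAt
      rw [hd.deriv, Finset.sum_range_succ']
      simp only [Nat.cast_zero, zero_mul, mul_zero, add_zero, Nat.add_sub_cancel]
      have : ∀ k ∈ Finset.range (j + 1), c (k + 1) * (((k + 1 : ℕ) : ℂ) * t ^ k)
          = (((k + 1 : ℕ) : ℂ) * c (k + 1)) * t ^ k := fun k _ => by ring
      rw [Finset.sum_congr rfl this]
      ring
    rw [ih (v := fun t => (j + 2 : ℕ) * v t + t * deriv v t)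
      (c := fun k => (k + 1 : ℕ) * c (k + 1))
      ((analyticAt_const.fun_mul hv).fun_add (analyticAt_id.fun_mul hv.deriv)) h1,
      Nat.factorial_succ]
    push_cast
    ring

/-- Tschirnhaus normal form: after a shift `z ↦ z + h x'` the coefficient of `z ^ (m - 1)`
vanishes, where `m = j + 1` is the order in the first coordinate. -/
theorem tschirnhaus {j : ℕ} {f : (Fin (n + 1) → ℂ) → ℂ} (hf : AnalyticAt ℂ f 0)
    (ho : analyticOrderAt (fun t : ℂ => f (Fin.cons t 0)) 0 = (j + 1 : ℕ)) :
    ∃ (h : (Fin n → ℂ) → ℂ) (c : ℕ → (Fin n → ℂ) → ℂ) (u : (Fin (n + 1) → ℂ) → ℂ),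
      AnalyticAt ℂ h 0 ∧ h 0 = 0 ∧ (∀ k, AnalyticAt ℂ (c k) 0) ∧ (∀ k < j, c k 0 = 0) ∧
      AnalyticAt ℂ u 0 ∧ u 0 ≠ 0 ∧
      ∀ᶠ p in 𝓝 0, f (Fin.cons (p 0 + h (Fin.tail p)) (Fin.tail p)) =
        ∑ k ∈ Finset.range j, c k (Fin.tail p) * p 0 ^ k + p 0 ^ (j + 1) * u p := by
  -- `F (z, h, x') = f (z + h, x')`
  let F : (Fin (n + 2) → ℂ) → ℂ := fun p => f (Fin.cons (p 0 + p 1) (Fin.tail (Fin.tail p)))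
  have hF : AnalyticAt ℂ F 0 := by
    refine AnalyticAt.fun_comp (g := f) ?_ (analyticAt_cons
      ((analyticAt_coord 0 0).fun_add (analyticAt_coord 1 0))
      (AnalyticAt.fun_comp (g := Fin.tail) (analyticAt_tail _) (analyticAt_tail 0)))
    simp only [Pi.zero_apply, add_zero, tail_zero, cons_zero_zero]
    exact hf
  have hFo : analyticOrderAt (fun t : ℂ => F (Fin.cons t 0)) 0 = (j + 1 : ℕ) := by
    rw [← ho]
    congr 1
    funext t
    simp [F, tail_zero, Fin.tail_cons]
  obtain ⟨C, u, hC, hC0, hu, hu0, he⟩ := divide_many (j + 1) hF hFo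
  let f₀ : ℂ → ℂ := fun t => f (Fin.cons t 0)
  have hf₀ : AnalyticAt ℂ f₀ 0 := AnalyticAt.fun_comp (g := f) (by rw [cons_zero_zero]; exact hf)
    (analyticAt_cons analyticAt_id analyticAt_const)
  -- the last coefficient is a Taylor coefficient of `f₀`
  have hcoef : ∀ᶠ h in 𝓝 (0 : ℂ), iteratedDeriv j f₀ h = j.factorial * C j (Fin.cons h 0) := by
    have hc2 : ∀ᶠ h in 𝓝 (0 : ℂ), ∀ᶠ t in 𝓝 (0 : ℂ), (F (Fin.cons t (Fin.cons h 0)) =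
        ∑ k ∈ Finset.range (j + 1), C k (Fin.cons h 0) * t ^ k +
          t ^ (j + 1) * u (Fin.cons t (Fin.cons h 0))) ∧
        AnalyticAt ℂ u (Fin.cons t (Fin.cons h 0)) := by
      have hcont : Tendsto (fun q : ℂ × ℂ => (Fin.cons q.2 (Fin.cons q.1 0) : Fin (n + 2) → ℂ))
          (𝓝 (0, 0)) (𝓝 0) := by
        have : AnalyticAt ℂ (fun q : ℂ × ℂ => (Fin.cons q.2 (Fin.cons q.1 0) : Fin (n + 2) → ℂ))
            (0, 0) := analyticAt_cons analyticAt_snd (analyticAt_cons analyticAt_fst analyticAt_const)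
        simpa only [cons_zero_zero] using this.continuousAt.tendsto
      have := hcont.eventually (he.and hu.eventually_analyticAt)
      rw [nhds_prod_eq] at this
      refine this.curry.mono fun h hh => hh.mono fun t ht => ?_
      simpa using ht
    filter_upwards [hc2] with h hh
    have h1 : AnalyticAt ℂ (fun t : ℂ => u (Fin.cons t (Fin.cons h 0))) 0 :=
      AnalyticAt.fun_comp (g := u) hh.self_of_nhds.2 (analyticAt_cons analyticAt_id analyticAt_const)
    rw [← iteratedDeriv_of_expansion j (q := fun t => f₀ (t + h)) (c := fun k => C k (Fin.cons h 0))
      h1]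
    · rw [iteratedDeriv_comp_add_const]; simp
    · filter_upwards [hh] with t ht
      rw [← ht.1]
      simp [F, f₀, Fin.tail_cons]
  have hCj : AnalyticAt ℂ (fun h : ℂ => C j (Fin.cons h 0)) 0 :=
    AnalyticAt.fun_comp (g := C j) (by rw [cons_zero_zero]; exact hC j)
      (analyticAt_cons analyticAt_id analyticAt_const)
  have hder : deriv (fun h : ℂ => C j (Fin.cons h 0)) 0 ≠ 0 := by
    have h1 : iteratedDeriv (j + 1) f₀ 0 ≠ 0 :=
      ((analyticOrderAt_eq_nat_iff_iteratedDeriv_eq_zero hf₀).1 ho).2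
    rw [iteratedDeriv_succ, Filter.EventuallyEq.deriv_eq hcoef,
      deriv_const_mul _ hCj.differentiableAt] at h1
    exact right_ne_zero_of_mul h1
  let D : (Fin n → ℂ) × ℂ → ℂ := fun q => C j (Fin.cons q.2 q.1)
  have hD : AnalyticAt ℂ D (0, 0) := AnalyticAt.fun_comp (g := C j)
    (by simp only [cons_zero_zero]; exact hC j) (analyticAt_cons analyticAt_snd analyticAt_fst)
  have hDc : ContDiffAt ℂ ⊤ D (0, 0) := hD.contDiffAt
  have hinv : (fderiv ℂ D (0, 0) ∘L .inr ℂ (Fin n → ℂ) ℂ).IsInvertible := by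
    set A := fderiv ℂ D (0, 0) ∘L ContinuousLinearMap.inr ℂ (Fin n → ℂ) ℂ with hA
    have hA1 : A 1 = deriv (fun h : ℂ => C j (Fin.cons h 0)) 0 := by
      have h2 : HasDerivAt (fun h : ℂ => ((0 : Fin n → ℂ), h)) (0, 1) 0 :=
        (hasDerivAt_const _ _).prodMk (hasDerivAt_id 0)
      have h3 := hD.differentiableAt.hasFDerivAt.comp_hasDerivAt (0 : ℂ) h2
      rw [show (fun h : ℂ => C j (Fin.cons h 0)) = D ∘ fun h : ℂ => ((0 : Fin n → ℂ), h) from rfl,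
        h3.deriv]
      simp [hA]
    rw [← hA1] at hder
    refine ⟨ContinuousLinearEquiv.unitsEquivAut ℂ (Units.mk0 _ hder), ?_⟩
    ext
    simp
  refine ⟨hDc.implicitFunction (by simp) hinv, fun k x => C k (Fin.cons
    (hDc.implicitFunction (by simp) hinv x) x), fun p => u (Fin.cons (p 0) (Fin.cons
    (hDc.implicitFunction (by simp) hinv (Fin.tail p)) (Fin.tail p))), ?_⟩
  set h := hDc.implicitFunction (by simp) hinv with hh
  have hha : AnalyticAt ℂ h 0 := by
    have := hDc.contDiffAt_implicitFunction (by simp) hinv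
    exact this.analyticAt
  have hh0 : h 0 = 0 := hDc.implicitFunction_apply_self (by simp) hinv
  have hhD : ∀ᶠ x in 𝓝 0, C j (Fin.cons (h x) x) = 0 := by
    have h1 := hDc.eventually_apply_implicitFunction (by simp) hinv
    have h2 : D (0, 0) = 0 := by
      simp only [D, cons_zero_zero]; exact hC0 j (by omega)
    rw [h2] at h1
    exact h1
  have hconsh : AnalyticAt ℂ (fun x : Fin n → ℂ => (Fin.cons (h x) x : Fin (n + 1) → ℂ)) 0 :=
    analyticAt_cons hha analyticAt_id
  have hbig : AnalyticAt ℂ (fun p : Fin (n + 1) → ℂ => (Fin.cons (p 0) (Fin.cons (h (Fin.tail p))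
      (Fin.tail p)) : Fin (n + 2) → ℂ)) 0 :=
    analyticAt_cons (analyticAt_coord 0 0)
      (AnalyticAt.fun_comp (g := fun x : Fin n → ℂ => (Fin.cons (h x) x : Fin (n + 1) → ℂ))
        hconsh (analyticAt_tail 0))
  have hbig0 : (Fin.cons ((0 : Fin (n + 1) → ℂ) 0) (Fin.cons
      (h (Fin.tail (0 : Fin (n + 1) → ℂ))) (Fin.tail (0 : Fin (n + 1) → ℂ))) :
      Fin (n + 2) → ℂ) = 0 := by
    simp only [tail_zero, hh0, cons_zero_zero, Pi.zero_apply]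
  refine ⟨hha, hh0, fun k => ?_, fun k hk => ?_, ?_, ?_, ?_⟩
  · exact AnalyticAt.fun_comp (g := C k) (by rw [hh0, cons_zero_zero]; exact hC k) hconsh
  · simp only [hh0, cons_zero_zero]
    exact hC0 k (by omega)
  · exact AnalyticAt.fun_comp (g := u) (by rw [hbig0]; exact hu) hbig
  · simp only [hbig0]; exact hu0
  · have ht : Tendsto (fun p : Fin (n + 1) → ℂ => (Fin.cons (p 0) (Fin.cons (h (Fin.tail p))
        (Fin.tail p)) : Fin (n + 2) → ℂ)) (𝓝 0) (𝓝 0) := by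
      have := hbig.continuousAt.tendsto
      rwa [hbig0] at this
    filter_upwards [ht.eventually he, tail_tendsto.eventually hhD] with p h1 h2
    simp only [F, Fin.tail_cons, Fin.cons_zero] at h1
    rw [Finset.sum_range_succ, h2, zero_mul, add_zero] at h1
    rw [← h1]
    simp

end Weierstrass

/-! ### Local uniformization: preparation of the coefficients -/

section LU

variable {n : ℕ} {I : Type} {l : Ultrafilter I}

/-- Local uniformization along ultrafilters: a family `x → 0` lifts through an analytic map
making the nonzero germ `f` a monomial times a unit. -/
def LU (n : ℕ) : Prop := ∀ (f : (Fin n → ℂ) → ℂ), AnalyticAt ℂ f 0 → ¬ ZeroGerm f →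
  ∀ (I : Type) (l : Ultrafilter I) (x : I → Fin n → ℂ), Tendsto x l (𝓝 0) →
    ∃ (φ : (Fin n → ℂ) → (Fin n → ℂ)) (y : I → Fin n → ℂ),
      Reach l x φ y ∧ ∃ a, HasExp (fun p => f (φ p)) a

theorem HasExp.zero_ne {f : (Fin n → ℂ) → ℂ} (h : HasExp f 0) : f 0 ≠ 0 := by
  obtain ⟨u, -, hu0, he⟩ := h
  have := he.self_of_nhds
  simp at this
  rwa [this]

theorem analyticAt_comp_tail {E : Type*} [NormedAddCommGroup E] [NormedSpace ℂ E]
    {g : (Fin n → ℂ) → E} (hg : AnalyticAt ℂ g 0) :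
    AnalyticAt ℂ (fun p : Fin (n + 1) → ℂ => g (Fin.tail p)) 0 :=
  AnalyticAt.fun_comp (g := g) (by rw [tail_zero]; exact hg) (analyticAt_tail 0)

theorem HasExp.tail {g : (Fin n → ℂ) → ℂ} {a : Fin n → ℕ} (hg : HasExp g a) :
    HasExp (fun p : Fin (n + 1) → ℂ => g (Fin.tail p)) (Fin.cons 0 a) := by
  obtain ⟨u, hu, hu0, he⟩ := hg
  refine ⟨fun p => u (Fin.tail p), analyticAt_comp_tail hu, by simpa only [tail_zero] using hu0, ?_⟩
  filter_upwards [tail_tendsto.eventually he] with p hp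
  rw [hp, Fin.prod_univ_succ]
  simp [Fin.tail]

/-- A lift of the last `n` coordinates, with the first coordinate left unchanged. -/
theorem lift_reach {x : I → Fin (n + 1) → ℂ} {ψ : (Fin n → ℂ) → (Fin n → ℂ)} {y : I → Fin n → ℂ}
    (hx : Tendsto x l (𝓝 0)) (h : Reach l (fun i => Fin.tail (x i)) ψ y) :
    Reach l x (fun p => (Fin.cons (p 0) (ψ (Fin.tail p)) : Fin (n + 1) → ℂ))
      (fun i => Fin.cons (x i 0) (y i)) := by
  refine ⟨analyticAt_cons (analyticAt_coord 0 0) (analyticAt_comp_tail h.1), ?_, ?_, ?_⟩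
  · simp only [tail_zero, h.2.1, Pi.zero_apply, cons_zero_zero]
  · rw [tendsto_pi_nhds] at hx ⊢
    refine Fin.cases ?_ fun j => ?_
    · simpa using hx 0
    · simpa using tendsto_pi_nhds.1 h.2.2.1 j
  · filter_upwards [h.2.2.2] with i hi
    simp only [Fin.cons_zero, Fin.tail_cons, hi, Fin.cons_self_tail]

theorem tendsto_tail {x : I → Fin (n + 1) → ℂ} (hx : Tendsto x l (𝓝 0)) :
    Tendsto (fun i => Fin.tail (x i)) l (𝓝 0) := tail_tendsto.comp hx

theorem tendsto_fin_cons {a : I → ℂ} {b : I → Fin n → ℂ} (ha : Tendsto a l (𝓝 0))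
    (hb : Tendsto b l (𝓝 0)) :
    Tendsto (fun i => (Fin.cons (a i) (b i) : Fin (n + 1) → ℂ)) l (𝓝 0) := by
  rw [tendsto_pi_nhds] at hb ⊢
  refine Fin.cases ?_ fun j => ?_
  · simpa using ha
  · simpa using hb j

theorem Reach.analytic_comp {k : ℕ} {E : Type*} [NormedAddCommGroup E] [NormedSpace ℂ E]
    {x : I → Fin n → ℂ} {φ : (Fin k → ℂ) → (Fin n → ℂ)} {y : I → Fin k → ℂ} (h : Reach l x φ y)
    {g : (Fin n → ℂ) → E} (hg : AnalyticAt ℂ g 0) : AnalyticAt ℂ (fun p => g (φ p)) 0 :=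
  AnalyticAt.fun_comp (g := g) (by rw [h.2.1]; exact hg) h.1

/-- The terminal case: `f` is a power of the first coordinate times a unit, so that only the factor
`g`, in one variable less, has to be made monomial. -/
theorem lu_finish (hLU : LU n) {g : (Fin n → ℂ) → ℂ} (hg : AnalyticAt ℂ g 0) (hg0 : ¬ ZeroGerm g)
    {f u : (Fin (n + 1) → ℂ) → ℂ} (m : ℕ) (hu : AnalyticAt ℂ u 0) (hu0 : u 0 ≠ 0)
    (he : ∀ᶠ p in 𝓝 0, f p = p 0 ^ m * u p) {x : I → Fin (n + 1) → ℂ} (hx : Tendsto x l (𝓝 0)) :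
    ∃ (φ : (Fin (n + 1) → ℂ) → (Fin (n + 1) → ℂ)) (y : I → Fin (n + 1) → ℂ),
      Reach l x φ y ∧ ∃ a, HasExp (fun p => g (Fin.tail (φ p)) * f (φ p)) a := by
  obtain ⟨ψ, y, hψ, a, ha⟩ := hLU g hg hg0 I l _ (tendsto_tail hx)
  have hl := lift_reach hx hψ
  refine ⟨_, _, hl, _, HasExp.congr (ha.tail.mul (((HasExp.coord 0).pow m).mul
    (HasExp.unit (f := fun p => u (Fin.cons (p 0) (ψ (Fin.tail p))))
      (hl.analytic_comp hu) ?_))) ?_⟩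
  · have := hl.2.1
    simp only [this]; exact hu0
  · filter_upwards [hl.tendsto.eventually he] with p hp
    rw [hp]; simp

/-- The coefficients `c k` become monomials with exponents `a k` such that the minimum `γ` of
`a k / (m - k)` exists and is integral: uniformize the product of `g` and all `c k`, compare the
monomials `c k ^ (m! / (m - k))` by toric blow-ups, and ramify to order `m!`. -/
theorem lu_prep (hLU : LU n) {g : (Fin n → ℂ) → ℂ} (hg : AnalyticAt ℂ g 0) (hg0 : ¬ ZeroGerm g)
    {m : ℕ} {K : Finset ℕ} (hK : K.Nonempty) (hKm : ∀ k ∈ K, k < m) {c : ℕ → (Fin n → ℂ) → ℂ}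
    (hc : ∀ k, AnalyticAt ℂ (c k) 0) (hc0 : ∀ k ∈ K, c k 0 = 0) (hcz : ∀ k ∈ K, ¬ ZeroGerm (c k))
    {x : I → Fin n → ℂ} (hx : Tendsto x l (𝓝 0)) :
    ∃ (ψ : (Fin n → ℂ) → (Fin n → ℂ)) (y : I → Fin n → ℂ), Reach l x ψ y ∧ (∃ e, HasExp (fun p => g (ψ p)) e) ∧
      ∃ (γ : Fin n → ℕ) (a : ℕ → Fin n → ℕ), γ ≠ 0 ∧ (∀ k ∈ K, HasExp (fun p => c k (ψ p)) (a k)) ∧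
        (∀ k ∈ K, (m - k) • γ ≤ a k) ∧ ∃ k₀ ∈ K, a k₀ = (m - k₀) • γ := by
  obtain ⟨ψ, y, hψ, a, ha⟩ := hLU (fun p => g p * ∏ k ∈ K, c k p)
    (hg.fun_mul (Finset.analyticAt_fun_prod _ fun k _ => hc k))
    (not_zeroGerm_mul hg (Finset.analyticAt_fun_prod _ fun k _ => hc k) hg0
      (not_zeroGerm_prod K (fun k _ => hc k) hcz)) I l x hx
  have hcψ : ∀ k, AnalyticAt ℂ (fun p => c k (ψ p)) 0 := fun k =>
    AnalyticAt.fun_comp (g := c k) (by rw [hψ.2.1]; exact hc k) hψ.1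
  have hgψ : AnalyticAt ℂ (fun p => g (ψ p)) 0 :=
    AnalyticAt.fun_comp (g := g) (by rw [hψ.2.1]; exact hg) hψ.1
  obtain ⟨⟨e, hge⟩, ⟨e', hce⟩⟩ := HasExp.factor hgψ
    (Finset.analyticAt_fun_prod _ fun k _ => hcψ k) ha
  have hex := HasExp.factor_prod K (fun k _ => hcψ k) hce
  choose! b hb using hex
  obtain ⟨φ, T, y₂, hφ, k₀, hk₀, hmin⟩ := toric_family K hK
    (fun k => (m.factorial / (m - k)) • b k) hψ.2.2.1
  obtain ⟨ρ, y₃, hρ⟩ := power_reach (l := l) (M := m.factorial) m.factorial_ne_zero hφ.1.2.2.1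
  have hcomp := hφ.comp hρ
  have hexp : ∀ k ∈ K, HasExp (fun p => c k (ψ (φ (ρ p)))) (m.factorial • vm (b k) T) := by
    intro k hk
    have := (hb k hk).comp_reach hcomp
    rwa [vm_vm, vm_power] at this
  have hdvd : ∀ k ∈ K, (m - k) * (m.factorial / (m - k)) = m.factorial := fun k hk =>
    Nat.mul_div_cancel' (Nat.dvd_factorial (Nat.sub_pos_of_lt (hKm k hk)) (Nat.sub_le _ _))
  have heq : ∀ k ∈ K, (m - k) • vm ((m.factorial / (m - k)) • b k) T
      = m.factorial • vm (b k) T := fun k hk => by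
    rw [vm_smul, smul_smul, hdvd k hk]
  refine ⟨_, _, hψ.comp hcomp.1, ⟨_, hge.comp_reach hcomp⟩,
    vm ((m.factorial / (m - k₀)) • b k₀) T, fun k => m.factorial • vm (b k) T, ?_, hexp, ?_, k₀, hk₀,
    (heq k₀ hk₀).symm⟩
  · intro h0
    have h1 := (hexp k₀ hk₀).ne_zero (by
      have := (hψ.comp hcomp.1).2.1
      simp only at this
      rw [this]; exact hc0 k₀ hk₀)
    rw [← heq k₀ hk₀, h0, smul_zero] at h1
    exact h1 rfl
  · intro k hk
    simp only [← heq k hk]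
    exact smul_le_smul_of_nonneg_left (hmin k hk) (Nat.zero_le _)

end LU

/-! ### Local uniformization: descent on the order -/

section LU2

variable {n : ℕ} {I : Type} {l : Ultrafilter I}

/-- A polynomial that is `O(t ^ m)` at `0` is divisible by `X ^ m`. -/
theorem poly_dvd (m : ℕ) : ∀ {Q : Polynomial ℂ} {g : ℂ → ℂ}, ContinuousAt g 0 →
    (∀ᶠ t in 𝓝[≠] 0, Q.eval t = t ^ m * g t) → Polynomial.X ^ m ∣ Q := by
  induction m with
  | zero => intros; simp
  | succ m ih =>
    intro Q g hg he
    have h0 : Q.eval 0 = 0 := by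
      have h1 : Tendsto (fun t => Q.eval t) (𝓝[≠] (0 : ℂ)) (𝓝 (Q.eval 0)) :=
        (Q.continuous.tendsto 0).mono_left nhdsWithin_le_nhds
      have h2 : Tendsto (fun t => t ^ (m + 1) * g t) (𝓝[≠] (0 : ℂ)) (𝓝 (0 ^ (m + 1) * g 0)) :=
        (((continuous_pow (m + 1)).tendsto (0 : ℂ)).mul hg.tendsto).mono_left nhdsWithin_le_nhds
      have := tendsto_nhds_unique (h1.congr' he) h2
      simpa using this
    obtain ⟨R, hR⟩ := (Polynomial.X_dvd_iff (f := Q)).2 (by rwa [Polynomial.coeff_zero_eq_eval_zero])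
    rw [hR, pow_succ']
    refine mul_dvd_mul_left _ (ih hg ?_)
    filter_upwards [he, self_mem_nhdsWithin] with t ht htn
    rw [hR, Polynomial.eval_mul, Polynomial.eval_X, pow_succ', mul_assoc] at ht
    exact mul_left_cancel₀ htn ht

/-- A polynomial of degree `m = j + 1` without term of degree `j` and with a nonzero lower
coefficient vanishes to order less than `m` at every point. -/
theorem tschirnhaus_order {j : ℕ} {c : ℕ → ℂ} {k₀ : ℕ} (hk₀ : k₀ < j) (hc : c k₀ ≠ 0) {u ζ : ℂ}
    (hu : u ≠ 0) {q : ℂ → ℂ} (hq : AnalyticAt ℂ q 0)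
    (he : ∀ t, q t = ∑ k ∈ Finset.range j, c k * (t + ζ) ^ k + (t + ζ) ^ (j + 1) * u) :
    ∃ m < j + 1, analyticOrderAt q 0 = m := by
  by_contra! hcon
  have hle : ((j + 1 : ℕ) : ℕ∞) ≤ analyticOrderAt q 0 := by
    by_contra! hlt
    obtain ⟨m, hm⟩ := ENat.ne_top_iff_exists.1 (ne_top_of_lt hlt)
    rw [← hm] at hlt
    exact hcon m (by exact_mod_cast hlt) hm.symm
  obtain ⟨g, hg, hge⟩ := (natCast_le_analyticOrderAt hq).1 hle
  set P : Polynomial ℂ := ∑ k ∈ Finset.range j, Polynomial.C (c k) * Polynomial.X ^ k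
    + Polynomial.C u * Polynomial.X ^ (j + 1) with hP
  have hPc : ∀ i, P.coeff i = (if i < j then c i else 0) + if i = j + 1 then u else 0 := by
    intro i
    simp [hP, Polynomial.coeff_X_pow]
  have hPq : ∀ t, (P.comp (Polynomial.X + Polynomial.C ζ)).eval t = q t := by
    intro t
    rw [he]
    simp [hP, Polynomial.eval_finsetSum]
    ring
  have hdvd := poly_dvd (j + 1) (Q := P.comp (Polynomial.X + Polynomial.C ζ)) hg.continuousAt (by
    refine Filter.Eventually.filter_mono nhdsWithin_le_nhds ?_
    filter_upwards [hge] with t ht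
    rw [hPq, ht]; simp)
  obtain ⟨R, hR⟩ := hdvd
  have hP2 : P = (Polynomial.X - Polynomial.C ζ) ^ (j + 1) *
      R.comp (Polynomial.X - Polynomial.C ζ) := by
    have := congrArg (fun S : Polynomial ℂ => S.comp (Polynomial.X - Polynomial.C ζ)) hR
    simp only [Polynomial.comp_assoc, Polynomial.add_comp, Polynomial.X_comp, Polynomial.C_comp,
      sub_add_cancel, Polynomial.comp_X, Polynomial.mul_comp, Polynomial.pow_comp] at this
    exact this
  have hPdeg : P.natDegree ≤ j + 1 := by
    rw [Polynomial.natDegree_le_iff_coeff_eq_zero]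
    intro i hi
    rw [hPc, if_neg (by omega), if_neg (by omega), add_zero]
  have hP0 : P ≠ 0 := by
    intro h0
    have := hPc (j + 1)
    rw [h0] at this
    simp at this
    exact hu this.symm
  set S := R.comp (Polynomial.X - Polynomial.C ζ) with hS
  have hS0 : S ≠ 0 := by
    rintro h; rw [h, mul_zero] at hP2; exact hP0 hP2
  have hSd : S.natDegree = 0 := by
    have h1 := hPdeg
    rw [hP2, Polynomial.natDegree_mul (pow_ne_zero _ (Polynomial.X_sub_C_ne_zero ζ)) hS0,
      Polynomial.natDegree_pow, Polynomial.natDegree_X_sub_C] at h1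
    omega
  rw [Polynomial.eq_C_of_natDegree_eq_zero hSd] at hP2
  set r := S.coeff 0
  have hco : ∀ i, P.coeff i = (-ζ) ^ (j + 1 - i) * ((j + 1).choose i : ℂ) * r := by
    intro i
    rw [hP2, Polynomial.coeff_mul_C, sub_eq_add_neg, ← Polynomial.C_neg,
      Polynomial.coeff_X_add_C_pow]
  have hr : r ≠ 0 := by
    intro h; rw [h] at hP2; simp at hP2; exact hP0 hP2
  have hζ : ζ = 0 := by
    have h1 := hco j
    rw [hPc, if_neg (by omega), if_neg (by omega), add_zero, Nat.add_sub_cancel_left] at h1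
    have h2 : (((j + 1).choose j : ℕ) : ℂ) ≠ 0 := by
      rw [Nat.choose_succ_self_right]; exact_mod_cast Nat.succ_ne_zero j
    have h3 := ((mul_eq_zero.1 h1.symm).resolve_right hr)
    simpa using (mul_eq_zero.1 h3).resolve_right h2
  have h1 := hco k₀
  rw [hPc, if_pos hk₀, if_neg (by omega), add_zero, hζ, neg_zero, zero_pow (by omega)] at h1
  simp at h1
  exact hc h1

theorem monomial_zero {γ : Fin n → ℕ} (hγ : γ ≠ 0) : ∏ i, (0 : Fin n → ℂ) i ^ γ i = 0 := by
  obtain ⟨i, hi⟩ := Function.ne_iff.1 hγ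
  exact Finset.prod_eq_zero (Finset.mem_univ i) (by simpa using hi)

theorem hasExp_monomial (γ : Fin n → ℕ) : HasExp (fun y : Fin n → ℂ => ∏ i, y i ^ γ i) γ :=
  ⟨fun _ => 1, analyticAt_const, one_ne_zero, .of_forall fun _ => by simp⟩

/-- Reduction step when `z` is dominated by `t ^ γ`: substitute `z = t ^ γ (z' + ζ)`, with `ζ` the
limit of `z / t ^ γ`. The factor `t ^ (γ (j + 1))` splits off, and the cofactor has smaller order in
the first coordinate by `tschirnhaus_order`. -/
theorem lu_caseA {j : ℕ} {γ : Fin n → ℕ} (hγ : γ ≠ 0) {C : ℕ → (Fin n → ℂ) → ℂ}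
    {F u : (Fin (n + 1) → ℂ) → ℂ} (hC : ∀ k, AnalyticAt ℂ (C k) 0) {k₀ : ℕ} (hk₀ : k₀ < j)
    (hCk : C k₀ 0 ≠ 0) (hu : AnalyticAt ℂ u 0) (hu0 : u 0 ≠ 0)
    (he : ∀ᶠ p in 𝓝 0, F p = ∑ k ∈ Finset.range j, (∏ i, Fin.tail p i ^ γ i) ^ (j + 1 - k) *
      C k (Fin.tail p) * p 0 ^ k + p 0 ^ (j + 1) * u p)
    {y : I → Fin (n + 1) → ℂ} (hy : Tendsto y l (𝓝 0)) {B : ℝ}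
    (hB : ∀ᶠ i in (l : Filter I), ‖y i 0‖ ≤ B * ‖∏ k, Fin.tail (y i) k ^ γ k‖) :
    ∃ (φ : (Fin (n + 1) → ℂ) → (Fin (n + 1) → ℂ)) (z : I → Fin (n + 1) → ℂ)
      (f : (Fin (n + 1) → ℂ) → ℂ), Reach l y φ z ∧ AnalyticAt ℂ f 0 ∧
      (∀ p, Fin.tail (φ p) = Fin.tail p) ∧
      (∃ m < j + 1, analyticOrderAt (fun t : ℂ => f (Fin.cons t 0)) 0 = m) ∧
      ∀ᶠ p in 𝓝 0, F (φ p) = (∏ i, Fin.tail p i ^ γ i) ^ (j + 1) * f p := by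
  set τ : (Fin n → ℂ) → ℂ := fun p => ∏ i, p i ^ γ i with hτ
  have hτa : AnalyticAt ℂ τ 0 := analyticAt_monomial γ 0
  have hτ0 : τ 0 = 0 := monomial_zero hγ
  have hdiv : ∀ᶠ i in (l : Filter I), y i 0 = τ (Fin.tail (y i)) * (y i 0 / τ (Fin.tail (y i))) := by
    filter_upwards [hB] with i hi
    by_cases h0 : τ (Fin.tail (y i)) = 0
    · have : ‖∏ k, Fin.tail (y i) k ^ γ k‖ = 0 := by rw [norm_eq_zero]; exact h0
      rw [this, mul_zero] at hi
      rw [h0, zero_mul]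
      exact norm_le_zero_iff.1 hi
    · rw [mul_div_cancel₀ _ h0]
  obtain ⟨ζ, hζ⟩ : ∃ ζ, Tendsto (fun i => y i 0 / τ (Fin.tail (y i))) l (𝓝 ζ) := by
    refine exists_limit (C := max B 0) ?_
    filter_upwards [hB] with i hi
    rw [norm_div]
    by_cases h0 : τ (Fin.tail (y i)) = 0
    · simp [h0]
    · exact (div_le_of_le_mul₀ (norm_nonneg _) (le_max_right _ _)
        (hi.trans (mul_le_mul_of_nonneg_right (le_max_left _ _) (norm_nonneg _))))
  let φ : (Fin (n + 1) → ℂ) → (Fin (n + 1) → ℂ) := fun p =>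
    Fin.cons (τ (Fin.tail p) * (p 0 + ζ)) (Fin.tail p)
  have hφa : AnalyticAt ℂ φ 0 := analyticAt_cons ((analyticAt_comp_tail hτa).fun_mul
    ((analyticAt_coord 0 0).fun_add analyticAt_const)) (analyticAt_tail 0)
  have hφaxis : ∀ t : ℂ, φ (Fin.cons t 0) = 0 := fun t => by
    simp only [φ, Fin.tail_cons, hτ0, zero_mul, cons_zero_zero]
  have hφ0 : φ 0 = 0 := by
    have := hφaxis 0
    rwa [cons_zero_zero] at this
  have hR : Reach l y φ (fun i => Fin.cons (y i 0 / τ (Fin.tail (y i)) - ζ) (Fin.tail (y i))) := by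
    refine ⟨hφa, hφ0, tendsto_fin_cons ?_ (tendsto_tail hy), ?_⟩
    · simpa using hζ.sub_const ζ
    · filter_upwards [hdiv] with i hi
      simp only [φ, Fin.tail_cons, Fin.cons_zero, sub_add_cancel, ← hi, Fin.cons_self_tail]
  let f : (Fin (n + 1) → ℂ) → ℂ := fun p =>
    ∑ k ∈ Finset.range j, C k (Fin.tail p) * (p 0 + ζ) ^ k + (p 0 + ζ) ^ (j + 1) * u (φ p)
  have hfa : AnalyticAt ℂ f 0 := by
    refine AnalyticAt.fun_add (Finset.analyticAt_fun_sum _ fun k _ => ?_) ?_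
    · exact (analyticAt_comp_tail (hC k)).fun_mul
        (((analyticAt_coord 0 0).fun_add analyticAt_const).fun_pow k)
    · exact (((analyticAt_coord 0 0).fun_add analyticAt_const).fun_pow _).fun_mul
        (hR.analytic_comp hu)
  refine ⟨φ, _, f, hR, hfa, fun p => by simp [φ], ?_, ?_⟩
  · refine tschirnhaus_order (c := fun k => C k 0) hk₀ hCk (u := u 0) (ζ := ζ) hu0 ?_ fun t => ?_
    · exact AnalyticAt.fun_comp (g := f) (by rw [cons_zero_zero]; exact hfa)
        (analyticAt_cons analyticAt_id analyticAt_const)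
    · simp only [f, hφaxis, Fin.tail_cons, Fin.cons_zero]
  · filter_upwards [hR.tendsto.eventually he] with p hp
    rw [hp]
    simp only [φ, f, Fin.tail_cons, Fin.cons_zero, mul_add, Finset.mul_sum]
    change ∑ k ∈ Finset.range j, τ (Fin.tail p) ^ (j + 1 - k) * C k (Fin.tail p) * _ + _ = _
    congr 1
    · refine Finset.sum_congr rfl fun k hk => ?_
      have : j + 1 = (j + 1 - k) + k := by have := Finset.mem_range.1 hk; omega
      conv_rhs => rw [show (∏ i, Fin.tail p i ^ γ i) = τ (Fin.tail p) from rfl, this]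
      rw [← mul_add, mul_pow, pow_add]
      ring
    · rw [← mul_add, mul_pow, mul_assoc]

/-- The case where `t ^ γ` is negligible against `z`: then `F` is `z ^ m` times a unit. -/
theorem lu_caseB {j : ℕ} {γ : Fin n → ℕ} {C : ℕ → (Fin n → ℂ) → ℂ}
    {F u : (Fin (n + 1) → ℂ) → ℂ} (hC : ∀ k, AnalyticAt ℂ (C k) 0)
    (hu : AnalyticAt ℂ u 0) (hu0 : u 0 ≠ 0)
    (he : ∀ᶠ p in 𝓝 0, F p = ∑ k ∈ Finset.range j, (∏ i, Fin.tail p i ^ γ i) ^ (j + 1 - k) *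
      C k (Fin.tail p) * p 0 ^ k + p 0 ^ (j + 1) * u p)
    {G : (Fin n → ℂ) → ℂ} {e : Fin n → ℕ} (hG : HasExp G e)
    {y : I → Fin (n + 1) → ℂ} (hy : Tendsto y l (𝓝 0))
    (hB : ∀ B : ℝ, ¬ ∀ᶠ i in (l : Filter I), ‖y i 0‖ ≤ B * ‖∏ k, Fin.tail (y i) k ^ γ k‖) :
    ∃ (φ : (Fin (n + 1) → ℂ) → (Fin (n + 1) → ℂ)) (z : I → Fin (n + 1) → ℂ),
      Reach l y φ z ∧ ∃ a, HasExp (fun p => G (Fin.tail (φ p)) * F (φ p)) a := by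
  set τ : (Fin n → ℂ) → ℂ := fun p => ∏ i, p i ^ γ i with hτ
  obtain ⟨φ, T, z, hR, hcase⟩ := toric (l := l) (Pi.single 0 1 : Fin (n + 1) → ℕ) (Fin.cons 0 γ) hy
  have hz := (HasExp.coord (0 : Fin (n + 1))).comp_reach hR
  have ht := (hasExp_monomial γ).tail.comp_reach hR
  -- `t ^ γ` does not divide `z` after pulling back: a bound of `z` by `t ^ γ` is excluded
  have hex : ¬ ∃ ρ : (Fin (n + 1) → ℂ) → ℂ, AnalyticAt ℂ ρ 0 ∧
      ∀ᶠ p in 𝓝 0, φ p 0 = τ (Fin.tail (φ p)) * ρ p := by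
    rintro ⟨ρ, hρ, hρe⟩
    refine hB (‖ρ 0‖ + 1) ?_
    have h1 : ∀ᶠ p in 𝓝 0, ‖ρ p‖ < ‖ρ 0‖ + 1 :=
      hρ.continuousAt.norm.eventually_lt_const (lt_add_one _)
    filter_upwards [hR.1.2.2.1.eventually (hρe.and h1), hR.1.2.2.2] with i hi hi2
    rw [← hi2, hi.1, norm_mul, mul_comm]
    exact mul_le_mul_of_nonneg_right hi.2.le (norm_nonneg _)
  rcases hcase with h | h
  · obtain ⟨ρ, hρ, hρx, hρe⟩ := hz.div ht h
    have hρ0 : ρ 0 = 0 := by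
      by_contra hne
      refine hex ⟨fun p => (ρ p)⁻¹, hρ.inv hne, ?_⟩
      filter_upwards [hρe, hρ.continuousAt.eventually_ne hne] with p hp hp0
      rw [show τ (Fin.tail (φ p)) = φ p 0 * ρ p from hp, mul_inv_cancel_right₀ hp0]
    let v : (Fin (n + 1) → ℂ) → ℂ := fun p => ∑ k ∈ Finset.range j, ρ p ^ (j + 1 - k) *
      C k (Fin.tail (φ p)) + u (φ p)
    have hv : AnalyticAt ℂ v 0 := by
      refine AnalyticAt.fun_add (Finset.analyticAt_fun_sum _ fun k _ => ?_) (hR.1.analytic_comp hu)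
      exact (hρ.fun_pow _).fun_mul (hR.1.analytic_comp (analyticAt_comp_tail (hC k)))
    have hv0 : v 0 ≠ 0 := by
      simp only [v, hρ0, hR.1.2.1]
      rw [Finset.sum_eq_zero, zero_add]
      · exact hu0
      · intro k hk
        rw [zero_pow (by have := Finset.mem_range.1 hk; omega), zero_mul]
    refine ⟨φ, z, hR.1, _, (((hG.tail.comp_reach hR).mul ((hz.pow (j + 1)).mul
      (HasExp.unit hv hv0)))).congr ?_⟩
    filter_upwards [hρe, hR.1.tendsto.eventually he] with p hp hp2
    rw [hp2]
    congr 1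
    have hp' : ∏ i, Fin.tail (φ p) i ^ γ i = φ p 0 * ρ p := hp
    simp only [v, mul_add, Finset.mul_sum, hp']
    congr 1
    refine Finset.sum_congr rfl fun k hk => ?_
    have : j + 1 = (j + 1 - k) + k := by have := Finset.mem_range.1 hk; omega
    conv_rhs => rw [this]
    rw [pow_add, mul_pow, Nat.add_sub_cancel]
    ring
  · obtain ⟨ρ, hρ, -, hρe⟩ := ht.div hz h
    exact absurd ⟨ρ, hρ, hρe⟩ hex

/-- Uniformization of `g (tail p) * f p` for `f` of finite order `m` along the first axis, by
induction on `m`. In Tschirnhaus form with prepared coefficients, `z` is either dominated by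
`t ^ γ`, and then `z = t ^ γ (z' + ζ)` lowers the order (`lu_caseA`), or dominates it
(`lu_caseB`). The factor `g` absorbs the monomials split off on the way. -/
theorem lu_step (hLU : LU n) (m : ℕ) : ∀ {g : (Fin n → ℂ) → ℂ}, AnalyticAt ℂ g 0 → ¬ ZeroGerm g →
    ∀ {f : (Fin (n + 1) → ℂ) → ℂ}, AnalyticAt ℂ f 0 →
    analyticOrderAt (fun t : ℂ => f (Fin.cons t 0)) 0 = m →
    ∀ {I : Type} {l : Ultrafilter I} {x : I → Fin (n + 1) → ℂ}, Tendsto x l (𝓝 0) →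
    ∃ (φ : (Fin (n + 1) → ℂ) → (Fin (n + 1) → ℂ)) (y : I → Fin (n + 1) → ℂ),
      Reach l x φ y ∧ ∃ a, HasExp (fun p => g (Fin.tail (φ p)) * f (φ p)) a := by
  induction m using Nat.strong_induction_on with
  | _ m ih =>
  intro g hg hg0 f hf ho I l x hx
  cases m with
  | zero =>
    obtain ⟨c, u, -, -, hu, hu0, he⟩ := divide_many 0 hf ho
    exact lu_finish hLU hg hg0 0 hu hu0 (by simpa using he) hx
  | succ j =>
    classical
    obtain ⟨h, c, u, hh, hh0, hc, hc0, hu, hu0, he⟩ := tschirnhaus hf ho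
    let σ : (Fin (n + 1) → ℂ) → (Fin (n + 1) → ℂ) := fun p =>
      Fin.cons (p 0 + h (Fin.tail p)) (Fin.tail p)
    have hσ : Reach l x σ (fun i => Fin.cons (x i 0 - h (Fin.tail (x i))) (Fin.tail (x i))) := by
      refine ⟨analyticAt_cons ((analyticAt_coord 0 0).fun_add (analyticAt_comp_tail hh))
        (analyticAt_tail 0), ?_, tendsto_fin_cons ?_ (tendsto_tail hx), .of_forall fun i => ?_⟩
      · simp only [σ, tail_zero, hh0, Pi.zero_apply, add_zero, cons_zero_zero]
      · have h1 : Tendsto h (𝓝 0) (𝓝 0) := by simpa [hh0] using hh.continuousAt.tendsto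
        simpa using ((tendsto_pi_nhds.1 hx) 0).sub (h1.comp (tendsto_tail hx))
      · simp only [σ, Fin.tail_cons, Fin.cons_zero, sub_add_cancel, Fin.cons_self_tail]
    set K : Finset ℕ := (Finset.range j).filter fun k => ¬ ZeroGerm (c k) with hKdef
    rcases K.eq_empty_or_nonempty with hK | hK
    · have hz : ∀ k ∈ Finset.range j, ZeroGerm (c k) := by
        intro k hk
        by_contra hne
        have : k ∈ K := Finset.mem_filter.2 ⟨hk, hne⟩
        simp [hK] at this
      have hz' : ∀ᶠ p in 𝓝 (0 : Fin n → ℂ), ∀ k ∈ Finset.range j, c k p = 0 :=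
        (Finset.eventually_all _).2 hz
      obtain ⟨φ, y, hφ, a, ha⟩ := lu_finish hLU hg hg0 (f := fun p => f (σ p)) (j + 1) hu hu0 (by
        filter_upwards [he, tail_tendsto.eventually hz'] with p hp hp2
        simp only [σ]
        rw [hp, Finset.sum_eq_zero, zero_add]
        intro k hk
        rw [hp2 k hk, zero_mul]) hσ.2.2.1
      exact ⟨_, _, hσ.comp hφ, a, ha.congr (.of_forall fun p => by simp [σ])⟩
    · obtain ⟨ψ, y', hψ, ⟨e, hge⟩, γ, a, hγ, hca, hγa, k₀, hk₀, hak₀⟩ := lu_prep hLU hg hg0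
        (m := j + 1) hK (fun k hk => by
          have := Finset.mem_range.1 (Finset.mem_filter.1 hk).1; omega) hc
        (fun k hk => hc0 k (Finset.mem_range.1 (Finset.mem_filter.1 hk).1))
        (fun k hk => (Finset.mem_filter.1 hk).2) (tendsto_tail hσ.2.2.1)
      have hl := lift_reach hσ.2.2.1 hψ
      have hdiv : ∀ k, ∃ C : (Fin n → ℂ) → ℂ, AnalyticAt ℂ C 0 ∧ (k = k₀ → C 0 ≠ 0) ∧
          (k < j → ∀ᶠ p in 𝓝 0, c k (ψ p) = (∏ i, p i ^ γ i) ^ (j + 1 - k) * C p) := by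
        intro k
        by_cases hk : k ∈ K
        · obtain ⟨ρ, hρ, hρx, hρe⟩ := ((hasExp_monomial γ).pow (j + 1 - k)).div (hca k hk)
            (hγa k hk)
          refine ⟨ρ, hρ, ?_, fun _ => hρe⟩
          rintro rfl
          rw [hak₀, tsub_self] at hρx
          exact hρx.zero_ne
        · refine ⟨fun _ => 0, analyticAt_const, fun h' => absurd (h' ▸ hk₀) hk, fun hkj => ?_⟩
          have hz : ZeroGerm (c k) := by
            by_contra hne
            exact hk (Finset.mem_filter.2 ⟨Finset.mem_range.2 hkj, hne⟩)
          filter_upwards [hψ.tendsto.eventually hz] with p hp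
          rw [hp, mul_zero]
      choose C hC hCk₀ hCe using hdiv
      have hCe' : ∀ᶠ p in 𝓝 (0 : Fin n → ℂ), ∀ k ∈ Finset.range j,
          c k (ψ p) = (∏ i, p i ^ γ i) ^ (j + 1 - k) * C k p :=
        (Finset.eventually_all _).2 fun k hk => hCe k (Finset.mem_range.1 hk)
      let φ : (Fin (n + 1) → ℂ) → (Fin (n + 1) → ℂ) := fun p =>
        σ (Fin.cons (p 0) (ψ (Fin.tail p)))
      have hφ : Reach l x φ _ := hσ.comp hl
      have hφt : ∀ p, Fin.tail (φ p) = ψ (Fin.tail p) := fun p => by simp [φ, σ]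
      have hnf : ∀ᶠ p in 𝓝 0, f (φ p) = ∑ k ∈ Finset.range j,
          (∏ i, Fin.tail p i ^ γ i) ^ (j + 1 - k) * C k (Fin.tail p) * p 0 ^ k
            + p 0 ^ (j + 1) * u (Fin.cons (p 0) (ψ (Fin.tail p))) := by
        filter_upwards [hl.tendsto.eventually he, tail_tendsto.eventually hCe'] with p hp hp2
        simp only [φ, σ]
        rw [hp]
        simp only [Fin.cons_zero, Fin.tail_cons]
        congr 1
        exact Finset.sum_congr rfl fun k hk => by rw [hp2 k hk]
      have hu' := hl.analytic_comp hu
      have hu0' : u (Fin.cons ((0 : Fin (n + 1) → ℂ) 0) (ψ (Fin.tail (0 : Fin (n + 1) → ℂ)))) ≠ 0 := by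
        have := hl.2.1
        simp only [this]
        exact hu0
      by_cases hB : ∃ B : ℝ, ∀ᶠ i in (l : Filter I),
          ‖(Fin.cons ((Fin.cons (x i 0 - h (Fin.tail (x i))) (Fin.tail (x i)) : Fin (n + 1) → ℂ) 0)
            (y' i) : Fin (n + 1) → ℂ) 0‖ ≤ B * ‖∏ k, Fin.tail (Fin.cons
              ((Fin.cons (x i 0 - h (Fin.tail (x i))) (Fin.tail (x i)) : Fin (n + 1) → ℂ) 0)
            (y' i) : Fin (n + 1) → ℂ) k ^ γ k‖
      · obtain ⟨B, hB⟩ := hB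
        obtain ⟨φ₂, z, f₃, hφ₂, hf₃, hφ₂t, ⟨m', hm', ho'⟩, he₃⟩ := lu_caseA hγ hC
          (Finset.mem_range.1 (Finset.mem_filter.1 hk₀).1) (hCk₀ k₀ rfl) hu' hu0' hnf
          hφ.2.2.1 hB
        have hG := hge.mul ((hasExp_monomial γ).pow (j + 1))
        obtain ⟨φ₃, w, hφ₃, a', ha'⟩ := ih m' hm' hG.analyticAt hG.not_zeroGerm hf₃ ho' hφ₂.2.2.1
        refine ⟨_, _, hφ.comp (hφ₂.comp hφ₃), a', ha'.congr ?_⟩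
        filter_upwards [hφ₃.tendsto.eventually he₃] with p hp
        rw [hp, hφt, hφ₂t]
        ring
      · obtain ⟨φ₂, z, hφ₂, a', ha'⟩ := lu_caseB hC hu' hu0' hnf hge hφ.2.2.1 (not_exists.1 hB)
        refine ⟨_, _, hφ.comp hφ₂, a', ha'.congr (.of_forall fun p => ?_)⟩
        rw [hφt]

theorem lu_zero : LU 0 := by
  intro f hf hf0 I l x hx
  refine ⟨_, _, Reach.refl hx, 0, HasExp.unit hf fun h0 => hf0 ?_⟩
  exact .of_forall fun y => by rw [Subsingleton.elim y 0, h0]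

/-- A linear change of coordinates makes `f` of finite order along the first axis, so `lu_step`
applies. -/
theorem lu_succ (hLU : LU n) : LU (n + 1) := by
  intro f hf hf0 I l x hx
  by_cases hf00 : f 0 = 0
  swap
  · exact ⟨_, _, Reach.refl hx, 0, HasExp.unit hf hf00⟩
  obtain ⟨r, hr, hball⟩ := Metric.eventually_nhds_iff_ball.1 hf.eventually_analyticAt
  obtain ⟨v, hv, hfv⟩ : ∃ v ∈ ball (0 : Fin (n + 1) → ℂ) r, f v ≠ 0 := by
    by_contra! hcon
    exact hf0 (Filter.mem_of_superset (ball_mem_nhds 0 hr) hcon)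
  have hv0 : v ≠ 0 := by rintro rfl; exact hfv hf00
  have he0 : (Fin.cons 1 0 : Fin (n + 1) → ℂ) ≠ 0 := fun h => by
    have := congrFun h 0
    simp at this
  obtain ⟨A, hA⟩ := SeparatingDual.exists_continuousLinearEquiv_apply_eq (R := ℂ) he0 hv0
  have hR : Reach l x A (fun i => A.symm (x i)) := by
    refine ⟨A.analyticAt 0, map_zero A, ?_, .of_forall fun i => A.apply_symm_apply _⟩
    have := (A.symm.continuous.tendsto 0).comp hx
    rwa [map_zero] at this
  have haxis : ∀ t : ℂ, A (Fin.cons t 0) = t • v := fun t => by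
    rw [← hA, ← map_smul]
    congr 1
    funext i
    refine Fin.cases ?_ (fun i => ?_) i <;> simp
  have hseg : ∀ t ∈ ball (0 : ℂ) (r / ‖v‖), t • v ∈ ball (0 : Fin (n + 1) → ℂ) r := by
    intro t ht
    rw [mem_ball_zero_iff] at ht ⊢
    rw [norm_smul]
    exact (lt_div_iff₀ (norm_pos_iff.2 hv0)).1 ht
  have hone : (1 : ℂ) ∈ ball (0 : ℂ) (r / ‖v‖) := by
    rw [mem_ball_zero_iff, norm_one, one_lt_div (norm_pos_iff.2 hv0)]
    simpa using hv
  have hq : AnalyticOnNhd ℂ (fun t : ℂ => f (A (Fin.cons t 0))) (ball 0 (r / ‖v‖)) := by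
    intro t ht
    simp only [haxis]
    exact AnalyticAt.fun_comp (g := f) (hball _ (hseg t ht)) (analyticAt_id.fun_smul analyticAt_const)
  have hpos : (0 : ℝ) < r / ‖v‖ := div_pos hr (norm_pos_iff.2 hv0)
  have hord : analyticOrderAt (fun t : ℂ => f (A (Fin.cons t 0))) 0 ≠ ⊤ := by
    rw [Ne, analyticOrderAt_eq_top]
    intro h0
    have := hq.eqOn_zero_of_preconnected_of_eventuallyEq_zero
      (convex_ball _ _).isPreconnected (mem_ball_self hpos) h0 hone
    simp only [haxis, one_smul] at this
    exact hfv this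
  obtain ⟨m, hm⟩ := ENat.ne_top_iff_exists.1 hord
  obtain ⟨φ, y, hφ, a, ha⟩ := lu_step hLU m (g := fun _ => 1) analyticAt_const
    (fun h => one_ne_zero h.self_of_nhds) (f := fun p => f (A p)) (hR.analytic_comp hf) hm.symm
    hR.2.2.1
  exact ⟨_, _, hR.comp hφ, a, ha.congr (.of_forall fun p => by simp)⟩

theorem lu (n : ℕ) : LU n := by
  induction n with
  | zero => exact lu_zero
  | succ n ih => exact lu_succ ih

end LU2

/-! ### Estimates of Łojasiewicz type -/

section Lojasiewicz

variable {n : ℕ} {I : Type} {l : Ultrafilter I}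

/-- Approximate Euler identity for a monomial times a unit. -/
theorem HasExp.euler {h : (Fin n → ℂ) → ℂ} {β : Fin n → ℕ} (hh : HasExp h β) {η : ℝ} (hη : 0 < η) :
    ∀ᶠ y in 𝓝 0, ‖fderiv ℂ h y y - (∑ i, β i : ℕ) * h y‖ ≤ η * ‖h y‖ := by
  have hha := hh.analyticAt
  obtain ⟨u, hu, hu0, he⟩ := hh
  have hsmall : ∀ᶠ y in 𝓝 0, ‖fderiv ℂ u y y / u y‖ < η := by
    have h1 : ContinuousAt (fun y => fderiv ℂ u y y / u y) 0 :=
      ((hu.fderiv.continuousAt).clm_apply continuousAt_id).div hu.continuousAt hu0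
    have h2 := h1.norm.eventually_lt_const (u := η) (by simpa using hη)
    exact h2
  filter_upwards [he.eventually_nhds, hu.eventually_analyticAt, hha.eventually_analyticAt,
    hu.continuousAt.eventually_ne hu0, hsmall] with y hy huy hhy hu0y hsm
  have hline : HasDerivAt (fun t : ℂ => t • y) y 1 := by
    simpa using (hasDerivAt_id (1 : ℂ)).smul_const y
  have h1 : HasDerivAt (fun t : ℂ => h (t • y)) (fderiv ℂ h y y) 1 := by
    have := (hhy.differentiableAt.hasFDerivAt (x := y))
    rw [← one_smul ℂ y] at this
    have h2 := this.comp_hasDerivAt (1 : ℂ) hline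
    rw [one_smul] at h2
    exact h2
  have h2 : HasDerivAt (fun t : ℂ => u (t • y)) (fderiv ℂ u y y) 1 := by
    have := (huy.differentiableAt.hasFDerivAt (x := y))
    rw [← one_smul ℂ y] at this
    have h2 := this.comp_hasDerivAt (1 : ℂ) hline
    rw [one_smul] at h2
    exact h2
  have h3 : HasDerivAt (fun t : ℂ => (t ^ (∑ i, β i) * ∏ i, y i ^ β i) * u (t • y))
      (((∑ i, β i : ℕ) * 1 ^ (∑ i, β i - 1) * ∏ i, y i ^ β i) * u ((1 : ℂ) • y) +
        (1 ^ (∑ i, β i) * ∏ i, y i ^ β i) * fderiv ℂ u y y) 1 :=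
    ((hasDerivAt_pow (∑ i, β i) (1 : ℂ)).mul_const _).fun_mul h2
  have h4 : (fun t : ℂ => h (t • y)) =ᶠ[𝓝 1]
      fun t : ℂ => (t ^ (∑ i, β i) * ∏ i, y i ^ β i) * u (t • y) := by
    have ht : Tendsto (fun t : ℂ => t • y) (𝓝 1) (𝓝 y) := by
      simpa using hline.continuousAt.tendsto
    filter_upwards [ht.eventually hy] with t ht
    rw [ht]
    simp [mul_pow, Finset.prod_mul_distrib, Finset.prod_pow_eq_pow_sum]
  have h5 := h1.unique (h3.congr_of_eventuallyEq h4)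
  rw [h5]
  have hyy : h y = (∏ i, y i ^ β i) * u y := hy.self_of_nhds
  have : ((∑ i, β i : ℕ) * 1 ^ (∑ i, β i - 1) * ∏ i, y i ^ β i) * u ((1 : ℂ) • y) +
        (1 ^ (∑ i, β i) * ∏ i, y i ^ β i) * fderiv ℂ u y y - (∑ i, β i : ℕ) * h y
        = (fderiv ℂ u y y / u y) * h y := by
    rw [hyy]
    simp only [one_pow, one_smul]
    field_simp
    ring
  rw [this, norm_mul]
  exact mul_le_mul_of_nonneg_right hsm.le (norm_nonneg _)

theorem sum_ne_zero_of_ne {a : Fin n → ℕ} (ha : a ≠ 0) : ∑ i, a i ≠ 0 := fun h =>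
  ha (funext fun i => Finset.sum_eq_zero_iff.1 h i (Finset.mem_univ i))

/-- Along any family `x → 0` there are vectors `w` close to `x` on which `df` is nearly
`q • f`, `q > 0`: write `x = Φ y` with `Φ` and `f ∘ Φ` monomial, and take for `w` a multiple of the
image under `dΦ` of the Euler vector `y`. -/
theorem euler_along_pi (hn : 1 ≤ n) {f : (Fin n → ℂ) → ℂ} (hf : AnalyticAt ℂ f 0) (hf0 : f 0 = 0)
    (hfz : ¬ ZeroGerm f) {x : I → Fin n → ℂ} (hx : Tendsto x l (𝓝 0)) :
    ∃ (w : I → Fin n → ℂ) (q : ℝ), 0 < q ∧ ∀ η : ℝ, 0 < η → ∀ᶠ i in (l : Filter I),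
      ‖w i - x i‖ ≤ η * ‖x i‖ ∧ ‖fderiv ℂ f (x i) (w i) - q * f (x i)‖ ≤ η * ‖f (x i)‖ := by
  have : Nonempty (Fin n) := ⟨⟨0, hn⟩⟩
  have hcoord : AnalyticAt ℂ (fun y : Fin n → ℂ => ∏ j, y j) 0 :=
    Finset.analyticAt_fun_prod _ fun j _ => analyticAt_coord j 0
  obtain ⟨φ, y, hφ, a, ha⟩ := lu n (fun y => f y * ∏ j, y j) (hf.fun_mul hcoord)
    (not_zeroGerm_mul hf hcoord hfz (not_zeroGerm_prod _ (fun j _ => analyticAt_coord j 0)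
      fun j _ => (HasExp.coord j).not_zeroGerm)) I l x hx
  obtain ⟨⟨b, hb⟩, ⟨c, hc⟩⟩ := HasExp.factor (hφ.analytic_comp hf) (hφ.analytic_comp hcoord) ha
  have hd := HasExp.factor_prod (f := fun j p => φ p j) Finset.univ
    (fun j _ => hφ.analytic_comp (analyticAt_coord j 0)) hc
  choose! d hd using hd
  obtain ⟨ψ, T, z, hψ, j₀, -, hmin⟩ := toric_family Finset.univ Finset.univ_nonempty d hφ.2.2.1
  have hΦ := hφ.comp hψ.1
  set Φ : (Fin n → ℂ) → (Fin n → ℂ) := fun p => φ (ψ p) with hΦdef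
  have hfΦ : HasExp (fun p => f (Φ p)) (vm b T) := hb.comp_reach hψ
  have hΦj : ∀ j, HasExp (fun p => Φ p j) (vm (d j) T) := fun j =>
    (hd j (Finset.mem_univ j)).comp_reach hψ
  have hfΦ0 : vm b T ≠ 0 := hfΦ.ne_zero (by
    rw [hΦ.2.1, hf0])
  have hα0 : vm (d j₀) T ≠ 0 := (hΦj j₀).ne_zero (by
    have := hΦ.2.1
    rw [this]; rfl)
  set N : ℕ := ∑ i, vm (d j₀) T i with hN
  have hN0 : (0 : ℝ) < N := by exact_mod_cast Nat.pos_of_ne_zero (sum_ne_zero_of_ne hα0)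
  have hN1 : (1 : ℝ) ≤ N := by exact_mod_cast Nat.one_le_iff_ne_zero.2 (sum_ne_zero_of_ne hα0)
  set B : ℕ := ∑ i, vm b T i with hBdef
  have hB0 : (0 : ℝ) < B := by exact_mod_cast Nat.pos_of_ne_zero (sum_ne_zero_of_ne hfΦ0)
  refine ⟨fun i => (N : ℂ)⁻¹ • fderiv ℂ Φ (z i) (z i), B / N, div_pos hB0 hN0, fun η hη => ?_⟩
  -- components whose monomial is not minimal are negligible against the minimal one `Φ p j₀`
  have hcomp : ∀ j, ∀ᶠ p in 𝓝 (0 : Fin n → ℂ),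
      ‖(N : ℂ)⁻¹ * fderiv ℂ (fun p => Φ p j) p p - Φ p j‖ ≤ η * ‖Φ p‖ := by
    intro j
    have hNinv : ‖(N : ℂ)⁻¹‖ ≤ 1 := by
      rw [norm_inv, Complex.norm_natCast]
      exact inv_le_one_of_one_le₀ hN1
    have hNc : (N : ℂ) ≠ 0 := by exact_mod_cast hN0.ne'
    by_cases hj : vm (d j) T = vm (d j₀) T
    · filter_upwards [(hΦj j).euler hη] with p hp
      rw [hj, ← hN] at hp
      have : (N : ℂ)⁻¹ * fderiv ℂ (fun p => Φ p j) p p - Φ p j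
          = (N : ℂ)⁻¹ * (fderiv ℂ (fun p => Φ p j) p p - N * Φ p j) := by
        rw [mul_sub, inv_mul_cancel_left₀ hNc]
      rw [this, norm_mul]
      calc ‖(N : ℂ)⁻¹‖ * ‖fderiv ℂ (fun p => Φ p j) p p - N * Φ p j‖
          ≤ 1 * (η * ‖Φ p j‖) := mul_le_mul hNinv hp (norm_nonneg _) zero_le_one
        _ ≤ η * ‖Φ p‖ := by
          rw [one_mul]; exact mul_le_mul_of_nonneg_left (norm_le_pi_norm _ _) hη.le
    · obtain ⟨ρ, hρ, hρx, hρe⟩ := (hΦj j₀).div (hΦj j) (hmin j (Finset.mem_univ j))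
      have hρ0 : ρ 0 = 0 := hρx.zero_of_ne fun h0 => hj
        (le_antisymm (tsub_eq_zero_iff_le.1 h0) (hmin j (Finset.mem_univ j)))
      set M : ℕ := ∑ i, vm (d j) T i with hM
      have hsm : ∀ᶠ p in 𝓝 0, ‖ρ p‖ < η / (M + 2) := by
        refine hρ.continuousAt.norm.eventually_lt_const ?_
        simp only [hρ0, norm_zero]; positivity
      filter_upwards [(hΦj j).euler one_pos, hρe, hsm] with p hp hp2 hp3
      have h1 : ‖fderiv ℂ (fun p => Φ p j) p p‖ ≤ (M + 1) * ‖Φ p j‖ := by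
        have := norm_le_insert' (fderiv ℂ (fun p => Φ p j) p p) (M * Φ p j)
        rw [norm_mul, Complex.norm_natCast] at this
        linarith
      have h2 : ‖Φ p j‖ ≤ η / (M + 2) * ‖Φ p‖ := by
        rw [hp2, norm_mul, mul_comm]
        exact mul_le_mul hp3.le (norm_le_pi_norm _ _) (norm_nonneg _) (by positivity)
      calc ‖(N : ℂ)⁻¹ * fderiv ℂ (fun p => Φ p j) p p - Φ p j‖
          ≤ ‖(N : ℂ)⁻¹‖ * ‖fderiv ℂ (fun p => Φ p j) p p‖ + ‖Φ p j‖ := by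
            rw [← norm_mul]; exact norm_sub_le _ _
        _ ≤ 1 * ((M + 1) * ‖Φ p j‖) + ‖Φ p j‖ := by gcongr
        _ = (M + 2) * ‖Φ p j‖ := by ring
        _ ≤ (M + 2) * (η / (M + 2) * ‖Φ p‖) := by gcongr
        _ = η * ‖Φ p‖ := by field_simp
  have hcomp' := eventually_all.2 hcomp
  have hΦd : ∀ᶠ p in 𝓝 (0 : Fin n → ℂ), DifferentiableAt ℂ Φ p :=
    hΦ.1.eventually_analyticAt.mono fun p hp => hp.differentiableAt
  have hfd : ∀ᶠ p in 𝓝 (0 : Fin n → ℂ), DifferentiableAt ℂ f (Φ p) :=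
    hΦ.tendsto.eventually (hf.eventually_analyticAt.mono fun p hp => hp.differentiableAt)
  filter_upwards [hΦ.2.2.1.eventually (hcomp'.and (hΦd.and (hfd.and
    (hfΦ.euler (η := η * N) (by positivity))))), hΦ.2.2.2] with i hi hxi
  obtain ⟨h1, h2, h3, h4⟩ := hi
  have hxi' : x i = Φ (z i) := hxi.symm
  have hNc : (N : ℂ) ≠ 0 := by exact_mod_cast hN0.ne'
  rw [hxi']
  constructor
  · rw [pi_norm_le_iff_of_nonneg (by positivity)]
    intro j
    have : fderiv ℂ (fun p => Φ p j) (z i) (z i) = fderiv ℂ Φ (z i) (z i) j := by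
      rw [fderiv_apply h2]; rfl
    have h5 := h1 j
    rw [this] at h5
    exact h5
  · have h5 : fderiv ℂ (fun p => f (Φ p)) (z i) (z i)
        = fderiv ℂ f (Φ (z i)) (fderiv ℂ Φ (z i) (z i)) := by
      rw [fderiv_fun_comp (g := f) (z i) h3 h2]; rfl
    rw [h5] at h4
    rw [map_smul, smul_eq_mul]
    have : (N : ℂ)⁻¹ * fderiv ℂ f (Φ (z i)) (fderiv ℂ Φ (z i) (z i)) -
        ((B / N : ℝ) : ℂ) * f (Φ (z i)) = (N : ℂ)⁻¹ *
        (fderiv ℂ f (Φ (z i)) (fderiv ℂ Φ (z i) (z i)) - B * f (Φ (z i))) := by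
      push_cast
      field_simp
    rw [this, norm_mul, norm_inv, Complex.norm_natCast, inv_mul_le_iff₀ hN0]
    linarith

/-- Complex Euclidean space `ℂⁿ`. -/
abbrev EC (n : ℕ) := EuclideanSpace ℂ (Fin n)

/-- The version of `euler_along_pi` on `ℂⁿ` with its Euclidean norm, at an arbitrary zero `p` of `f`. -/
theorem euler_along (hn : 1 ≤ n) {f : EC n → ℂ} {p : EC n} (hf : AnalyticAt ℂ f p) (hfp : f p = 0)
    (hfz : ¬ ∀ᶠ x in 𝓝 p, f x = 0) {x : I → EC n} (hx : Tendsto x l (𝓝 p)) :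
    ∃ (w : I → EC n) (q : ℝ), 0 < q ∧ ∀ η : ℝ, 0 < η → ∀ᶠ i in (l : Filter I),
      ‖w i - (x i - p)‖ ≤ η * ‖x i - p‖ ∧
        ‖fderiv ℂ f (x i) (w i) - q * f (x i)‖ ≤ η * ‖f (x i)‖ := by
  set L : EC n ≃L[ℂ] (Fin n → ℂ) := EuclideanSpace.equiv (Fin n) ℂ with hL
  let g : (Fin n → ℂ) → ℂ := fun z => f (p + L.symm z)
  have haff : ∀ z, AnalyticAt ℂ (fun z => p + L.symm z) z := fun z =>
    analyticAt_const.fun_add (L.symm.analyticAt z)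
  have haff0 : Tendsto (fun z => p + L.symm z) (𝓝 0) (𝓝 p) := by
    simpa using (haff 0).continuousAt.tendsto
  have hg : AnalyticAt ℂ g 0 := AnalyticAt.fun_comp (g := f) (by simpa using hf) (haff 0)
  have hsub : Tendsto (fun y => L (y - p)) (𝓝 p) (𝓝 0) := by
    have : ContinuousAt (fun y => L (y - p)) p := by fun_prop
    simpa using this.tendsto
  have hgz : ¬ ZeroGerm g := by
    intro h
    apply hfz
    filter_upwards [hsub.eventually h] with y hy
    simpa [g] using hy
  obtain ⟨w, q, hq, hw⟩ := euler_along_pi hn hg (by simpa [g] using hfp) hgz (hsub.comp hx)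
  refine ⟨fun i => L.symm (w i), q, hq, fun η hη => ?_⟩
  set C := ‖(L.symm : (Fin n → ℂ) →L[ℂ] EC n)‖ * ‖(L : EC n →L[ℂ] (Fin n → ℂ))‖ + 1 with hC
  have hC1 : 1 ≤ C := by simp only [hC]; nlinarith [norm_nonneg (L.symm : (Fin n → ℂ) →L[ℂ] EC n), norm_nonneg (L : EC n →L[ℂ] (Fin n → ℂ))]
  have hC0 : 0 < C := by linarith
  have hfd : ∀ᶠ y in 𝓝 p, DifferentiableAt ℂ f y :=
    hf.eventually_analyticAt.mono fun y hy => hy.differentiableAt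
  filter_upwards [hw (η / C) (by positivity), hx.eventually hfd] with i hi hdi
  have hxi : p + L.symm (L (x i - p)) = x i := by simp
  constructor
  · have h1 : L.symm (w i) - (x i - p) = L.symm (w i - L (x i - p)) := by simp
    rw [h1]
    have h2 := (L.symm : (Fin n → ℂ) →L[ℂ] EC n).le_opNorm (w i - L (x i - p))
    have h3 := (L : EC n →L[ℂ] (Fin n → ℂ)).le_opNorm (x i - p)
    have h4 := hi.1
    simp only [Function.comp] at h4
    calc ‖L.symm (w i - L (x i - p))‖
        ≤ ‖(L.symm : (Fin n → ℂ) →L[ℂ] EC n)‖ * ‖w i - L (x i - p)‖ := h2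
      _ ≤ ‖(L.symm : (Fin n → ℂ) →L[ℂ] EC n)‖ * (η / C * (‖(L : EC n →L[ℂ] (Fin n → ℂ))‖ * ‖x i - p‖)) := by
        gcongr
        exact h4.trans (mul_le_mul_of_nonneg_left h3 (by positivity))
      _ = (C - 1) / C * (η * ‖x i - p‖) := by simp only [hC]; field_simp; ring
      _ ≤ 1 * (η * ‖x i - p‖) := by
        gcongr
        rw [div_le_one hC0]; linarith
      _ = _ := one_mul _
  · have h5 := hi.2
    have h6 : fderiv ℂ g (L (x i - p)) (w i) = fderiv ℂ f (x i) (L.symm (w i)) := by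
      have hd : HasFDerivAt (fun z => p + L.symm z) (L.symm : (Fin n → ℂ) →L[ℂ] EC n) (L (x i - p)) :=
        L.symm.hasFDerivAt.const_add p
      have hdf : HasFDerivAt f (fderiv ℂ f (x i)) (p + L.symm (L (x i - p))) := by
        rw [hxi]; exact hdi.hasFDerivAt
      have := HasFDerivAt.comp (g := f) (L (x i - p)) hdf hd
      have h7 : fderiv ℂ g (L (x i - p)) = _ := this.fderiv
      rw [h7]; rfl
    simp only [Function.comp, h6, g, hxi] at h5
    refine h5.trans (mul_le_mul_of_nonneg_right ?_ (norm_nonneg _))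
    exact div_le_self hη.le hC1

/-- The ratio `|f| / ‖df‖` tends to `0` at the zero set of `f`: by `euler_along`, `‖df‖` is at least
of the order of `|f(x)| / ‖x - p‖`. -/
theorem lojasiewicz_small (hn : 1 ≤ n) {f : EC n → ℂ} {p : EC n} (hf : AnalyticAt ℂ f p)
    (hfp : f p = 0) (hfz : ¬ ∀ᶠ x in 𝓝 p, f x = 0) {η : ℝ} (hη : 0 < η) :
    ∀ᶠ x in 𝓝 p, ‖f x‖ ≤ η * ‖fderiv ℂ f x‖ := by
  by_contra hcon
  have hfreq : ∃ᶠ x in 𝓝 p, ¬ ‖f x‖ ≤ η * ‖fderiv ℂ f x‖ := Filter.not_eventually.1 hcon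
  rw [Filter.frequently_iff_neBot] at hfreq
  set l := @Ultrafilter.of _ _ hfreq
  have hl : (l : Filter (EC n)) ≤ 𝓝 p ⊓ 𝓟 {x | ¬ ‖f x‖ ≤ η * ‖fderiv ℂ f x‖} :=
    @Ultrafilter.of_le _ _ hfreq
  have hx : Tendsto (fun x : EC n => x) l (𝓝 p) := hl.trans inf_le_left
  have hbad : ∀ᶠ x in (l : Filter (EC n)), ¬ ‖f x‖ ≤ η * ‖fderiv ℂ f x‖ :=
    hl.trans inf_le_right (mem_principal_self _)
  obtain ⟨w, q, hq, hw⟩ := euler_along hn hf hfp hfz hx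
  have hclose : ∀ᶠ x in (l : Filter (EC n)), ‖x - p‖ < η * q / 4 := by
    have : Tendsto (fun x : EC n => ‖x - p‖) l (𝓝 0) := by
      simpa using (hx.sub_const p).norm
    exact this.eventually_lt_const (by positivity)
  obtain ⟨x, h1, h2, h3, h4⟩ := (hbad.and (hclose.and ((hw 1 one_pos).and (hw (q / 2) (by positivity))))).exists
  apply h1
  have h5 : ‖w x‖ ≤ 2 * ‖x - p‖ := by
    have := norm_le_insert' (w x) (x - p)
    linarith [h3.1]
  have h6 := (fderiv ℂ f x).le_opNorm (w x)
  have h7 : q * ‖f x‖ ≤ ‖fderiv ℂ f x (w x)‖ + q / 2 * ‖f x‖ := by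
    have := norm_le_insert (fderiv ℂ f x (w x)) (q * f x)
    rw [norm_mul, Complex.norm_real, Real.norm_of_nonneg hq.le] at this
    linarith [h4.2]
  have h8 : ‖fderiv ℂ f x‖ * ‖w x‖ ≤ ‖fderiv ℂ f x‖ * (2 * (η * q / 4)) := by
    gcongr; linarith
  have h9 : q / 2 * ‖f x‖ ≤ q / 2 * (η * ‖fderiv ℂ f x‖) := by linarith
  exact le_of_mul_le_mul_left h9 (by positivity)

/-- Near the origin the gradient of `arg f` is nearly orthogonal to the radial direction: by
`euler_along`, `df(x) / f(x)` is a positive real number up to an error that is small relative to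
`‖x‖ ‖df‖ / |f|`. -/
theorem radial_small (hn : 1 ≤ n) {f : EC n → ℂ} (hf : AnalyticAt ℂ f 0)
    (hfp : f 0 = 0) (hfz : ¬ ∀ᶠ x in 𝓝 0, f x = 0) {η : ℝ} (hη : 0 < η) :
    ∀ᶠ x in 𝓝 0, f x ≠ 0 → |(fderiv ℂ f x x / f x).im| ≤ η * (‖x‖ * (‖fderiv ℂ f x‖ / ‖f x‖)) := by
  by_contra hcon
  set P : EC n → Prop := fun x => f x ≠ 0 → |(fderiv ℂ f x x / f x).im| ≤ η * (‖x‖ * (‖fderiv ℂ f x‖ / ‖f x‖)) with hP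
  have hfreq : ∃ᶠ x in 𝓝 0, ¬ P x := Filter.not_eventually.1 hcon
  rw [Filter.frequently_iff_neBot] at hfreq
  set l := @Ultrafilter.of _ _ hfreq
  have hl : (l : Filter (EC n)) ≤ 𝓝 0 ⊓ 𝓟 {x | ¬ P x} := @Ultrafilter.of_le _ _ hfreq
  have hx : Tendsto (fun x : EC n => x) l (𝓝 0) := hl.trans inf_le_left
  have hbad : ∀ᶠ x in (l : Filter (EC n)), ¬ P x := hl.trans inf_le_right (mem_principal_self _)
  obtain ⟨w, q, hq, hw⟩ := euler_along hn hf hfp hfz hx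
  set κ := η / (1 + 4 / q) with hκ
  have hκ0 : 0 < κ := by positivity
  obtain ⟨x, h1, h3, h4, h4'⟩ := (hbad.and ((hw 1 one_pos).and ((hw (q / 2) (by positivity)).and (hw κ hκ0)))).exists
  apply h1
  intro hfx
  have hfx' : 0 < ‖f x‖ := norm_pos_iff.2 hfx
  simp only [sub_zero] at h3 h4 h4'
  have h5 : ‖w x‖ ≤ 2 * ‖x‖ := by
    have := norm_le_insert' (w x) x
    linarith [h3.1]
  have h6 := (fderiv ℂ f x).le_opNorm (w x)
  have h7 : q * ‖f x‖ ≤ ‖fderiv ℂ f x (w x)‖ + q / 2 * ‖f x‖ := by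
    have := norm_le_insert (fderiv ℂ f x (w x)) (q * f x)
    rw [norm_mul, Complex.norm_real, Real.norm_of_nonneg hq.le] at this
    linarith [h4.2]
  set D := ‖x‖ * (‖fderiv ℂ f x‖ / ‖f x‖) with hD
  have hD1 : 1 ≤ 4 / q * D := by
    have h8 : ‖fderiv ℂ f x‖ * ‖w x‖ ≤ ‖fderiv ℂ f x‖ * (2 * ‖x‖) := by gcongr
    have h9 : q * ‖f x‖ ≤ 4 * (‖x‖ * ‖fderiv ℂ f x‖) := by linarith
    have : 4 / q * D = 4 * (‖x‖ * ‖fderiv ℂ f x‖) / (q * ‖f x‖) := by rw [hD]; field_simp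
    rw [this, le_div_iff₀ (by positivity)]
    linarith
  have hsplit : fderiv ℂ f x x / f x = (fderiv ℂ f x (w x) - q * f x) / f x - fderiv ℂ f x (w x - x) / f x + (q : ℝ) := by
    rw [map_sub]
    field_simp
    ring
  have hA : ‖(fderiv ℂ f x (w x) - q * f x) / f x‖ ≤ κ := by
    rw [norm_div, div_le_iff₀ hfx']; exact h4'.2
  have hB : ‖fderiv ℂ f x (w x - x) / f x‖ ≤ κ * D := by
    rw [norm_div, div_le_iff₀ hfx']
    have : κ * D * ‖f x‖ = ‖fderiv ℂ f x‖ * (κ * ‖x‖) := by rw [hD]; field_simp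
    rw [this]
    exact ((fderiv ℂ f x).le_opNorm _).trans (mul_le_mul_of_nonneg_left h4'.1 (norm_nonneg _))
  calc |(fderiv ℂ f x x / f x).im|
      = |((fderiv ℂ f x (w x) - q * f x) / f x - fderiv ℂ f x (w x - x) / f x).im| := by
        rw [hsplit, Complex.add_im, Complex.ofReal_im, add_zero]
    _ ≤ ‖(fderiv ℂ f x (w x) - q * f x) / f x - fderiv ℂ f x (w x - x) / f x‖ :=
        Complex.abs_im_le_norm _
    _ ≤ κ + κ * D := (norm_sub_le _ _).trans (add_le_add hA hB)
    _ ≤ κ * (4 / q * D) + κ * D := by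
        gcongr
        nlinarith
    _ = κ * (1 + 4 / q) * D := by ring
    _ = η * D := by rw [hκ]; field_simp

end Lojasiewicz

/-! ### The flow of a tame vector field -/

section Flow

/-- Two-sided Grönwall inequality. -/
theorem gronwall_two_sided {G : Type*} [NormedAddCommGroup G] [NormedSpace ℝ G] {h h' : ℝ → G}
    {T K : ℝ} (hd : ∀ t ∈ Ioo (-T) T, HasDerivAt h (h' t) t)
    (hb : ∀ t ∈ Ioo (-T) T, ‖h' t‖ ≤ K * ‖h t‖) {s t : ℝ} (hs : s ∈ Ioo (-T) T)
    (ht : t ∈ Ioo (-T) T) : ‖h t‖ ≤ ‖h s‖ * Real.exp (K * |t - s|) := by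
  have key : ∀ {g g' : ℝ → G}, (∀ t ∈ Ioo (-T) T, HasDerivAt g (g' t) t) →
      (∀ t ∈ Ioo (-T) T, ‖g' t‖ ≤ K * ‖g t‖) → ∀ {s t : ℝ}, s ∈ Ioo (-T) T → t ∈ Ioo (-T) T →
      s ≤ t → ‖g t‖ ≤ ‖g s‖ * Real.exp (K * (t - s)) := by
    intro g g' hd hb s t hs ht hst
    have hsub : Icc s t ⊆ Ioo (-T) T := fun u hu => ⟨hs.1.trans_le hu.1, hu.2.trans_lt ht.2⟩
    have := norm_le_gronwallBound_of_norm_deriv_right_le (f := g) (f' := g') (δ := ‖g s‖) (K := K)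
      (ε := 0) (a := s) (b := t)
      (fun u hu => (hd u (hsub hu)).continuousAt.continuousWithinAt)
      (fun u hu => (hd u (hsub (Ico_subset_Icc_self hu))).hasDerivWithinAt) le_rfl
      (fun u hu => by simpa using hb u (hsub (Ico_subset_Icc_self hu))) t ⟨hst, le_rfl⟩
    rwa [gronwallBound_ε0] at this
  rcases le_total s t with hst | hst
  · rw [abs_of_nonneg (sub_nonneg.2 hst)]
    exact key hd hb hs ht hst
  · have hneg : ∀ {u : ℝ}, u ∈ Ioo (-T) T → -u ∈ Ioo (-T) T := fun hu =>
      ⟨neg_lt_neg hu.2, by linarith [hu.1]⟩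
    have := key (g := fun u => h (-u)) (g' := fun u => -h' (-u))
      (fun u hu => by
        have := (hd (-u) (hneg hu)).scomp u (hasDerivAt_neg u)
        simpa [Function.comp_def] using this)
      (fun u hu => by simpa using hb (-u) (hneg hu)) (hneg hs) (hneg ht) (neg_le_neg hst)
    simp only [neg_neg] at this
    rw [abs_of_nonpos (sub_nonpos.2 hst)]
    convert this using 3
    ring

/-- A bounded Lipschitz vector field has an integral curve on `(-T, T)` through every point. -/
theorem exists_integral_curve {E : Type*} [NormedAddCommGroup E] [NormedSpace ℝ E]
    [CompleteSpace E] {V : E → E} {K : NNReal} (hV : LipschitzWith K V) {M : ℝ}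
    (hM : ∀ x, ‖V x‖ ≤ M) {T : ℝ} (hT : 0 < T) (x : E) :
    ∃ γ : ℝ → E, γ 0 = x ∧ ∀ t ∈ Ioo (-T) T, HasDerivAt γ (V (γ t)) t := by
  have hM0 : 0 ≤ M := (norm_nonneg _).trans (hM x)
  have hPL : IsPicardLindelof (fun _ => V) (tmin := -T) (tmax := T) ⟨0, by constructor <;> linarith⟩
      x ⟨M * T, by positivity⟩ 0 ⟨M, hM0⟩ K := by
    refine IsPicardLindelof.of_time_independent (fun y _ => hM y) (hV.lipschitzOnWith) ?_
    change M * max (T - 0) (0 - -T) ≤ M * T - 0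
    simp
  obtain ⟨γ, h0, h1⟩ := hPL.exists_eq_forall_mem_Icc_hasDerivWithinAt₀
  exact ⟨γ, h0, fun t ht => (h1 t (Ioo_subset_Icc_self ht)).hasDerivAt (Icc_mem_nhds ht.1 ht.2)⟩

variable {E : Type*} [NormedAddCommGroup E] [InnerProductSpace ℂ E]

/-- A vector field `v` on `E` is *tame* for `f` on the ball `closedBall 0 R` when it is tangent to
spheres, rotates the phase of `f` at unit speed off the zero set, changes `log f` at bounded
speed, becomes small near the zero set (where it vanishes), and agrees with bounded Lipschitz
fields off any neighbourhood `‖f‖ < δ` of the zero set. -/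
structure TameField (R : ℝ) (f : E → ℂ) (v : E → E) : Prop where
  tangent : ∀ x, (inner ℂ x (v x)).re = 0
  zero : ∀ x, f x = 0 → v x = 0
  diff : ∀ x ∈ closedBall (0 : E) R, DifferentiableAt ℂ f x
  phase : ∀ x ∈ closedBall (0 : E) R, f x ≠ 0 → (fderiv ℂ f x (v x) / f x).im = 1
  bound : ∀ x ∈ closedBall (0 : E) R, ‖fderiv ℂ f x (v x)‖ ≤ 2 * ‖f x‖
  cut : ∀ δ > 0, ∃ c : E → ℝ, (∀ x, c x ∈ Icc (0 : ℝ) 1) ∧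
    (∃ K, LipschitzWith K (fun x => c x • v x)) ∧ (∃ M, ∀ x, ‖c x • v x‖ ≤ M) ∧
    ∀ x ∈ closedBall (0 : E) R, δ ≤ ‖f x‖ → c x = 1
  small : ∀ η > 0, ∃ c > 0, ∀ x ∈ closedBall (0 : E) R, ‖f x‖ < c → ‖v x‖ ≤ η

/-- `γ` is the trajectory of `v` starting at `x`, for times in `(-T, T)`. -/
structure IsTraj (T : ℝ) (f : E → ℂ) (v : E → E) (x : E) (γ : ℝ → E) : Prop where
  start : γ 0 = x
  const : f x = 0 → ∀ t, γ t = x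
  deriv : ∀ t ∈ Ioo (-T) T, HasDerivAt γ (v (γ t)) t
  norm_eq : ∀ t ∈ Ioo (-T) T, ‖γ t‖ = ‖x‖
  lower : ∀ t ∈ Ioo (-T) T, Real.exp (-(2 * T)) * ‖f x‖ ≤ ‖f (γ t)‖
  upper : ∀ t ∈ Ioo (-T) T, ‖f (γ t)‖ ≤ Real.exp (2 * T) * ‖f x‖

variable {R T : ℝ} {f : E → ℂ} {v : E → E}

/-- A curve whose velocity is orthogonal to its position stays on a sphere. -/
theorem norm_const_of_tangent {γ γ' : ℝ → E} (hT : 0 < T)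
    (hγ : ∀ t ∈ Ioo (-T) T, HasDerivAt γ (γ' t) t)
    (htan : ∀ t ∈ Ioo (-T) T, (inner ℂ (γ t) (γ' t)).re = 0) {t : ℝ} (ht : t ∈ Ioo (-T) T) :
    ‖γ t‖ = ‖γ 0‖ := by
  have h0 : (0 : ℝ) ∈ Ioo (-T) T := ⟨by linarith, hT⟩
  have hd : ∀ s ∈ Ioo (-T) T, HasDerivAt (fun s => ‖γ s‖ ^ 2 - ‖γ 0‖ ^ 2) 0 s := by
    intro s hs
    have h1 := (hγ s hs).inner ℂ (hγ s hs)
    have h2 := (Complex.reCLM.hasFDerivAt.comp_hasDerivAt s h1).sub_const (‖γ 0‖ ^ 2)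
    have h3 : Complex.reCLM (inner ℂ (γ s) (γ' s) + inner ℂ (γ' s) (γ s)) = 0 := by
      have := htan s hs
      have h4 : (inner ℂ (γ' s) (γ s)).re = 0 := by
        rw [← inner_conj_symm, Complex.conj_re, this]
      simp [this, h4]
    rw [h3] at h2
    have h5 : (fun s => ‖γ s‖ ^ 2 - ‖γ 0‖ ^ 2) =
        fun s => (Complex.reCLM ∘ fun t => inner ℂ (γ t) (γ t)) s - ‖γ 0‖ ^ 2 := by
      funext u
      simp only [Function.comp, Complex.reCLM_apply]
      rw [inner_self_eq_norm_sq_to_K]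
      norm_cast
    rw [h5]
    exact h2
  have := gronwall_two_sided (K := 0) hd (fun s _ => by simp) h0 ht
  simp only [sub_self, norm_zero, zero_mul, norm_le_zero_iff] at this
  have h5 : ‖γ t‖ ^ 2 = ‖γ 0‖ ^ 2 := by linarith
  exact (sq_eq_sq₀ (norm_nonneg _) (norm_nonneg _)).1 h5

namespace TameField

/-- Trajectories exist for all times in `(-T, T)`: a trajectory of the field cut off at
`‖f‖ = e ^ (-2T) ‖f x‖` never reaches the region where the cutoff is felt, because `log ‖f‖` changes
at speed at most `2`. -/
theorem exists_traj [CompleteSpace E] (hv : TameField R f v) (hT : 0 < T) {x : E} (hx : x ∈ closedBall (0 : E) R) :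
    ∃ γ, IsTraj T f v x γ := by
  by_cases hfx : f x = 0
  · refine ⟨fun _ => x, rfl, fun _ _ => rfl, fun t _ => ?_, fun _ _ => rfl, ?_, ?_⟩
    · simpa [hv.zero x hfx] using hasDerivAt_const t x
    · simp [hfx]
    · simp [hfx]
  have hfx' : 0 < ‖f x‖ := norm_pos_iff.2 hfx
  set δ := Real.exp (-(2 * T)) * ‖f x‖ with hδ
  obtain ⟨c, hc, ⟨K, hK⟩, ⟨M, hM⟩, hc1⟩ := hv.cut δ (by positivity)
  obtain ⟨γ, h0, hγ⟩ := exists_integral_curve hK hM hT x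
  have hz : (0 : ℝ) ∈ Ioo (-T) T := ⟨by linarith, hT⟩
  have hnorm : ∀ t ∈ Ioo (-T) T, ‖γ t‖ = ‖x‖ := by
    intro t ht
    rw [← h0]
    refine norm_const_of_tangent hT hγ (fun s _ => ?_) ht
    have : c (γ s) • v (γ s) = ((c (γ s) : ℝ) : ℂ) • v (γ s) := (Complex.coe_smul _ _).symm
    rw [this, inner_smul_right, Complex.re_ofReal_mul, hv.tangent, mul_zero]
  have hmem : ∀ t ∈ Ioo (-T) T, γ t ∈ closedBall (0 : E) R := by
    intro t ht
    rw [mem_closedBall_zero_iff] at hx ⊢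
    rw [hnorm t ht]; exact hx
  have hfd : ∀ t ∈ Ioo (-T) T, HasDerivAt (fun t => f (γ t))
      (fderiv ℂ f (γ t) (c (γ t) • v (γ t))) t := fun t ht =>
    ((hv.diff _ (hmem t ht)).hasFDerivAt.restrictScalars ℝ).comp_hasDerivAt t (hγ t ht)
  have hfb : ∀ t ∈ Ioo (-T) T, ‖fderiv ℂ f (γ t) (c (γ t) • v (γ t))‖ ≤ 2 * ‖f (γ t)‖ := by
    intro t ht
    have : c (γ t) • v (γ t) = ((c (γ t) : ℝ) : ℂ) • v (γ t) := (Complex.coe_smul _ _).symm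
    rw [this, map_smul, norm_smul, Complex.norm_real, Real.norm_of_nonneg (hc _).1]
    calc _ ≤ 1 * ‖fderiv ℂ f (γ t) (v (γ t))‖ := by gcongr; exact (hc _).2
      _ ≤ _ := by rw [one_mul]; exact hv.bound _ (hmem t ht)
  have hlow : ∀ t ∈ Ioo (-T) T, δ ≤ ‖f (γ t)‖ := by
    intro t ht
    have := gronwall_two_sided hfd hfb ht hz
    rw [h0] at this
    have h1 : Real.exp (2 * |0 - t|) ≤ Real.exp (2 * T) := by
      gcongr
      rw [zero_sub, abs_neg]; exact (abs_lt.2 ht).le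
    have h2 : ‖f x‖ ≤ ‖f (γ t)‖ * Real.exp (2 * T) := this.trans (by gcongr)
    rw [hδ, Real.exp_neg, inv_mul_le_iff₀ (Real.exp_pos _), mul_comm]
    exact h2
  refine ⟨γ, h0, fun h => absurd h hfx, fun t ht => ?_, hnorm, hlow, fun t ht => ?_⟩
  · have := hγ t ht
    rwa [hc1 _ (hmem t ht) (hlow t ht), one_smul] at this
  · have := gronwall_two_sided hfd hfb hz ht
    rw [h0] at this
    have h1 : Real.exp (2 * |t - 0|) ≤ Real.exp (2 * T) := by
      gcongr
      rw [sub_zero]; exact (abs_lt.2 ht).le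
    rw [mul_comm]
    exact this.trans (by gcongr)

/-- Continuous dependence on initial values away from the zero set. -/
theorem traj_dist (hv : TameField R f v) {δ : ℝ} (hδ : 0 < δ) (T : ℝ) : ∃ K : NNReal, ∀ {T' : ℝ}, T' ≤ T →
    ∀ γ₁ γ₂ : ℝ → E,
    (∀ t ∈ Ioo (-T') T', HasDerivAt γ₁ (v (γ₁ t)) t ∧ γ₁ t ∈ closedBall (0 : E) R ∧ δ ≤ ‖f (γ₁ t)‖) →
    (∀ t ∈ Ioo (-T') T', HasDerivAt γ₂ (v (γ₂ t)) t ∧ γ₂ t ∈ closedBall (0 : E) R ∧ δ ≤ ‖f (γ₂ t)‖) →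
    ∀ t ∈ Ioo (-T') T', ‖γ₁ t - γ₂ t‖ ≤ ‖γ₁ 0 - γ₂ 0‖ * Real.exp (K * T) := by
  obtain ⟨c, hc, ⟨K, hK⟩, -, hc1⟩ := hv.cut δ hδ
  refine ⟨K, fun {T'} hT' γ₁ γ₂ h1 h2 t ht => ?_⟩
  have hz : (0 : ℝ) ∈ Ioo (-T') T' := ⟨by linarith [ht.1, ht.2], by linarith [ht.1, ht.2]⟩
  have := gronwall_two_sided (h := fun t => γ₁ t - γ₂ t) (K := K)
    (fun s hs => (h1 s hs).1.sub (h2 s hs).1) (fun s hs => by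
      have := hK.norm_sub_le (γ₁ s) (γ₂ s)
      simpa only [hc1 _ (h1 s hs).2.1 (h1 s hs).2.2, hc1 _ (h2 s hs).2.1 (h2 s hs).2.2, one_smul]
        using this) hz ht
  refine this.trans ?_
  gcongr
  rw [sub_zero]; exact (abs_lt.2 ht).le.trans hT'

end TameField

namespace IsTraj

theorem mem {x : E} {γ : ℝ → E} (h : IsTraj T f v x γ)
    (hx : x ∈ closedBall (0 : E) R) {t : ℝ} (ht : t ∈ Ioo (-T) T) : γ t ∈ closedBall (0 : E) R := by
  rw [mem_closedBall_zero_iff] at hx ⊢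
  rw [h.norm_eq t ht]; exact hx

/-- Along a trajectory the phase of `f` turns at unit speed. -/
theorem phase (hv : TameField R f v) {x : E} {γ : ℝ → E} (h : IsTraj T f v x γ)
    (hx : x ∈ closedBall (0 : E) R) {t : ℝ} (ht : t ∈ Ioo (-T) T) :
    ∃ r : ℝ, f (γ t) = r * (Complex.exp (t * Complex.I) * f x) := by
  by_cases hfx : f x = 0
  · exact ⟨0, by rw [h.const hfx, hfx]; simp⟩
  have hz : (0 : ℝ) ∈ Ioo (-T) T := ⟨by linarith [ht.1, ht.2], by linarith [ht.1, ht.2]⟩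
  have hne : ∀ s ∈ Ioo (-T) T, f (γ s) ≠ 0 := fun s hs => norm_pos_iff.1
    (lt_of_lt_of_le (mul_pos (Real.exp_pos _) (norm_pos_iff.2 hfx)) (h.lower s hs))
  set k : ℝ → ℂ := fun s => f (γ s) * (Complex.exp (-(s * Complex.I)) / f x) with hk
  have hkd : ∀ s ∈ Ioo (-T) T, HasDerivAt k
      (((fderiv ℂ f (γ s) (v (γ s)) / f (γ s)).re : ℂ) * k s) s := by
    intro s hs
    have h1 : HasDerivAt (fun t => f (γ t)) (fderiv ℂ f (γ s) (v (γ s))) s :=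
      ((hv.diff _ (h.mem hx hs)).hasFDerivAt.restrictScalars ℝ).comp_hasDerivAt s (h.deriv s hs)
    have h2 : HasDerivAt (fun s : ℝ => Complex.exp (-(s * Complex.I)) / f x)
        (Complex.exp (-(s * Complex.I)) * (-(1 * Complex.I)) / f x) s :=
      (((((hasDerivAt_id s).ofReal_comp).mul_const Complex.I).neg).cexp).div_const _
    have h3 := h1.mul h2
    have h4 : fderiv ℂ f (γ s) (v (γ s)) = (((fderiv ℂ f (γ s) (v (γ s)) / f (γ s)).re : ℂ) +
        Complex.I) * f (γ s) := by
      have h5 := Complex.re_add_im (fderiv ℂ f (γ s) (v (γ s)) / f (γ s))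
      rw [hv.phase _ (h.mem hx hs) (hne s hs), Complex.ofReal_one, one_mul] at h5
      rw [h5, div_mul_cancel₀ _ (hne s hs)]
    refine h3.congr_deriv ?_
    generalize hu : ((fderiv ℂ f (γ s) (v (γ s)) / f (γ s)).re : ℂ) = u at h4 ⊢
    rw [h4]
    simp only [hk]
    ring
  have hb : ∀ s ∈ Ioo (-T) T, |(fderiv ℂ f (γ s) (v (γ s)) / f (γ s)).re| ≤ 2 := by
    intro s hs
    refine (Complex.abs_re_le_norm _).trans ?_
    rw [norm_div, div_le_iff₀ (norm_pos_iff.2 (hne s hs))]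
    exact hv.bound _ (h.mem hx hs)
  have him := gronwall_two_sided (h := fun s => (k s).im) (K := 2)
    (h' := fun s => (fderiv ℂ f (γ s) (v (γ s)) / f (γ s)).re * (k s).im) (T := T)
    (fun s hs => by
      have := Complex.imCLM.hasFDerivAt.comp_hasDerivAt s (hkd s hs)
      simpa [Complex.im_ofReal_mul, Function.comp_def] using this)
    (fun s hs => by
      rw [norm_mul]
      gcongr
      exact hb s hs) hz ht
  have hk0 : k 0 = 1 := by simp [hk, h.start, hfx]
  simp only [hk0, Complex.one_im, norm_zero, zero_mul, norm_le_zero_iff] at him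
  refine ⟨(k t).re, ?_⟩
  have h6 : (((k t).re : ℝ) : ℂ) = k t := by
    apply Complex.ext <;> simp [him]
  rw [h6, hk]
  simp only
  rw [Complex.exp_neg]
  have := Complex.exp_ne_zero (t * Complex.I)
  field_simp

end IsTraj

namespace TameField

/-- The flow of a tame field, for times in `(-T, T)`; junk outside the ball. -/
noncomputable def flow [CompleteSpace E] (hv : TameField R f v) (hT : 0 < T) (x : E) : ℝ → E :=
  open Classical in
  if h : x ∈ closedBall (0 : E) R then (hv.exists_traj hT h).choose else fun _ => x

variable [CompleteSpace E] (hv : TameField R f v) (hT : 0 < T)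

theorem flow_spec {x : E} (hx : x ∈ closedBall (0 : E) R) : IsTraj T f v x (hv.flow hT x) := by
  rw [flow, dif_pos hx]
  exact (hv.exists_traj hT hx).choose_spec

/-- The flow for time `-s` inverts the flow for time `s`. The half-interval keeps both times of the
composed curve within `(-T, T)`. -/
theorem flow_flow {x : E} (hx : x ∈ closedBall (0 : E) R) {s : ℝ} (hs : s ∈ Ioo (-(T / 2)) (T / 2)) :
    hv.flow hT (hv.flow hT x s) (-s) = x := by
  have hsT : s ∈ Ioo (-T) T := ⟨by linarith [hs.1], by linarith [hs.2]⟩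
  have hγ := hv.flow_spec hT hx
  by_cases hfx : f x = 0
  · rw [hγ.const hfx, hγ.const hfx]
  set y := hv.flow hT x s with hy
  have hyR : y ∈ closedBall (0 : E) R := hγ.mem hx hsT
  have hγ' := hv.flow_spec hT hyR
  have hfx' := norm_pos_iff.2 hfx
  have hfy : 0 < ‖f y‖ := lt_of_lt_of_le (mul_pos (Real.exp_pos _) hfx') (hγ.lower s hsT)
  set δ := Real.exp (-(2 * T)) * min ‖f x‖ ‖f y‖ with hδ
  obtain ⟨K, hK⟩ := hv.traj_dist (δ := δ) (by positivity) T
  have habs : |s| < T / 2 := abs_lt.2 hs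
  have := hK (T' := T - |s|) (by linarith [abs_nonneg s]) (hv.flow hT y) (fun t => hv.flow hT x (s + t))
    (fun t ht => by
      have ht' : t ∈ Ioo (-T) T := ⟨by linarith [ht.1, abs_nonneg s], by linarith [ht.2, abs_nonneg s]⟩
      refine ⟨hγ'.deriv t ht', hγ'.mem hyR ht', le_trans ?_ (hγ'.lower t ht')⟩
      rw [hδ]; gcongr; exact min_le_right _ _)
    (fun t ht => by
      have ht' : s + t ∈ Ioo (-T) T :=
        ⟨by linarith [ht.1, neg_abs_le s], by linarith [ht.2, le_abs_self s]⟩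
      refine ⟨(hγ.deriv _ ht').comp_const_add s t, hγ.mem hx ht', le_trans ?_ (hγ.lower _ ht')⟩
      rw [hδ]; gcongr; exact min_le_left _ _) (-s)
    ⟨by linarith [le_abs_self s], by linarith [neg_abs_le s]⟩
  rw [hγ'.start, add_zero, ← hy, sub_self, norm_zero, zero_mul, add_neg_cancel, hγ.start,
    norm_le_zero_iff, sub_eq_zero] at this
  exact this

/-- The flow is jointly continuous, also at the zero set of `f`, where it is the identity. -/
theorem flow_continuousOn :
    ContinuousOn (fun p : E × ℝ => hv.flow hT p.1 p.2) (closedBall (0 : E) R ×ˢ Ioo (-T) T) := by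
  rintro ⟨x, s⟩ ⟨hx, hs⟩
  simp only at hx hs
  have hγ := hv.flow_spec hT hx
  have hfc : ContinuousAt f x := (hv.diff x hx).continuousAt
  have htend : Tendsto (fun p : E × ℝ => p.1) (𝓝[closedBall (0 : E) R ×ˢ Ioo (-T) T] (x, s)) (𝓝 x) :=
    (continuous_fst.tendsto (x, s)).mono_left nhdsWithin_le_nhds
  have htend2 : Tendsto (fun p : E × ℝ => p.2) (𝓝[closedBall (0 : E) R ×ˢ Ioo (-T) T] (x, s)) (𝓝 s) :=
    (continuous_snd.tendsto (x, s)).mono_left nhdsWithin_le_nhds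
  have hz : (0 : ℝ) ∈ Ioo (-T) T := ⟨by linarith, hT⟩
  rw [ContinuousWithinAt, tendsto_iff_norm_sub_tendsto_zero]
  by_cases hfx : f x = 0
  -- near the zero set the field is small, so points hardly move
  · rw [Metric.tendsto_nhds]
    intro η hη
    obtain ⟨c, hc0, hc⟩ := hv.small (η / (2 * T)) (by positivity)
    have h1 : ∀ᶠ y in 𝓝 x, Real.exp (2 * T) * ‖f y‖ < c := by
      have : ContinuousAt (fun y => Real.exp (2 * T) * ‖f y‖) x := continuousAt_const.mul hfc.norm
      exact this.eventually_lt_const (by simpa [hfx] using hc0)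
    have h2 : ∀ᶠ y in 𝓝 x, ‖y - x‖ < η / 2 := by
      have : ContinuousAt (fun y => ‖y - x‖) x := by fun_prop
      exact this.eventually_lt_const (by simpa using by positivity)
    filter_upwards [htend.eventually h1, htend.eventually h2, self_mem_nhdsWithin] with p hp1 hp2 hp3
    obtain ⟨y, t⟩ := p
    obtain ⟨hyR, ht⟩ := hp3
    simp only at hp1 hp2 hyR ht ⊢
    have hγy := hv.flow_spec hT hyR
    have hmv : ‖hv.flow hT y t - hv.flow hT y 0‖ ≤ η / (2 * T) * ‖t - 0‖ :=
      (convex_Ioo (-T) T).norm_image_sub_le_of_norm_hasDerivWithin_le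
        (fun u hu => (hγy.deriv u hu).hasDerivWithinAt)
        (fun u hu => hc _ (hγy.mem hyR hu) ((hγy.upper u hu).trans_lt hp1)) hz ht
    rw [hγy.start, sub_zero] at hmv
    have habs : ‖t‖ < T := by rw [Real.norm_eq_abs]; exact abs_lt.2 ht
    have h3 : η / (2 * T) * ‖t‖ ≤ η / 2 := by
      rw [div_mul_eq_mul_div, div_le_iff₀ (by positivity)]
      nlinarith
    rw [hγ.const hfx, Real.dist_eq, sub_zero, abs_norm]
    calc ‖hv.flow hT y t - x‖ = ‖(hv.flow hT y t - y) + (y - x)‖ := by rw [sub_add_sub_cancel]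
      _ ≤ _ := norm_add_le _ _
      _ < η := by linarith
  · have hfx' := norm_pos_iff.2 hfx
    set δ := Real.exp (-(2 * T)) * (‖f x‖ / 2) with hδ
    obtain ⟨K, hK⟩ := hv.traj_dist (δ := δ) (by positivity) T
    have h1 : ∀ᶠ y in 𝓝 x, ‖f x‖ / 2 < ‖f y‖ :=
      hfc.norm.eventually_const_lt (by linarith)
    have hbd : ∀ᶠ p in 𝓝[closedBall (0 : E) R ×ˢ Ioo (-T) T] (x, s),
        ‖hv.flow hT p.1 p.2 - hv.flow hT x s‖ ≤ ‖p.1 - x‖ * Real.exp (K * T) +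
          ‖hv.flow hT x p.2 - hv.flow hT x s‖ := by
      filter_upwards [htend.eventually h1, self_mem_nhdsWithin] with p hp1 hp3
      obtain ⟨y, t⟩ := p
      obtain ⟨hyR, ht⟩ := hp3
      simp only at hp1 hyR ht ⊢
      have hγy := hv.flow_spec hT hyR
      have := hK le_rfl (hv.flow hT y) (hv.flow hT x)
        (fun u hu => ⟨hγy.deriv u hu, hγy.mem hyR hu, le_trans (by rw [hδ]; gcongr)
          (hγy.lower u hu)⟩)
        (fun u hu => ⟨hγ.deriv u hu, hγ.mem hx hu, le_trans (by rw [hδ]; gcongr; linarith)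
          (hγ.lower u hu)⟩) t ht
      rw [hγy.start, hγ.start] at this
      calc _ = ‖(hv.flow hT y t - hv.flow hT x t) + (hv.flow hT x t - hv.flow hT x s)‖ := by
            rw [sub_add_sub_cancel]
        _ ≤ _ := (norm_add_le _ _).trans (by gcongr)
    refine squeeze_zero' (Eventually.of_forall fun _ => norm_nonneg _) hbd ?_
    have h3 : Tendsto (fun p : E × ℝ => ‖p.1 - x‖ * Real.exp (K * T))
        (𝓝[closedBall (0 : E) R ×ˢ Ioo (-T) T] (x, s)) (𝓝 0) := by
      have := ((htend.sub_const x).norm).mul_const (Real.exp (K * T))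
      simpa using this
    have h4 : Tendsto (fun p : E × ℝ => ‖hv.flow hT x p.2 - hv.flow hT x s‖)
        (𝓝[closedBall (0 : E) R ×ˢ Ioo (-T) T] (x, s)) (𝓝 0) := by
      have := (((hγ.deriv s hs).continuousAt.tendsto.comp htend2).sub_const (hv.flow hT x s)).norm
      simpa using this
    simpa using h3.add h4

end TameField

end Flow

/-! ### The rotating vector field -/

section Field

/-- Project `G` off the direction `x` and rescale it so that it has unit inner product with `G`. -/
noncomputable def tangentLift {F : Type*} [NormedAddCommGroup F] [InnerProductSpace ℝ F]
    (x G : F) : F :=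
  (‖G - (inner ℝ G x / ‖x‖ ^ 2) • x‖ ^ 2)⁻¹ • (G - (inner ℝ G x / ‖x‖ ^ 2) • x)

/-- If `G` makes a definite angle with the direction `x`, then `tangentLift x G` is orthogonal to `x`,
has unit inner product with `G`, and has norm comparable to `‖G‖⁻¹`. -/
theorem tangentLift_spec {F : Type*} [NormedAddCommGroup F] [InnerProductSpace ℝ F] {x G : F}
    (hx : x ≠ 0) (hG : G ≠ 0) (h : |inner ℝ G x| ≤ 1 / 2 * (‖x‖ * ‖G‖)) :
    G - (inner ℝ G x / ‖x‖ ^ 2) • x ≠ 0 ∧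
    inner ℝ x (tangentLift x G) = 0 ∧ inner ℝ G (tangentLift x G) = 1 ∧
      ‖tangentLift x G‖ * ‖G‖ ≤ 2 := by
  have hx' := norm_pos_iff.2 hx
  have hG' := norm_pos_iff.2 hG
  set t := inner ℝ G x / ‖x‖ ^ 2 with ht
  set g := G - t • x with hg
  have htx : t * ‖x‖ ^ 2 = inner ℝ G x := by rw [ht]; field_simp
  have hxg : inner ℝ x g = 0 := by
    rw [hg, inner_sub_right, inner_smul_right, real_inner_self_eq_norm_sq, htx, real_inner_comm,
      sub_self]
  have hGg : inner ℝ G g = ‖g‖ ^ 2 := by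
    rw [← real_inner_self_eq_norm_sq]
    conv_rhs => rw [hg, inner_sub_left, inner_smul_left, ← hg, hxg]
    simp
  have hgn : ‖g‖ ^ 2 = ‖G‖ ^ 2 - t * inner ℝ G x := by
    rw [← hGg, hg, inner_sub_right, inner_smul_right, real_inner_self_eq_norm_sq]
  have hsq : t * inner ℝ G x ≤ 1 / 4 * ‖G‖ ^ 2 := by
    have h1 : (inner ℝ G x) ^ 2 ≤ (1 / 2 * (‖x‖ * ‖G‖)) ^ 2 := sq_le_sq' (abs_le.1 h).1 (abs_le.1 h).2
    rw [ht, div_mul_eq_mul_div, div_le_iff₀ (by positivity)]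
    nlinarith
  have hge : ‖G‖ ≤ 2 * ‖g‖ := by
    refine (sq_le_sq₀ (norm_nonneg _) (by positivity)).1 ?_
    nlinarith
  have hg0 : 0 < ‖g‖ := by linarith
  have hT : tangentLift x G = (‖g‖ ^ 2)⁻¹ • g := rfl
  refine ⟨norm_pos_iff.1 hg0, ?_, ?_, ?_⟩
  · rw [hT, inner_smul_right, hxg, mul_zero]
  · rw [hT, inner_smul_right, hGg, inv_mul_cancel₀ (by positivity)]
  · rw [hT, norm_smul, norm_inv, norm_pow, norm_norm]
    have : (‖g‖ ^ 2)⁻¹ * ‖g‖ * ‖G‖ = ‖G‖ / ‖g‖ := by field_simp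
    rw [this, div_le_iff₀ hg0]
    exact hge

variable {E : Type*} [NormedAddCommGroup E] [InnerProductSpace ℂ E] [FiniteDimensional ℂ E]

attribute [local instance] InnerProductSpace.complexToReal

/-- The gradient, for the real inner product, of the (multivalued) argument of `f`. -/
noncomputable def gradArg (f : E → ℂ) (x : E) : E :=
  have := FiniteDimensional.complete ℂ E
  (Complex.I * (starRingEnd ℂ) (f x)⁻¹) • (InnerProductSpace.toDual ℂ E).symm (fderiv ℂ f x)

theorem inner_gradArg (f : E → ℂ) (x w : E) :
    inner ℝ (gradArg f x) w = (fderiv ℂ f x w / f x).im := by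
  have := FiniteDimensional.complete ℂ E
  rw [real_inner_eq_re_inner ℂ, gradArg, inner_smul_left, InnerProductSpace.toDual_symm_apply]
  simp only [map_mul, Complex.conj_I, RingHomCompTriple.comp_apply, RingHom.id_apply]
  have : -Complex.I * (f x)⁻¹ * fderiv ℂ f x w = -Complex.I * (fderiv ℂ f x w / f x) := by
    rw [div_eq_mul_inv]; ring
  rw [this]
  simp

theorem norm_gradArg (f : E → ℂ) (x : E) : ‖gradArg f x‖ = ‖fderiv ℂ f x‖ / ‖f x‖ := by
  have := FiniteDimensional.complete ℂ E
  rw [gradArg, norm_smul, LinearIsometryEquiv.norm_map, norm_mul, Complex.norm_I, one_mul,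
    RCLike.norm_conj, norm_inv]
  ring

theorem contDiffAt_gradArg {f : E → ℂ} {x : E} (hf : AnalyticAt ℂ f x) (hfx : f x ≠ 0) :
    ContDiffAt ℝ 1 (gradArg f) x := by
  have := FiniteDimensional.complete ℂ E
  let D : (E →L[ℂ] ℂ) →L[ℝ] E := LinearMap.mkContinuous
    { toFun := fun φ => (InnerProductSpace.toDual ℂ E).symm φ
      map_add' := fun a b => map_add _ a b
      map_smul' := fun c a => by
        rw [← Complex.coe_smul, LinearIsometryEquiv.map_smulₛₗ, Complex.conj_ofReal, Complex.coe_smul]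
        rfl } 1 (fun φ => by simp)
  have h1 : ContDiffAt ℝ 1 f x := hf.contDiffAt.restrict_scalars ℝ
  have h2 : ContDiffAt ℝ 1 (fderiv ℂ f) x := hf.fderiv.contDiffAt.restrict_scalars ℝ
  have h3 : ContDiffAt ℝ 1 (fun y => D (fderiv ℂ f y)) x := D.contDiff.contDiffAt.comp x h2
  have h4 : ContDiffAt ℝ 1 (fun y => Complex.conjCLE (f y)⁻¹) x :=
    Complex.conjCLE.contDiff.contDiffAt.comp x (h1.inv hfx)
  exact (contDiffAt_const.mul h4).smul h3

open Classical in
/-- The field rotating the argument of `f` at unit speed along spheres, for `x` in the ball of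
radius `r` off the zero set of `f`. -/
noncomputable def rotField (r : ℝ) (f : E → ℂ) (x : E) : E :=
  if x ∈ ball (0 : E) r ∧ f x ≠ 0 then tangentLift x (gradArg f x) else 0

/-- The estimates near the origin and near the zero set make `rotField` a tame field. -/
theorem exists_tameField {r R : ℝ} (hR0 : 0 < R) (hR : R < r) {f : E → ℂ}
    (hfa : ∀ x ∈ ball (0 : E) r, AnalyticAt ℂ f x) (hf0 : f 0 = 0)
    (hrad : ∀ x ∈ ball (0 : E) r, f x ≠ 0 →
      |(fderiv ℂ f x x / f x).im| ≤ 1 / 2 * (‖x‖ * (‖fderiv ℂ f x‖ / ‖f x‖)))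
    (hne : ∀ x ∈ ball (0 : E) r, f x ≠ 0 → fderiv ℂ f x ≠ 0)
    (hloj : ∀ p ∈ ball (0 : E) r, f p = 0 → ∀ η > 0, ∀ᶠ x in 𝓝 p, ‖f x‖ ≤ η * ‖fderiv ℂ f x‖) :
    ∃ v, TameField R f v := by
  have := FiniteDimensional.complete ℂ E
  have := FiniteDimensional.proper ℂ E
  have hsub : closedBall (0 : E) R ⊆ ball (0 : E) r := closedBall_subset_ball hR
  have hx0 : ∀ {x : E}, f x ≠ 0 → x ≠ 0 := fun h h' => h (h' ▸ hf0)
  have hG0 : ∀ x ∈ ball (0 : E) r, f x ≠ 0 → gradArg f x ≠ 0 := by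
    intro x hx hfx
    rw [← norm_pos_iff, norm_gradArg]
    exact div_pos (norm_pos_iff.2 (hne x hx hfx)) (norm_pos_iff.2 hfx)
  have hspec : ∀ x ∈ ball (0 : E) r, f x ≠ 0 → _ := fun x hx hfx =>
    tangentLift_spec (hx0 hfx) (hG0 x hx hfx)
      (by rw [inner_gradArg, norm_gradArg]; exact hrad x hx hfx)
  set v := rotField r f with hv
  have hvpos : ∀ x ∈ ball (0 : E) r, f x ≠ 0 → v x = tangentLift x (gradArg f x) :=
    fun x hx hfx => if_pos ⟨hx, hfx⟩
  have hvzero : ∀ x, f x = 0 → v x = 0 := fun x hfx => if_neg (fun h => h.2 hfx)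
  have hvnorm : ∀ x ∈ ball (0 : E) r, ‖v x‖ * ‖fderiv ℂ f x‖ ≤ 2 * ‖f x‖ := by
    intro x hx
    by_cases hfx : f x = 0
    · simp [hvzero x hfx, hfx]
    have := (hspec x hx hfx).2.2.2
    rw [norm_gradArg, ← mul_div_assoc, div_le_iff₀ (norm_pos_iff.2 hfx)] at this
    rw [hvpos x hx hfx]; exact this
  have hvsm : ∀ x ∈ ball (0 : E) r, f x ≠ 0 → ContDiffAt ℝ 1 v x := by
    intro x hx hfx
    have hG := contDiffAt_gradArg (hfa x hx) hfx
    have hid : ContDiffAt ℝ 1 (fun y : E => y) x := contDiffAt_id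
    have hg : ContDiffAt ℝ 1 (fun y => gradArg f y - (inner ℝ (gradArg f y) y / ‖y‖ ^ 2) • y) x :=
      hG.sub (((hG.inner ℝ hid).div (hid.norm_sq ℝ)
        (pow_ne_zero 2 (norm_ne_zero_iff.2 (hx0 hfx)))).smul hid)
    have h1 : ContDiffAt ℝ 1 (fun y => tangentLift y (gradArg f y)) x :=
      ((hg.norm_sq ℝ).inv (pow_ne_zero 2 (norm_ne_zero_iff.2 (hspec x hx hfx).1))).smul hg
    refine h1.congr_of_eventuallyEq ?_
    filter_upwards [isOpen_ball.mem_nhds hx, (hfa x hx).continuousAt.eventually_ne hfx] with y hy hfy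
    exact hvpos y hy hfy
  refine ⟨v, ?_, hvzero, fun x hx => (hfa x (hsub hx)).differentiableAt, ?_, ?_, ?_, ?_⟩
  · intro x
    by_cases h : x ∈ ball (0 : E) r ∧ f x ≠ 0
    · rw [hvpos x h.1 h.2]
      have := (hspec x h.1 h.2).2.1
      rwa [real_inner_eq_re_inner ℂ] at this
    · have : v x = 0 := if_neg h
      rw [this]; simp
  · intro x hx hfx
    rw [← inner_gradArg, hvpos x (hsub hx) hfx]
    exact (hspec x (hsub hx) hfx).2.2.1
  · intro x hx
    refine (ContinuousLinearMap.le_opNorm _ _).trans ?_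
    rw [mul_comm]
    exact hvnorm x (hsub hx)
  · intro δ hδ
    -- cut off near the boundary of the ball of radius `r` and where `2 ‖f‖² < δ²`
    let ρ : ContDiffBump (0 : E) := ⟨R, (R + r) / 2, hR0, by linarith⟩
    have hρout : tsupport ρ ⊆ ball (0 : E) r := by
      rw [ρ.tsupport_eq]
      exact closedBall_subset_ball (by change (R + r) / 2 < r; linarith)
    set c : E → ℝ := fun x => ρ x * Real.smoothTransition (2 * ‖f x‖ ^ 2 / δ ^ 2 - 1) with hc
    have hsm : ContDiff ℝ 1 (fun x => c x • v x) := by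
      rw [contDiff_iff_contDiffAt]
      intro x
      by_cases hx : x ∈ ball (0 : E) r
      swap
      · have : ∀ᶠ y in 𝓝 x, c y • v y = 0 := by
          filter_upwards [(isClosed_tsupport ρ).isOpen_compl.mem_nhds (fun h => hx (hρout h))] with y hy
          simp [hc, image_eq_zero_of_notMem_tsupport hy]
        exact contDiffAt_const.congr_of_eventuallyEq this
      have hfx := hfa x hx
      have hfn : ContDiffAt ℝ 1 (fun y => 2 * ‖f y‖ ^ 2 / δ ^ 2 - 1) x :=
        ((contDiffAt_const.mul ((hfx.contDiffAt.restrict_scalars ℝ).norm_sq ℝ)).div_const _).sub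
          contDiffAt_const
      by_cases h0 : f x = 0
      · have : ∀ᶠ y in 𝓝 x, c y • v y = 0 := by
          have h1 := hfn.continuousAt.eventually_lt_const (u := 0) (by simp [h0])
          filter_upwards [h1] with y hy
          simp [hc, Real.smoothTransition.zero_of_nonpos hy.le]
        exact contDiffAt_const.congr_of_eventuallyEq this
      · exact (ρ.contDiffAt.mul (Real.smoothTransition.contDiffAt.comp x hfn)).smul (hvsm x hx h0)
    have hcs : HasCompactSupport (fun x => c x • v x) := by
      have h1 : HasCompactSupport ρ := ρ.hasCompactSupport
      exact (h1.mul_right).smul_right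
    refine ⟨c, fun x => ⟨mul_nonneg ρ.nonneg (Real.smoothTransition.nonneg _),
      mul_le_one₀ ρ.le_one (Real.smoothTransition.nonneg _) (Real.smoothTransition.le_one _)⟩,
      ContDiff.lipschitzWith_of_hasCompactSupport hcs hsm (by simp),
      hsm.continuous.bounded_above_of_compact_support hcs, fun x hx hfx => ?_⟩
    have h1 : ρ x = 1 := ρ.one_of_mem_closedBall hx
    have h2 : 1 ≤ 2 * ‖f x‖ ^ 2 / δ ^ 2 - 1 := by
      have : δ ^ 2 ≤ ‖f x‖ ^ 2 := by gcongr
      rw [le_sub_iff_add_le, le_div_iff₀ (by positivity)]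
      linarith
    simp [hc, h1, Real.smoothTransition.one_of_one_le h2]
  · intro η hη
    have key := (isCompact_closedBall (0 : E) R).induction_on
      (p := fun s => ∃ c > 0, ∀ x ∈ s, x ∈ closedBall (0 : E) R → ‖f x‖ < c → ‖v x‖ ≤ η)
      ⟨1, one_pos, by simp⟩
      (fun s t hst ⟨c, hc, h⟩ => ⟨c, hc, fun x hx => h x (hst hx)⟩)
      (fun s t ⟨c, hc, h⟩ ⟨c', hc', h'⟩ => ⟨min c c', lt_min hc hc', fun x hx hxR hfx => by
        rcases hx with hx | hx
        · exact h x hx hxR (hfx.trans_le (min_le_left _ _))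
        · exact h' x hx hxR (hfx.trans_le (min_le_right _ _))⟩)
      (fun p hp => by
        by_cases hfp : f p = 0
        · refine ⟨_, mem_nhdsWithin_of_mem_nhds (hloj p (hsub hp) hfp (η / 2) (by positivity)), 1,
            one_pos, fun x hx hxR _ => ?_⟩
          by_cases hfx : f x = 0
          · rw [hvzero x hfx, norm_zero]; exact hη.le
          have h1 := hvnorm x (hsub hxR)
          have h2 : ‖f x‖ ≤ η / 2 * ‖fderiv ℂ f x‖ := hx
          have h3 : 0 < ‖fderiv ℂ f x‖ := norm_pos_iff.2 (hne x (hsub hxR) hfx)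
          exact le_of_mul_le_mul_right (h1.trans (by linarith)) h3
        · have hfp' := norm_pos_iff.2 hfp
          have h1 : ∀ᶠ y in 𝓝 p, ‖f p‖ / 2 < ‖f y‖ :=
            (hfa p (hsub hp)).continuousAt.norm.eventually_const_lt (by linarith)
          exact ⟨_, mem_nhdsWithin_of_mem_nhds h1, ‖f p‖ / 2, by positivity,
            fun x hx _ hfx => absurd hfx (not_lt.2 (le_of_lt hx))⟩)
    obtain ⟨c, hc, h⟩ := key
    exact ⟨c, hc, fun x hx => h x hx hx⟩

end Field

/-! ### The real projective line and the trivialization -/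

section Final

variable {n : ℕ}

/-- Osgood's lemma on `ℂⁿ` with its Euclidean norm. -/
theorem analyticAt_of_differentiable {f : EC n → ℂ} {p : EC n}
    (hf : ∀ᶠ y in 𝓝 p, DifferentiableAt ℂ f y) : AnalyticAt ℂ f p := by
  let L := EuclideanSpace.equiv (Fin n) ℂ
  have hA : AnalyticAt ℂ (fun z : Fin n → ℂ => f (p + L.symm z)) 0 := by
    refine osgood n _ ?_
    have ht : Tendsto (fun z : Fin n → ℂ => p + L.symm z) (𝓝 0) (𝓝 p) := by
      have : Continuous (fun z : Fin n → ℂ => p + L.symm z) := by fun_prop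
      simpa using this.tendsto 0
    filter_upwards [ht.eventually hf] with z hz
    exact hz.comp z ((L.symm.differentiableAt).const_add p)
  have hB : AnalyticAt ℂ (fun x : EC n => L (x - p)) p :=
    (L : EC n →L[ℂ] (Fin n → ℂ)).analyticAt _ |>.comp (analyticAt_id.sub analyticAt_const)
  have h0 : L (p - p) = 0 := by simp
  have hC : AnalyticAt ℂ ((fun z : Fin n → ℂ => f (p + L.symm z)) ∘ fun x : EC n => L (x - p)) p :=
    AnalyticAt.comp (by simpa [h0] using hA) hB
  have : ((fun z : Fin n → ℂ => f (p + L.symm z)) ∘ fun x : EC n => L (x - p)) = f := by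
    funext x; simp
  rwa [this] at hC

/-- A small ball carries a tame vector field for `f`. -/
theorem exists_field (hn : 1 ≤ n) {U : Set (EC n)} (hU : IsOpen U) (h0U : (0 : EC n) ∈ U)
    {f : EC n → ℂ} (hf : DifferentiableOn ℂ f U) (hf0 : f 0 = 0)
    (hfnz : ∀ W ∈ 𝓝 (0 : EC n), ∃ x ∈ W ∩ U, f x ≠ 0) :
    ∃ R > (0 : ℝ), closedBall (0 : EC n) R ⊆ U ∧ ∃ v, TameField R f v := by
  have hfa : ∀ x ∈ U, AnalyticAt ℂ f x := fun x hx => analyticAt_of_differentiable (by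
    filter_upwards [hU.mem_nhds hx] with y hy
    exact (hf y hy).differentiableAt (hU.mem_nhds hy))
  have hfz : ¬ ∀ᶠ x in 𝓝 (0 : EC n), f x = 0 := fun h => by
    obtain ⟨x, hx, hne⟩ := hfnz _ h
    exact hne hx.1
  have hev := (radial_small hn (hfa 0 h0U) hf0 hfz (η := 1 / 2) (by norm_num)).and
    ((lojasiewicz_small hn (hfa 0 h0U) hf0 hfz one_pos).and (hU.mem_nhds h0U))
  obtain ⟨r, hr, hball⟩ := Metric.eventually_nhds_iff_ball.1 hev
  have hrU : ball (0 : EC n) r ⊆ U := fun x hx => (hball x hx).2.2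
  refine ⟨r / 2, by positivity, (closedBall_subset_ball (by linarith)).trans hrU, ?_⟩
  refine exists_tameField (r := r) (by positivity) (by linarith) (fun x hx => hfa x (hrU hx)) hf0
    (fun x hx => (hball x hx).1) (fun x hx hfx hd => ?_) (fun p hp hfp η hη => ?_)
  · have := (hball x hx).2.1
    rw [hd, norm_zero, mul_zero, norm_le_zero_iff] at this
    exact hfx this
  · refine lojasiewicz_small hn (hfa p (hrU hp)) hfp (fun h => ?_) hη
    have hA : AnalyticOnNhd ℂ f (ball (0 : EC n) r) := fun x hx => hfa x (hrU hx)
    have hz := hA.eqOn_zero_of_preconnected_of_eventuallyEq_zero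
      (convex_ball (0 : EC n) r).isPreconnected hp h
    apply hfz
    filter_upwards [ball_mem_nhds (0 : EC n) hr] with x hx using hz hx

/-- A local continuous choice of angle for lines near a given line `b`. -/
theorem exists_angle (b : ℙ ℝ ℂ) : ∃ (W : Set (ℙ ℝ ℂ)) (τ : ℙ ℝ ℂ → ℝ), IsOpen W ∧ b ∈ W ∧
    ContinuousOn τ W ∧ (∀ ℓ, |τ ℓ| < 10) ∧
    ∀ ℓ ∈ W, ∀ z : ℂ, z ∈ ℓ.submodule ↔ (z * Complex.exp (-(τ ℓ) * Complex.I)).im = 0 := by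
  obtain ⟨w, hw, rfl⟩ : ∃ w hw, b = Projectivization.mk ℝ w hw := ⟨b.rep, b.rep_nonzero, b.mk_rep.symm⟩
  let P : {v : ℂ // v ≠ 0} → ℙ ℝ ℂ := fun v => Projectivization.mk ℝ v.1 v.2
  have hP : IsQuotientMap P := isQuotientMap_quotient_mk'
  have hrep : ∀ v : {v : ℂ // v ≠ 0}, ∃ a : ℝ, a ≠ 0 ∧ (P v).rep = a * v.1 := by
    intro v
    obtain ⟨a, ha⟩ := Projectivization.exists_smul_eq_mk_rep ℝ v.1 v.2
    exact ⟨a, a.ne_zero, by rw [← ha]; simp [Units.smul_def]⟩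
  set c := (starRingEnd ℂ) w with hc
  set W : Set (ℙ ℝ ℂ) := {ℓ | (ℓ.rep * c).re ≠ 0} with hW
  set τ : ℙ ℝ ℂ → ℝ := fun ℓ => Complex.arg w + Real.arctan ((ℓ.rep * c).im / (ℓ.rep * c).re) with hτ
  have hPW : P ⁻¹' W = {v | (v.1 * c).re ≠ 0} := by
    ext v
    obtain ⟨a, ha, hav⟩ := hrep v
    simp only [hW, mem_preimage, mem_ofPred_eq, hav, mul_assoc, Complex.re_ofReal_mul, ne_eq,
      mul_eq_zero, ha, false_or]
  have hPτ : ∀ v, τ (P v) = Complex.arg w + Real.arctan ((v.1 * c).im / (v.1 * c).re) := by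
    intro v
    obtain ⟨a, ha, hav⟩ := hrep v
    simp only [hτ, hav, mul_assoc, Complex.re_ofReal_mul, Complex.im_ofReal_mul]
    rw [mul_div_mul_left _ _ ha]
  have hWo : IsOpen W := by
    rw [← hP.isOpen_preimage, hPW]
    have : Continuous fun v : {v : ℂ // v ≠ 0} => (v.1 * c).re := by fun_prop
    exact this.isOpen_preimage _ isOpen_compl_singleton
  refine ⟨W, τ, hWo, ?_, ?_, ?_, ?_⟩
  · change (⟨w, hw⟩ : {v : ℂ // v ≠ 0}) ∈ P ⁻¹' W
    rw [hPW]
    simp only [mem_ofPred_eq, hc, Complex.mul_conj, Complex.ofReal_re]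
    exact (Complex.normSq_pos.2 hw).ne'
  · rw [hP.continuousOn_isOpen_iff hWo, hPW]
    have : τ ∘ P = fun v => Complex.arg w + Real.arctan ((v.1 * c).im / (v.1 * c).re) := funext hPτ
    rw [this]
    refine continuousOn_const.add (Real.continuous_arctan.comp_continuousOn ?_)
    refine ContinuousOn.div (by fun_prop) (by fun_prop) (fun v hv => hv)
  · intro ℓ
    have h1 := Complex.abs_arg_le_pi w
    have h2 := abs_lt.2 ⟨Real.neg_pi_div_two_lt_arctan ((ℓ.rep * c).im / (ℓ.rep * c).re),
      Real.arctan_lt_pi_div_two _⟩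
    have h3 := abs_add_le (Complex.arg w) (Real.arctan ((ℓ.rep * c).im / (ℓ.rep * c).re))
    have := Real.pi_lt_four
    simp only [hτ]
    linarith
  · intro ℓ hℓ z
    obtain ⟨v, rfl⟩ : ∃ v, ℓ = P v := ⟨⟨ℓ.rep, ℓ.rep_nonzero⟩, ℓ.mk_rep.symm⟩
    have hre : (v.1 * c).re ≠ 0 := by
      have : v ∈ P ⁻¹' W := hℓ
      rwa [hPW] at this
    -- `v` is a nonzero real multiple of `exp (i τ)`
    obtain ⟨s, hs0, hs⟩ : ∃ s : ℝ, s ≠ 0 ∧ v.1 = s * Complex.exp (τ (P v) * Complex.I) := by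
      rw [hPτ]
      set α := Real.arctan ((v.1 * c).im / (v.1 * c).re) with hα
      have hcos : Real.cos α ≠ 0 := (Real.cos_arctan_pos _).ne'
      have htan : Real.sin α = (v.1 * c).im / (v.1 * c).re * Real.cos α := by
        have := Real.tan_arctan ((v.1 * c).im / (v.1 * c).re)
        rw [← hα, Real.tan_eq_sin_div_cos, div_eq_iff hcos] at this
        exact this
      have hw' : ‖w‖ ≠ 0 := norm_ne_zero_iff.2 hw
      have hu : v.1 * c = ((v.1 * c).re / Real.cos α : ℝ) * Complex.exp (α * Complex.I) := by
        apply Complex.ext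
        · rw [Complex.re_ofReal_mul, Complex.exp_ofReal_mul_I_re, div_mul_cancel₀ _ hcos]
        · rw [Complex.im_ofReal_mul, Complex.exp_ofReal_mul_I_im, htan]
          field_simp
      have hwc : w = ‖w‖ * Complex.exp (Complex.arg w * Complex.I) :=
        (Complex.norm_mul_exp_arg_mul_I w).symm
      refine ⟨(v.1 * c).re / Real.cos α / ‖w‖, by positivity, ?_⟩
      have hcw : c * w = (‖w‖ : ℂ) ^ 2 := by rw [hc, Complex.conj_mul']
      have hw'' : (‖w‖ : ℂ) ≠ 0 := by exact_mod_cast hw'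
      have h5 : v.1 * (‖w‖ : ℂ) ^ 2 = ((v.1 * c).re / Real.cos α : ℝ) * Complex.exp (α * Complex.I) *
          (‖w‖ * Complex.exp (Complex.arg w * Complex.I)) := by
        rw [← hu, ← hwc, mul_assoc, hcw]
      rw [Complex.ofReal_add, add_mul, Complex.exp_add]
      apply mul_right_cancel₀ (pow_ne_zero 2 hw'')
      rw [h5]
      push_cast
      field_simp
    have hsub : (P v).submodule = Submodule.span ℝ {v.1} := Projectivization.submodule_mk _ _
    rw [hsub, Submodule.mem_span_singleton]
    have hE : Complex.exp (τ (P v) * Complex.I) * Complex.exp (-(τ (P v)) * Complex.I) = 1 := by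
      rw [← Complex.exp_add]; simp
    constructor
    · rintro ⟨a, rfl⟩
      have : a • v.1 * Complex.exp (-(τ (P v)) * Complex.I) = ((a * s : ℝ) : ℂ) := by
        rw [Complex.real_smul]
        conv_lhs => rw [hs]
        rw [mul_assoc, mul_assoc, hE]
        push_cast; ring
      rw [this, Complex.ofReal_im]
    · intro h
      set m := z * Complex.exp (-(τ (P v)) * Complex.I) with hm
      have hmr : ((m.re : ℝ) : ℂ) = m := by apply Complex.ext <;> simp [h]
      refine ⟨m.re / s, ?_⟩
      have hs0' : (s : ℂ) ≠ 0 := by exact_mod_cast hs0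
      rw [Complex.real_smul]
      conv_lhs => rw [hs]
      rw [Complex.ofReal_div, hmr, hm]
      calc _ = z * (Complex.exp (τ (P v) * Complex.I) * Complex.exp (-(τ (P v)) * Complex.I)) *
            ((s : ℂ) / s) := by ring
        _ = z := by rw [hE, div_self hs0', mul_one, mul_one]

/-- A tame field trivializes the blow-up: the fibre is `{x : f x ∈ ℝ}` in the ball, and the point `x`
of the fibre over a line `ℓ` of angle `τ ℓ` is carried to it by the flow for time `-τ ℓ`. The flow is
taken on `(-20, 20)`, since `|τ| < 10` and `flow_flow` needs times in half the interval. -/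
theorem locTriv {R ε : ℝ} (hεR : ε ≤ R) {f : EC n → ℂ} {v : EC n → EC n} (hv : TameField R f v) :
    IsLocTrivFib (fun q : ({q : EC n × ℙ ℝ ℂ | q.1 ∈ closedBall (0 : EC n) ε ∧
      f q.1 ∈ (q.2).submodule} : Set _) => q.1.2) := by
  refine ⟨{x : EC n | x ∈ closedBall (0 : EC n) ε ∧ (f x).im = 0}, inferInstance, by fun_prop, ?_⟩
  intro b
  obtain ⟨W, τ, hWo, hbW, hτc, hτ, hℓ⟩ := exists_angle b
  refine ⟨W, hWo, hbW, ?_⟩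
  have hT : (0 : ℝ) < 20 := by norm_num
  have hsub : closedBall (0 : EC n) ε ⊆ closedBall (0 : EC n) R := closedBall_subset_closedBall hεR
  have hτ1 : ∀ ℓ, τ ℓ ∈ Ioo (-(20 / 2) : ℝ) (20 / 2) := fun ℓ => by
    have := abs_lt.1 (hτ ℓ); constructor <;> linarith [this.1, this.2]
  have hτ1' : ∀ ℓ, -τ ℓ ∈ Ioo (-(20 / 2) : ℝ) (20 / 2) := fun ℓ => by
    have := abs_lt.1 (hτ ℓ); constructor <;> linarith [this.1, this.2]
  have hτ2 : ∀ ℓ, τ ℓ ∈ Ioo (-20 : ℝ) 20 := fun ℓ => by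
    have := abs_lt.1 (hτ ℓ); constructor <;> linarith [this.1, this.2]
  have hτ2' : ∀ ℓ, -τ ℓ ∈ Ioo (-20 : ℝ) 20 := fun ℓ => by
    have := abs_lt.1 (hτ ℓ); constructor <;> linarith [this.1, this.2]
  have hball : ∀ {x : EC n}, x ∈ closedBall (0 : EC n) ε → ∀ {t : ℝ}, t ∈ Ioo (-20 : ℝ) 20 →
      hv.flow hT x t ∈ closedBall (0 : EC n) ε := by
    intro x hx t ht
    rw [mem_closedBall_zero_iff, (hv.flow_spec hT (hsub hx)).norm_eq t ht]
    exact mem_closedBall_zero_iff.1 hx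
  have hfwd : ∀ {x : EC n} {ℓ : ℙ ℝ ℂ}, x ∈ closedBall (0 : EC n) ε → ℓ ∈ W → f x ∈ ℓ.submodule →
      (f (hv.flow hT x (-τ ℓ))).im = 0 := by
    intro x ℓ hx hℓW hfx
    obtain ⟨r, hr⟩ := (hv.flow_spec hT (hsub hx)).phase hv (hsub hx) (hτ2' ℓ)
    rw [hr, Complex.im_ofReal_mul, mul_comm (Complex.exp _), Complex.ofReal_neg, (hℓ ℓ hℓW _).1 hfx,
      mul_zero]
  have hbwd : ∀ {x : EC n} {ℓ : ℙ ℝ ℂ}, x ∈ closedBall (0 : EC n) ε → ℓ ∈ W → (f x).im = 0 →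
      f (hv.flow hT x (τ ℓ)) ∈ ℓ.submodule := by
    intro x ℓ hx hℓW hfx
    obtain ⟨r, hr⟩ := (hv.flow_spec hT (hsub hx)).phase hv (hsub hx) (hτ2 ℓ)
    rw [hℓ ℓ hℓW, hr]
    have : (r : ℂ) * (Complex.exp (τ ℓ * Complex.I) * f x) * Complex.exp (-(τ ℓ) * Complex.I)
        = r * f x := by
      rw [neg_mul, Complex.exp_neg]
      field_simp
    rw [this, Complex.im_ofReal_mul, hfx, mul_zero]
  have hcont := hv.flow_continuousOn hT
  refine ⟨
    { toFun := fun z => (⟨z.1.1.2, z.2⟩,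
        ⟨hv.flow hT z.1.1.1 (-τ z.1.1.2), hball z.1.2.1 (hτ2' _), hfwd z.1.2.1 z.2 z.1.2.2⟩)
      invFun := fun y => ⟨⟨(hv.flow hT y.2.1 (τ y.1.1), y.1.1),
        hball y.2.2.1 (hτ2 _), hbwd y.2.2.1 y.1.2 y.2.2.2⟩, y.1.2⟩
      left_inv := ?_
      right_inv := ?_
      continuous_toFun := ?_
      continuous_invFun := ?_ }, fun z => rfl⟩
  · rintro ⟨⟨⟨x, ℓ⟩, hx, hfx⟩, hℓW⟩
    have := hv.flow_flow hT (hsub hx) (hτ1' ℓ)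
    rw [neg_neg] at this
    exact Subtype.ext (Subtype.ext (Prod.ext this rfl))
  · rintro ⟨⟨ℓ, hℓW⟩, ⟨x, hx, hfx⟩⟩
    have := hv.flow_flow hT (hsub hx) (hτ1 ℓ)
    exact Prod.ext rfl (Subtype.ext this)
  · refine Continuous.prodMk (by fun_prop) (Continuous.subtype_mk ?_ _)
    refine hcont.comp_continuous (f := fun z : ((fun q : ({q : EC n × ℙ ℝ ℂ | q.1 ∈ closedBall (0 : EC n) ε ∧
      f q.1 ∈ (q.2).submodule} : Set _) => q.1.2) ⁻¹' W) => (z.1.1.1, -τ z.1.1.2)) ?_ (fun z => ⟨hsub z.1.2.1, hτ2' _⟩)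
    refine Continuous.prodMk (by fun_prop) (Continuous.neg ?_)
    exact hτc.comp_continuous (by fun_prop) (fun z => z.2)
  · refine Continuous.subtype_mk (Continuous.subtype_mk (Continuous.prodMk ?_ (by fun_prop)) _) _
    refine hcont.comp_continuous (f := fun y : W × {x : EC n | x ∈ closedBall (0 : EC n) ε ∧ (f x).im = 0} =>
      (y.2.1, τ y.1.1)) ?_ (fun y => ⟨hsub y.2.2.1, hτ2 _⟩)
    refine Continuous.prodMk (by fun_prop) ?_
    exact hτc.comp_continuous (by fun_prop) (fun y => y.1.2)

end Final

theorem stmt_7 (n : ℕ) (hn : 1 ≤ n)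
    (U : Set (EuclideanSpace ℂ (Fin n))) (hU : IsOpen U)
    (h0U : (0 : EuclideanSpace ℂ (Fin n)) ∈ U)
    (f : EuclideanSpace ℂ (Fin n) → ℂ) (hf : DifferentiableOn ℂ f U) (hf0 : f 0 = 0)
    (hfnz : ∀ W ∈ nhds (0 : EuclideanSpace ℂ (Fin n)), ∃ x ∈ W ∩ U, f x ≠ 0) :
    ∃ ε₀ > (0 : ℝ), Metric.closedBall (0 : EuclideanSpace ℂ (Fin n)) ε₀ ⊆ U ∧
      ∀ ε : ℝ, 0 < ε → ε ≤ ε₀ →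
      -- the real blow-up X̃_ε ⊆ B̄(0,ε) × ℝP¹
      ∃ Ψ : ({q : EuclideanSpace ℂ (Fin n) × ℙ ℝ ℂ |
              q.1 ∈ Metric.closedBall (0 : EuclideanSpace ℂ (Fin n)) ε ∧
              f q.1 ∈ (q.2).submodule} : Set _) → ℙ ℝ ℂ,
        -- Ψ̃ is the second projection
        (∀ q, Ψ q = q.1.2) ∧
        -- Ψ̃ is a locally trivial fibration
        IsLocTrivFib Ψ ∧
        -- its fibre over the line L_θ is (X_θ ∩ B̄(0,ε)) × {L_θ}
        (∀ θ : ℝ,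
          Subtype.val ''
              (Ψ ⁻¹' {Projectivization.mk ℝ (Complex.exp (θ * Complex.I)) (Complex.exp_ne_zero _)})
            = (Xset U f θ ∩ Metric.closedBall (0 : EuclideanSpace ℂ (Fin n)) ε) ×ˢ
              ({Projectivization.mk ℝ (Complex.exp (θ * Complex.I)) (Complex.exp_ne_zero _)} :
                Set (ℙ ℝ ℂ))) := by
  obtain ⟨R, hR, hRU, v, hv⟩ := exists_field hn hU h0U hf hf0 hfnz
  refine ⟨R, hR, hRU, fun ε _ hεR => ⟨fun q => q.1.2, fun _ => rfl, locTriv hεR hv, fun θ => ?_⟩⟩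
  ext ⟨x, ℓ⟩
  simp only [mem_image, mem_preimage, mem_singleton_iff, mem_prod, mem_inter_iff, Xset, mem_ofPred_eq]
  constructor
  · rintro ⟨⟨⟨y, m⟩, hy, hfy⟩, hm, he⟩
    obtain ⟨rfl, rfl⟩ := Prod.ext_iff.1 he
    simp only at hm hfy hy
    subst hm
    rw [Projectivization.submodule_mk, Submodule.mem_span_singleton] at hfy
    obtain ⟨t, ht⟩ := hfy
    exact ⟨⟨⟨hRU (closedBall_subset_closedBall hεR hy), t, by rw [← ht, Complex.real_smul]⟩, hy⟩, rfl⟩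
  · rintro ⟨⟨⟨_, t, ht⟩, hx⟩, rfl⟩
    refine ⟨⟨(x, Projectivization.mk ℝ (Complex.exp (θ * Complex.I)) (Complex.exp_ne_zero _)), hx, ?_⟩,
      rfl, rfl⟩
    rw [Projectivization.submodule_mk, Submodule.mem_span_singleton]
    exact ⟨t, by rw [ht, Complex.real_smul]⟩
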